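/- arXiv:2205.07777 — 3 statements merged into one kernel-verified Lean document; each statement's English description precedes it below -/
import Mathlib

section
/- Let W ⊆ ℝ² be a simple polygon and let F be its free space. Then every connected component of F is simply connected. -/
open Metric Set

noncomputable section

/-- The Euclidean plane ℝ². -/
abbrev Plane : Type := EuclideanSpace ℝ (Fin 2)

/-- A simple polygon, given by a simple (injective) closed polygonal curve in the plane. -/
structure SimplePolygon where
  /-- the parametrization of the boundary curve over `[0,1]` -/
  toFun : ℝ → Plane
  continuous : Continuous toFun
  closed : toFun 0 = toFun 1
  injOn : Set.InjOn toFun (Set.Ico (0 : ℝ) 1)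
  /-- the curve is polygonal: it is affine on each piece of some finite partition of `[0,1]` -/
  polygonal : ∃ (n : ℕ) (t : Fin (n + 1) → ℝ),
    t 0 = 0 ∧ t (Fin.last n) = 1 ∧ StrictMono t ∧
    ∀ i : Fin n, ∀ s ∈ Set.Icc (t i.castSucc) (t i.succ),
      toFun s = toFun (t i.castSucc) +
        ((s - t i.castSucc) / (t i.succ - t i.castSucc)) •
          (toFun (t i.succ) - toFun (t i.castSucc))

/-- The boundary curve of a simple polygon, as a subset of the plane. -/
def SimplePolygon.bdryCurve (P : SimplePolygon) : Set Plane :=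
  P.toFun '' Set.Icc 0 1

/-- The closed region bounded by a simple polygon: the union of the boundary curve with
the bounded connected components of its complement. -/
def SimplePolygon.region (P : SimplePolygon) : Set Plane :=
  P.bdryCurve ∪
    {x | x ∉ P.bdryCurve ∧ Bornology.IsBounded (connectedComponentIn P.bdryCurveᶜ x)}

/-- The free space of a simple polygon: all positions whose open unit disc lies in the region. -/
def SimplePolygon.freeSpace (P : SimplePolygon) : Set Plane :=
  {x | Metric.ball x 1 ⊆ P.region}


/-- `A` is an absolute extensor for metric spaces: every continuous map into `A` from a closed
subset of a metric space extends to the whole space. -/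
def IsAbsExtensor (A : Set ℂ) : Prop :=
  ∀ (Y : Type) [MetricSpace Y] (Z : Set Y) (f : Y → ℂ), IsClosed Z → ContinuousOn f Z →
    MapsTo f Z A → ∃ g : Y → ℂ, Continuous g ∧ (∀ y, g y ∈ A) ∧ EqOn g f Z

namespace IsAbsExtensor

variable {A B : Set ℂ}

theorem nonempty (hA : IsAbsExtensor A) : A.Nonempty := by
  obtain ⟨g, -, hg, -⟩ := hA ℝ ∅ (fun _ => 0) isClosed_empty (continuousOn_empty _)
    (mapsTo_empty _ _)
  exact ⟨g 0, hg 0⟩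

/-- A retract of the plane is an absolute extensor. -/
theorem of_retraction (r : ℂ → ℂ) (hr : Continuous r) (hA : ∀ z, r z ∈ A)
    (hid : ∀ z ∈ A, r z = z) : IsAbsExtensor A := by
  intro Y _ Z f hZ hf hm
  obtain ⟨g, hg⟩ := ContinuousMap.exists_restrict_eq hZ ⟨Z.domRestrict f, hf.domRestrict⟩
  refine ⟨fun y => r (g y), hr.comp g.continuous, fun y => hA _, fun y hy => ?_⟩
  have h : g y = f y := congrArg (fun k : C(Z, ℂ) => k ⟨y, hy⟩) hg
  simp only [h]
  exact hid _ (hm hy)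

/-- Absolute extensors can be glued along a common absolute extensor. -/
theorem union (hA : IsAbsExtensor A) (hB : IsAbsExtensor B) (hAB : IsAbsExtensor (A ∩ B))
    (cA : IsClosed A) (cB : IsClosed B) : IsAbsExtensor (A ∪ B) := by
  intro Y _ Z f hZ hf hm
  set ZA := Z ∩ f ⁻¹' A with hZA
  set ZB := Z ∩ f ⁻¹' B with hZB
  have cZA : IsClosed ZA := hf.preimage_isClosed_of_isClosed hZ cA
  have cZB : IsClosed ZB := hf.preimage_isClosed_of_isClosed hZ cB
  set YA := {y | infEDist y ZA ≤ infEDist y ZB} with hYA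
  set YB := {y | infEDist y ZB ≤ infEDist y ZA} with hYB
  have cYA : IsClosed YA := isClosed_le continuous_infEDist continuous_infEDist
  have cYB : IsClosed YB := isClosed_le continuous_infEDist continuous_infEDist
  have memA : ∀ y ∈ ZB, y ∈ YA → y ∈ ZA := by
    intro y hy hyA
    have h0 : infEDist y ZB = 0 := infEDist_zero_of_mem hy
    have h1 : infEDist y ZA = 0 := le_antisymm (h0 ▸ hyA) zero_le
    exact (mem_iff_infEDist_zero_of_closed cZA).2 h1
  have memB : ∀ y ∈ ZA, y ∈ YB → y ∈ ZB := by
    intro y hy hyB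
    have h0 : infEDist y ZA = 0 := infEDist_zero_of_mem hy
    have h1 : infEDist y ZB = 0 := le_antisymm (h0 ▸ hyB) zero_le
    exact (mem_iff_infEDist_zero_of_closed cZB).2 h1
  obtain ⟨g0, hg0, hg0m, hg0e⟩ := hAB Y (ZA ∩ ZB) f (cZA.inter cZB)
    (hf.mono fun y hy => hy.1.1) (fun y hy => ⟨hy.1.2, hy.2.2⟩)
  have key : ∀ (D : Set ℂ) (ZD : Set Y), IsAbsExtensor D → IsClosed ZD → ZD ⊆ Z ∩ f ⁻¹' D →
      A ∩ B ⊆ D → (∀ y ∈ ZD, y ∈ YA ∩ YB → y ∈ ZA ∩ ZB) →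
      ∃ g : Y → ℂ, Continuous g ∧ (∀ y, g y ∈ D) ∧ EqOn g f ZD ∧ EqOn g g0 (YA ∩ YB) := by
    classical
    intro D ZD hD cD hsub hABD hagree
    have e1 : EqOn (ZD.piecewise f g0) f ZD := piecewise_eqOn _ _ _
    have e2 : EqOn (ZD.piecewise f g0) g0 (YA ∩ YB) := by
      intro y hy
      by_cases hyD : y ∈ ZD
      · rw [piecewise_eq_of_mem _ _ _ hyD]
        exact (hg0e (hagree y hyD hy)).symm
      · rw [piecewise_eq_of_notMem _ _ _ hyD]
    obtain ⟨g, hg, hgm, hge⟩ := hD Y (ZD ∪ (YA ∩ YB)) (ZD.piecewise f g0)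
      (cD.union (cYA.inter cYB))
      (ContinuousOn.union_of_isClosed ((hf.mono fun y hy => (hsub hy).1).congr e1)
        (hg0.continuousOn.congr e2) cD (cYA.inter cYB)) (by
        rintro y (hy | hy)
        · rw [e1 hy]; exact (hsub hy).2
        · rw [e2 hy]; exact hABD (hg0m y))
    exact ⟨g, hg, hgm, fun y hy => (hge (Or.inl hy)).trans (e1 hy),
      fun y hy => (hge (Or.inr hy)).trans (e2 hy)⟩
  obtain ⟨gA, hgA, hgAm, hgAe, hgA0⟩ := key A ZA hA cZA subset_rfl inter_subset_left
    fun y hy hy' => ⟨hy, memB y hy hy'.2⟩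
  obtain ⟨gB, hgB, hgBm, hgBe, hgB0⟩ := key B ZB hB cZB subset_rfl inter_subset_right
    fun y hy hy' => ⟨memA y hy hy'.1, hy⟩
  classical
  refine ⟨fun y => if infEDist y ZA ≤ infEDist y ZB then gA y else gB y,
    hgA.if_le hgB continuous_infEDist continuous_infEDist fun y hy => ?_, fun y => ?_,
    fun y hy => ?_⟩
  · have : y ∈ YA ∩ YB := ⟨hy.le, hy.ge⟩
    rw [hgA0 this, hgB0 this]
  · dsimp only
    split_ifs
    · exact Or.inl (hgAm y)
    · exact Or.inr (hgBm y)
  · dsimp only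
    split_ifs with h
    · refine hgAe ?_
      rcases hm hy with h' | h'
      · exact ⟨hy, h'⟩
      · exact memA y ⟨hy, h'⟩ h
    · refine hgBe ?_
      rcases hm hy with h' | h'
      · exact memB y ⟨hy, h'⟩ (not_le.1 h).le
      · exact ⟨hy, h'⟩

theorem contractibleSpace (hA : IsAbsExtensor A) : ContractibleSpace A := by
  obtain ⟨a, ha⟩ := hA.nonempty
  let Z : Set (A × ℝ) := {p | p.2 = 0} ∪ {p | p.2 = 1}
  obtain ⟨g, hg, hgm, hge⟩ := hA (A × ℝ) Z (fun p => if p.2 = 0 then (p.1 : ℂ) else a)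
    ((isClosed_eq continuous_snd continuous_const).union
      (isClosed_eq continuous_snd continuous_const))
    (ContinuousOn.union_of_isClosed
      ((continuous_subtype_val.comp continuous_fst).continuousOn.congr fun p hp => by
        simp only [mem_ofPred_eq] at hp; simp [hp])
      ((continuousOn_const (c := a)).congr fun p hp => by
        simp only [mem_ofPred_eq] at hp; simp [hp])
      (isClosed_eq continuous_snd continuous_const)
      (isClosed_eq continuous_snd continuous_const))
    (fun p _ => by dsimp only; split_ifs; exacts [p.1.2, ha])
  rw [contractible_iff_id_nullhomotopic]
  refine ⟨⟨a, ha⟩, ⟨⟨⟨fun p => ⟨g (p.2, p.1), hgm _⟩, by fun_prop⟩, fun x => ?_, fun x => ?_⟩⟩⟩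
  · ext
    simpa using hge (x := (x, (0 : ℝ))) (Or.inl rfl)
  · ext
    simpa using hge (x := (x, (1 : ℝ))) (Or.inr rfl)

theorem isPreconnected (hA : IsAbsExtensor A) : IsPreconnected A := by
  have := hA.contractibleSpace
  exact isPreconnected_iff_preconnectedSpace.2 inferInstance

end IsAbsExtensor

/-- The region over `[a, b]` between the graphs of `f` and `g`. -/
def graphCell (a b : ℝ) (f g : ℝ → ℝ) : Set ℂ :=
  {z | z.re ∈ Icc a b ∧ f z.re ≤ z.im ∧ z.im ≤ g z.re}

section graphCell

variable {a b : ℝ} {f g : ℝ → ℝ}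

theorem exists_retraction_graphCell (hab : a ≤ b) (hf : ContinuousOn f (Icc a b))
    (hg : ContinuousOn g (Icc a b)) (hfg : ∀ x ∈ Icc a b, f x ≤ g x) :
    ∃ r : ℂ → ℂ, Continuous r ∧ (∀ z, r z ∈ graphCell a b f g) ∧
      (∀ z ∈ graphCell a b f g, r z = z) ∧ ∀ z, z.re ∈ Icc a b → (r z).re = z.re := by
  have hf' : Continuous (IccExtend hab ((Icc a b).domRestrict f)) := hf.domRestrict.Icc_extend'
  have hg' : Continuous (IccExtend hab ((Icc a b).domRestrict g)) := hg.domRestrict.Icc_extend'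
  set f' := IccExtend hab ((Icc a b).domRestrict f)
  set g' := IccExtend hab ((Icc a b).domRestrict g)
  have ef : ∀ x, f' x = f (projIcc a b hab x) := fun x => rfl
  have eg : ∀ x, g' x = g (projIcc a b hab x) := fun x => rfl
  refine ⟨fun z => ⟨projIcc a b hab z.re, max (f' z.re) (min (g' z.re) z.im)⟩, ?_, fun z => ?_,
    fun z hz => ?_, fun z hz => ?_⟩
  · have : Continuous fun z : ℂ => ((projIcc a b hab z.re : ℝ) : ℂ) +
        ((max (f' z.re) (min (g' z.re) z.im) : ℝ) : ℂ) * Complex.I := by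
      have := Complex.continuous_re
      have := Complex.continuous_im
      have := (continuous_projIcc (h := hab))
      fun_prop
    convert this using 2 with z
    exact Complex.mk_eq_add_mul_I _ _
  · refine ⟨(projIcc a b hab z.re).2, ?_, ?_⟩
    · exact le_max_left _ _
    · exact max_le (hfg _ (projIcc a b hab z.re).2) (min_le_left _ _)
  · apply Complex.ext
    · simp [projIcc_of_mem hab hz.1]
    · simp only [ef, eg, projIcc_of_mem hab hz.1]
      rw [min_eq_right hz.2.2, max_eq_right hz.2.1]
  · simp [projIcc_of_mem hab hz]

theorem isAbsExtensor_graphCell (hab : a ≤ b) (hf : ContinuousOn f (Icc a b))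
    (hg : ContinuousOn g (Icc a b)) (hfg : ∀ x ∈ Icc a b, f x ≤ g x) :
    IsAbsExtensor (graphCell a b f g) := by
  obtain ⟨r, hr, hm, hid, -⟩ := exists_retraction_graphCell hab hf hg hfg
  exact .of_retraction r hr hm hid

theorem isClosed_graphCell (hab : a ≤ b) (hf : ContinuousOn f (Icc a b))
    (hg : ContinuousOn g (Icc a b)) (hfg : ∀ x ∈ Icc a b, f x ≤ g x) :
    IsClosed (graphCell a b f g) := by
  obtain ⟨r, hr, hm, hid, -⟩ := exists_retraction_graphCell hab hf hg hfg
  have : graphCell a b f g = {z | r z = z} :=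
    Subset.antisymm hid fun z hz => (show r z = z from hz) ▸ hm z
  rw [this]
  exact isClosed_eq hr continuous_id

/-- A fiber of a cell is an absolute extensor. -/
theorem isAbsExtensor_graphCell_fiber {c : ℝ} (hc : c ∈ Icc a b)
    (hfg : ∀ x ∈ Icc a b, f x ≤ g x) :
    IsAbsExtensor (graphCell a b f g ∩ {z | z.re = c}) := by
  have : graphCell a b f g ∩ {z | z.re = c} = graphCell c c f g := by
    ext z
    simp only [graphCell, mem_inter_iff, mem_ofPred_eq, Icc_self, mem_singleton_iff]
    constructor
    · rintro ⟨⟨-, h⟩, rfl⟩; exact ⟨rfl, h⟩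
    · rintro ⟨rfl, h⟩; exact ⟨⟨hc, h⟩, rfl⟩
  rw [this]
  refine isAbsExtensor_graphCell le_rfl ?_ ?_ fun x hx => ?_
  · simp
  · simp
  · rw [Icc_self, mem_singleton_iff] at hx; exact hx ▸ hfg c hc

end graphCell

/-- `X` is a finite disjoint union of closed absolute extensors. -/
def HasExtensorPieces (X : Set ℂ) : Prop :=
  ∃ 𝒦 : Set (Set ℂ), 𝒦.Finite ∧ 𝒦.PairwiseDisjoint id ∧
    (∀ K ∈ 𝒦, IsClosed K ∧ IsAbsExtensor K) ∧ ⋃₀ 𝒦 = X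

/-- A connected subset of a finite disjoint union of closed sets lies in any member it meets. -/
theorem IsPreconnected.subset_of_mem_sUnion {𝒦 : Set (Set ℂ)} (hfin : 𝒦.Finite)
    (hdisj : 𝒦.PairwiseDisjoint id) (hcl : ∀ K ∈ 𝒦, IsClosed K) {E : Set ℂ}
    (hE : IsPreconnected E) (hsub : E ⊆ ⋃₀ 𝒦) {K : Set ℂ} (hK : K ∈ 𝒦)
    (hne : (E ∩ K).Nonempty) : E ⊆ K := by
  have hV : IsClosed (⋃₀ (𝒦 \ {K})) :=
    sUnion_eq_biUnion ▸ (hfin.subset sdiff_subset).isClosed_biUnion fun L hL => hcl L hL.1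
  have hd : Disjoint K (⋃₀ (𝒦 \ {K})) :=
    disjoint_sUnion_right.2 fun L hL => hdisj hK hL.1 fun h => hL.2 h.symm
  rcases isPreconnected_iff_subset_of_disjoint_closed.1 hE K _ (hcl K hK) hV (fun z hz => by
    obtain ⟨L, hL, hzL⟩ := hsub hz
    by_cases h : L = K
    · exact Or.inl (h ▸ hzL)
    · exact Or.inr ⟨L, ⟨hL, h⟩, hzL⟩) (by rw [hd.inter_eq, inter_empty]) with h | h
  · exact h
  · obtain ⟨z, hzE, hzK⟩ := hne
    exact (disjoint_left.1 hd hzK (h hzE)).elim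

namespace HasExtensorPieces

variable {X Q : Set ℂ}

theorem empty : HasExtensorPieces ∅ :=
  ⟨∅, finite_empty, pairwiseDisjoint_empty, by simp, sUnion_empty⟩

theorem isAbsExtensor_connectedComponentIn (hX : HasExtensorPieces X) {z : ℂ} (hz : z ∈ X) :
    IsAbsExtensor (connectedComponentIn X z) := by
  obtain ⟨𝒦, hfin, hdisj, hK, rfl⟩ := hX
  obtain ⟨K, hK𝒦, hzK⟩ := hz
  have : connectedComponentIn (⋃₀ 𝒦) z = K :=
    Subset.antisymm
      (isPreconnected_connectedComponentIn.subset_of_mem_sUnion hfin hdisj (fun L hL => (hK L hL).1)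
        (connectedComponentIn_subset _ _) hK𝒦
        ⟨z, mem_connectedComponentIn ⟨K, hK𝒦, hzK⟩, hzK⟩)
      ((hK K hK𝒦).2.isPreconnected.subset_connectedComponentIn hzK (subset_sUnion_of_mem hK𝒦))
  exact this ▸ (hK K hK𝒦).2

theorem union_disjoint (hX : HasExtensorPieces X) (hQ : IsAbsExtensor Q) (cQ : IsClosed Q)
    (hd : Disjoint Q X) : HasExtensorPieces (X ∪ Q) := by
  obtain ⟨𝒦, hfin, hdisj, hK, rfl⟩ := hX
  refine ⟨insert Q 𝒦, hfin.insert _, ?_, ?_, by rw [sUnion_insert, union_comm]⟩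
  · exact hdisj.insert fun L hL _ => hd.mono_right (subset_sUnion_of_mem hL)
  · rintro L (rfl | hL)
    exacts [⟨cQ, hQ⟩, hK L hL]

/-- Attaching a piece along two disjoint extensors that lie in different components. -/
theorem union_of_separated (hX : HasExtensorPieces X) (hQ : IsAbsExtensor Q) (cQ : IsClosed Q)
    {E₁ E₂ : Set ℂ} (hE₁ : IsAbsExtensor E₁) (hE₂ : IsAbsExtensor E₂) (hE : Q ∩ X = E₁ ∪ E₂)
    (hsep : ∀ K ⊆ X, IsPreconnected K → E₁ ⊆ K → E₂ ⊆ K → False) :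
    HasExtensorPieces (X ∪ Q) := by
  obtain ⟨𝒦, hfin, hdisj, hK, rfl⟩ := hX
  have hpiece : ∀ E, IsAbsExtensor E → E ⊆ ⋃₀ 𝒦 → ∃ K ∈ 𝒦, E ⊆ K := by
    intro E hE hsub
    obtain ⟨z, hz⟩ := hE.nonempty
    obtain ⟨K, hK𝒦, hzK⟩ := hsub hz
    exact ⟨K, hK𝒦, hE.isPreconnected.subset_of_mem_sUnion hfin hdisj (fun L hL => (hK L hL).1)
      hsub hK𝒦 ⟨z, hz, hzK⟩⟩
  have hs₁ : E₁ ⊆ Q ∩ ⋃₀ 𝒦 := hE ▸ subset_union_left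
  have hs₂ : E₂ ⊆ Q ∩ ⋃₀ 𝒦 := hE ▸ subset_union_right
  obtain ⟨K₁, hK₁, hEK₁⟩ := hpiece E₁ hE₁ (hs₁.trans inter_subset_right)
  obtain ⟨K₂, hK₂, hEK₂⟩ := hpiece E₂ hE₂ (hs₂.trans inter_subset_right)
  have hne : K₁ ≠ K₂ := fun h => hsep K₁ (subset_sUnion_of_mem hK₁) (hK K₁ hK₁).2.isPreconnected
    hEK₁ (h ▸ hEK₂)
  have hd₁₂ : Disjoint K₁ K₂ := hdisj hK₁ hK₂ hne
  have hcases : ∀ L ∈ 𝒦, ∀ z ∈ Q, z ∈ L → z ∈ E₁ ∨ z ∈ E₂ := fun L hL z hzQ hzL =>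
    (hE.subset ⟨hzQ, L, hL, hzL⟩ : z ∈ E₁ ∪ E₂)
  have hi₁ : K₁ ∩ Q = E₁ := by
    refine Subset.antisymm ?_ fun z hz => ⟨hEK₁ hz, (hs₁ hz).1⟩
    rintro z ⟨hz, hzQ⟩
    exact (hcases K₁ hK₁ z hzQ hz).resolve_right fun h => disjoint_left.1 hd₁₂ hz (hEK₂ h)
  have hi₂ : (K₁ ∪ Q) ∩ K₂ = E₂ := by
    refine Subset.antisymm ?_ fun z hz => ⟨Or.inr (hs₂ hz).1, hEK₂ hz⟩
    rintro z ⟨hz | hzQ, hz₂⟩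
    · exact (disjoint_left.1 hd₁₂ hz hz₂).elim
    · exact (hcases K₂ hK₂ z hzQ hz₂).resolve_left fun h => disjoint_left.1 hd₁₂ (hEK₁ h) hz₂
  have hnew : IsAbsExtensor (K₁ ∪ Q ∪ K₂) := by
    refine .union (.union (hK K₁ hK₁).2 hQ (hi₁ ▸ hE₁) (hK K₁ hK₁).1 cQ) (hK K₂ hK₂).2
      (hi₂ ▸ hE₂) ((hK K₁ hK₁).1.union cQ) (hK K₂ hK₂).1
  refine ⟨insert (K₁ ∪ Q ∪ K₂) (𝒦 \ {K₁, K₂}), (hfin.subset sdiff_subset).insert _, ?_, ?_, ?_⟩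
  · refine (hdisj.subset sdiff_subset).insert fun L hL _ => ?_
    have h₁ : L ≠ K₁ := fun h => hL.2 (Or.inl h)
    have h₂ : L ≠ K₂ := fun h => hL.2 (Or.inr h)
    refine Disjoint.union_left (Disjoint.union_left (hdisj hK₁ hL.1 h₁.symm) ?_)
      (hdisj hK₂ hL.1 h₂.symm)
    refine disjoint_left.2 fun z hzQ hzL => ?_
    rcases hcases L hL.1 z hzQ hzL with h | h
    · exact disjoint_left.1 (hdisj hL.1 hK₁ h₁) hzL (hEK₁ h)
    · exact disjoint_left.1 (hdisj hL.1 hK₂ h₂) hzL (hEK₂ h)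
  · rintro L (rfl | hL)
    exacts [⟨((hK K₁ hK₁).1.union cQ).union (hK K₂ hK₂).1, hnew⟩, hK L hL.1]
  · ext z
    simp only [sUnion_insert, mem_union, mem_sUnion]
    constructor
    · rintro (((h | h) | h) | ⟨L, hL, h⟩)
      exacts [Or.inl ⟨K₁, hK₁, h⟩, Or.inr h, Or.inl ⟨K₂, hK₂, h⟩, Or.inl ⟨L, hL.1, h⟩]
    · rintro (⟨L, hL, h⟩ | h)
      · by_cases h₁ : L = K₁
        · exact Or.inl (Or.inl (Or.inl (h₁ ▸ h)))
        by_cases h₂ : L = K₂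
        · exact Or.inl (Or.inr (h₂ ▸ h))
        · exact Or.inr ⟨L, ⟨hL, by simp [h₁, h₂]⟩, h⟩
      · exact Or.inl (Or.inl (Or.inr h))

end HasExtensorPieces

/-- If the compact set `F` does not separate the plane, then `z ↦ z - p` has a continuous
logarithm on `F` for every `p ∉ F`. -/
theorem IsCompact.exists_continuousOn_log_sub {F : Set ℂ} (hF : IsCompact F)
    (hc : IsPreconnected Fᶜ) {p : ℂ} (hp : p ∉ F) :
    ∃ h : ℂ → ℂ, ContinuousOn h F ∧ ∀ z ∈ F, Complex.exp (h z) = z - p := by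
  obtain ⟨R, hR⟩ := hF.isBounded.subset_closedBall (0 : ℂ)
  have hre : ∀ z ∈ F, z.re ≤ R := fun z hz =>
    (Complex.re_le_norm z).trans (by simpa using hR hz)
  have hne : ∀ q ∉ F, ∀ z ∈ F, z - q ≠ 0 := fun q hq z hz h =>
    hq (sub_eq_zero.1 h ▸ hz)
  have hq : ((R + 1 : ℝ) : ℂ) ∉ F := fun h => by
    have := hre _ h
    rw [Complex.ofReal_re] at this
    linarith
  set q : ℂ := ((R + 1 : ℝ) : ℂ) with hqdef
  obtain ⟨k, hk, hke⟩ := hc.induction₂'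
    (fun u v => ∃ k : ℂ → ℂ, ContinuousOn k F ∧
      ∀ z ∈ F, Complex.exp (k z) * (z - v) = z - u) (by
    intro u hu
    obtain ⟨ε, hε, hball⟩ := Metric.isOpen_iff.1 hF.isClosed.isOpen_compl u hu
    filter_upwards [mem_nhdsWithin_of_mem_nhds (ball_mem_nhds u hε), self_mem_nhdsWithin]
      with v hv hvF
    have hslit : ∀ z ∈ F, (z - v) / (z - u) ∈ Complex.slitPlane := by
      intro z hz
      have h1 : ε ≤ ‖z - u‖ := by
        by_contra! h
        exact hball (by simpa [dist_eq_norm] using h) hz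
      have h2 : (z - v) / (z - u) = 1 + (u - v) / (z - u) := by
        field_simp [hne u hu z hz]
        ring
      rw [h2]
      apply Complex.mem_slitPlane_of_norm_lt_one
      rw [norm_div, div_lt_one (hε.trans_le h1)]
      refine lt_of_lt_of_le ?_ h1
      rw [← dist_eq_norm, dist_comm]
      exact hv
    have hcont : ContinuousOn (fun z => Complex.log ((z - v) / (z - u))) F :=
      ContinuousOn.clog (by
        refine ContinuousOn.div (by fun_prop) (by fun_prop) fun z hz => hne u hu z hz) hslit
    refine ⟨⟨fun z => -Complex.log ((z - v) / (z - u)), hcont.neg, fun z hz => ?_⟩,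
      ⟨_, hcont, fun z hz => ?_⟩⟩
    · rw [Complex.exp_neg, Complex.exp_log (Complex.slitPlane_ne_zero (hslit z hz))]
      field_simp [hne u hu z hz, hne v hvF z hz]
    · rw [Complex.exp_log (Complex.slitPlane_ne_zero (hslit z hz))]
      field_simp [hne u hu z hz]) (by
    rintro u v w - - - ⟨k, hk, hke⟩ ⟨l, hl, hle⟩
    refine ⟨fun z => k z + l z, hk.add hl, fun z hz => ?_⟩
    rw [Complex.exp_add, mul_assoc, hle z hz, hke z hz]) hp hq
  refine ⟨fun z => k z + (Complex.log (-(z - q)) + Real.pi * Complex.I), ?_, fun z hz => ?_⟩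
  · refine hk.add (ContinuousOn.add (ContinuousOn.clog (by fun_prop) fun z hz => Or.inl ?_)
      continuousOn_const)
    have := hre z hz
    simp [hqdef]
    linarith
  · rw [Complex.exp_add, Complex.exp_add, Complex.exp_log (neg_ne_zero.2 (hne q hq z hz)),
      Complex.exp_pi_mul_I, ← hke z hz]
    ring

/-- Two continuous logarithms of proportional functions differ by a constant on connected sets. -/
theorem IsPreconnected.sub_eq_sub_of_exp {S : Set ℂ} (hS : IsPreconnected S) {h l : ℂ → ℂ}
    (hh : ContinuousOn h S) (hl : ContinuousOn l S) {c : ℂ}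
    (hexp : ∀ z ∈ S, Complex.exp (h z) = c * Complex.exp (l z)) {x y : ℂ} (hx : x ∈ S)
    (hy : y ∈ S) : h x - l x = h y - l y := by
  have hconst : ∀ z ∈ S, Complex.exp (h z - l z) = c := fun z hz => by
    rw [Complex.exp_sub, hexp z hz, mul_div_assoc, div_self (Complex.exp_ne_zero _), mul_one]
  set T : Set ℂ := range fun n : ℤ => (n : ℂ)
  have hm : MapsTo (fun z => (h z - l z - (h x - l x)) / (2 * Real.pi * Complex.I)) S T := by
    intro z hz
    obtain ⟨n, hn⟩ := Complex.exp_eq_exp_iff_exists_int.1 ((hconst z hz).trans (hconst x hx).symm)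
    refine ⟨n, ?_⟩
    dsimp only
    rw [hn, add_sub_cancel_left, mul_div_assoc, div_self Complex.two_pi_I_ne_zero, mul_one]
  have hT : IsDiscrete T := isDiscrete_iff_discreteTopology.2
    Complex.isometry_intCast.isEmbedding.toHomeomorph.symm.isEmbedding.discreteTopology
  have := hS.constant_of_mapsTo hT (by fun_prop) hm hx hy
  simp only [sub_self, zero_div] at this
  have := (div_eq_zero_iff.1 this.symm).resolve_right Complex.two_pi_I_ne_zero
  exact (sub_eq_zero.1 this).symm

/-- Two connected subsets of a nonseparating compact set `F` on different sides of a point `p ∉ F`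
cannot meet both to the left and to the right of `p`. -/
theorem not_meet_both_sides {F : Set ℂ} (hF : IsCompact F) (hc : IsPreconnected Fᶜ) {p : ℂ}
    (hp : p ∉ F) {A B : Set ℂ} (hA : IsPreconnected A) (hB : IsPreconnected B) (hAF : A ⊆ F)
    (hBF : B ⊆ F) (hAp : ∀ z ∈ A, z.re = p.re → p.im < z.im)
    (hBp : ∀ z ∈ B, z.re = p.re → z.im < p.im) {x y : ℂ} (hx : x ∈ A ∩ B) (hy : y ∈ A ∩ B)
    (hxp : x.re < p.re) (hyp : p.re < y.re) : False := by
  obtain ⟨h, hh, hexp⟩ := hF.exists_continuousOn_log_sub hc hp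
  have slitA : ∀ z ∈ A, -Complex.I * (z - p) ∈ Complex.slitPlane := by
    intro z hz
    by_cases h : z.re = p.re
    · left; simpa using hAp z hz h
    · right; simpa [sub_eq_zero, eq_comm (a := p.re)] using h
  have slitB : ∀ z ∈ B, Complex.I * (z - p) ∈ Complex.slitPlane := by
    intro z hz
    by_cases h : z.re = p.re
    · left; simpa using hBp z hz h
    · right; simpa [sub_eq_zero] using h
  have eA := hA.sub_eq_sub_of_exp (hh.mono hAF)
    (l := fun z => Complex.log (-Complex.I * (z - p))) (ContinuousOn.clog (by fun_prop) slitA)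
    (c := Complex.I) (fun z hz => by
      rw [hexp z (hAF hz), Complex.exp_log (Complex.slitPlane_ne_zero (slitA z hz)), ← mul_assoc]
      simp) hx.1 hy.1
  have eB := hB.sub_eq_sub_of_exp (hh.mono hBF)
    (l := fun z => Complex.log (Complex.I * (z - p))) (ContinuousOn.clog (by fun_prop) slitB)
    (c := -Complex.I) (fun z hz => by
      rw [hexp z (hBF hz), Complex.exp_log (Complex.slitPlane_ne_zero (slitB z hz)), ← mul_assoc]
      simp) hx.2 hy.2
  have e : ∀ z, Complex.I * (z - p) = -(-Complex.I * (z - p)) := fun z => by ring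
  have hx' := Complex.arg_neg_eq_arg_sub_pi_of_im_pos (x := -Complex.I * (x - p))
    (by simpa using hxp)
  have hy' := Complex.arg_neg_eq_arg_add_pi_of_im_neg (x := -Complex.I * (y - p))
    (by simpa using hyp)
  have iA := congrArg Complex.im eA
  have iB := congrArg Complex.im eB
  simp only [Complex.sub_im, Complex.log_im] at iA iB
  rw [e, e, hx', hy'] at iB
  have := Real.pi_pos
  linarith

/-- The upper boundary of a planar set over the point `x` of the real axis. -/
def upperGraph (K : Set ℂ) (x : ℝ) : ℝ := sSup {y | (⟨x, y⟩ : ℂ) ∈ K}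

theorem IsCompact.isGreatest_upperGraph {K : Set ℂ} (hK : IsCompact K) {x : ℝ}
    (hx : x ∈ Complex.re '' K) : IsGreatest {y | (⟨x, y⟩ : ℂ) ∈ K} (upperGraph K x) := by
  have himage : {y | (⟨x, y⟩ : ℂ) ∈ K} = Complex.im '' (K ∩ {z | z.re = x}) := by
    ext y
    constructor
    · exact fun h => ⟨⟨x, y⟩, ⟨h, rfl⟩, rfl⟩
    · rintro ⟨z, ⟨hz, rfl⟩, rfl⟩
      exact hz
  refine IsCompact.isGreatest_sSup ?_ ?_
  · rw [himage]
    exact (hK.inter_right (isClosed_eq Complex.continuous_re continuous_const)).image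
      Complex.continuous_im
  · obtain ⟨z, hz, rfl⟩ := hx
    exact ⟨z.im, hz⟩

theorem Convex.le_upperGraph {K : Set ℂ} (hc : Convex ℝ K) (hK : IsCompact K) {x e u : ℝ}
    (hx : x ∈ Complex.re '' K) (he : e ∈ Complex.re '' K) (hu : u ∈ segment ℝ x e) :
    upperGraph K x + (u - x) / (e - x) * (upperGraph K e - upperGraph K x) ≤ upperGraph K u := by
  obtain ⟨s, t, hs, ht, hst, rfl⟩ := hu
  have hmem := hc (hK.isGreatest_upperGraph hx).1 (hK.isGreatest_upperGraph he).1 hs ht hst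
  have hre : s • (⟨x, upperGraph K x⟩ : ℂ) + t • (⟨e, upperGraph K e⟩ : ℂ) =
      ⟨s • x + t • e, s * upperGraph K x + t * upperGraph K e⟩ := by
    apply Complex.ext <;> simp
  rw [hre] at hmem
  obtain rfl : s = 1 - t := by linarith
  rcases eq_or_ne e x with rfl | hne
  · have : (1 - t) • e + t • e = e := by simp only [smul_eq_mul]; ring
    rw [this]
    simp
  · have hle := (hK.isGreatest_upperGraph ⟨_, hmem, rfl⟩).2 hmem
    refine le_trans (le_of_eq ?_) hle
    have : e - x ≠ 0 := sub_ne_zero.2 hne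
    simp only [smul_eq_mul]
    field_simp
    ring

theorem Convex.continuousOn_upperGraph {K : Set ℂ} (hc : Convex ℝ K) (hK : IsCompact K) {a b : ℝ}
    (hab : Icc a b ⊆ Complex.re '' K) : ContinuousOn (upperGraph K) (Icc a b) := by
  intro x hx
  have ha : a ∈ Icc a b := ⟨le_rfl, hx.1.trans hx.2⟩
  have hb : b ∈ Icc a b := ⟨hx.1.trans hx.2, le_rfl⟩
  refine tendsto_order.2 ⟨fun c hcx => ?_, fun c hcx => ?_⟩
  · have hev : ∀ e : ℝ, ∀ᶠ u in nhds x,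
        c < upperGraph K x + (u - x) / (e - x) * (upperGraph K e - upperGraph K x) := by
      intro e
      have : ContinuousAt (fun u => upperGraph K x +
          (u - x) / (e - x) * (upperGraph K e - upperGraph K x)) x := by fun_prop
      exact this.eventually_const_lt (by simpa using hcx)
    filter_upwards [mem_nhdsWithin_of_mem_nhds (hev a), mem_nhdsWithin_of_mem_nhds (hev b),
      self_mem_nhdsWithin] with u hua hub hu
    rcases le_total u x with h | h
    · refine hua.trans_le (hc.le_upperGraph hK (hab hx) (hab ha) ?_)
      rw [segment_symm, segment_eq_Icc hx.1]
      exact ⟨hu.1, h⟩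
    · refine hub.trans_le (hc.le_upperGraph hK (hab hx) (hab hb) ?_)
      rw [segment_eq_Icc hx.2]
      exact ⟨h, hu.2⟩
  · have hT : IsCompact (Complex.re '' (K ∩ {z | c ≤ z.im})) :=
      (hK.inter_right (isClosed_le continuous_const Complex.continuous_im)).image
        Complex.continuous_re
    have hxT : x ∉ Complex.re '' (K ∩ {z | c ≤ z.im}) := by
      rintro ⟨z, ⟨hz, hcz⟩, rfl⟩
      exact absurd ((hK.isGreatest_upperGraph ⟨z, hz, rfl⟩).2 hz) (not_le.2 (hcx.trans_le hcz))
    filter_upwards [mem_nhdsWithin_of_mem_nhds (hT.isClosed.isOpen_compl.mem_nhds hxT),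
      self_mem_nhdsWithin] with u huT hu
    by_contra! h
    exact huT ⟨_, ⟨(hK.isGreatest_upperGraph (hab hu)).1, h⟩, rfl⟩

theorem Convex.mem_of_lt_upperGraph {M : Set ℂ} (hc : Convex ℝ M) (ho : IsOpen M)
    (hb : Bornology.IsBounded M) {x v y : ℝ} (hv : (⟨x, v⟩ : ℂ) ∈ M) (hvy : v ≤ y)
    (hy : y < upperGraph (closure M) x) : (⟨x, y⟩ : ℂ) ∈ M := by
  have hU := (hb.isCompact_closure.isGreatest_upperGraph ⟨_, subset_closure hv, rfl⟩).1
  rcases hvy.eq_or_lt with rfl | hvy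
  · exact hv
  rw [← ho.interior_eq] at hv ⊢
  refine hc.openSegment_interior_closure_subset_interior hv hU ?_
  have hmem : y ∈ openSegment ℝ v (upperGraph (closure M) x) := by
    rw [openSegment_eq_Ioo (hvy.trans hy)]
    exact ⟨hvy, hy⟩
  obtain ⟨s, t, hs, ht, hst, rfl⟩ := hmem
  refine ⟨s, t, hs, ht, hst, ?_⟩
  apply Complex.ext
  · simp [← add_mul, hst]
  · simp

theorem IsOpen.lt_upperGraph {M : Set ℂ} (ho : IsOpen M)
    (hb : Bornology.IsBounded M) {x y : ℝ} (hy : (⟨x, y⟩ : ℂ) ∈ M) :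
    y < upperGraph (closure M) x := by
  have hcont : Continuous fun v : ℝ => (⟨x, v⟩ : ℂ) := by
    have : (fun v : ℝ => (⟨x, v⟩ : ℂ)) = fun v : ℝ => (x : ℂ) + v * Complex.I :=
      funext fun v => Complex.mk_eq_add_mul_I x v
    rw [this]
    fun_prop
  have hev := (hcont.tendsto y).eventually (ho.mem_nhds hy)
  obtain ⟨v, hvy, hv⟩ := (hev.filter_mono nhdsWithin_le_nhds).and
    (self_mem_nhdsWithin (s := Ioi y)) |>.exists
  exact hv.trans_le
    ((hb.isCompact_closure.isGreatest_upperGraph ⟨_, subset_closure hy, rfl⟩).2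
      (subset_closure hvy))

/-- A bounded open convex planar set is the region between two functions on its projection, which
are continuous up to the boundary of the projection. -/
theorem Convex.exists_graph_bounds {M : Set ℂ} (hc : Convex ℝ M) (ho : IsOpen M)
    (hb : Bornology.IsBounded M) :
    ∃ l u : ℝ → ℝ, (∀ x ∈ Complex.re '' M, ∀ y, (⟨x, y⟩ : ℂ) ∈ M ↔ y ∈ Ioo (l x) (u x)) ∧
      ∀ a b, Icc a b ⊆ closure (Complex.re '' M) →
        ContinuousOn l (Icc a b) ∧ ContinuousOn u (Icc a b) := by
  set M' : Set ℂ := Complex.conjLIE ⁻¹' M with hM'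
  have hc' : Convex ℝ M' := hc.linear_preimage Complex.conjLIE.toLinearEquiv.toLinearMap
  have ho' : IsOpen M' := ho.preimage Complex.conjLIE.continuous
  have hb' : Bornology.IsBounded M' := Complex.conjLIE.antilipschitz.isBounded_preimage hb
  have hmem : ∀ x y : ℝ, (⟨x, y⟩ : ℂ) ∈ M' ↔ (⟨x, -y⟩ : ℂ) ∈ M := fun x y => Iff.rfl
  have hre : Complex.re '' M' = Complex.re '' M := by
    ext x
    constructor
    · rintro ⟨z, hz, rfl⟩
      exact ⟨_, hz, by simp⟩
    · rintro ⟨z, hz, rfl⟩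
      exact ⟨Complex.conjLIE z, by simpa [hM'] using hz, by simp⟩
  have hcl : ∀ (L : Set ℂ), Bornology.IsBounded L →
      closure (Complex.re '' L) ⊆ Complex.re '' closure L := fun L hL =>
    closure_minimal (image_mono subset_closure)
      (hL.isCompact_closure.image Complex.continuous_re).isClosed
  refine ⟨fun x => -upperGraph (closure M') x, upperGraph (closure M), ?_, fun a b hab => ⟨?_, ?_⟩⟩
  · rintro x ⟨z, hz, rfl⟩ y
    constructor
    · intro hy
      refine ⟨neg_lt.1 (ho'.lt_upperGraph hb' ?_), ho.lt_upperGraph hb hy⟩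
      rwa [hmem, neg_neg]
    · rintro ⟨hl, hu⟩
      rcases le_total z.im y with h | h
      · exact hc.mem_of_lt_upperGraph ho hb (v := z.im) hz h hu
      · have := hc'.mem_of_lt_upperGraph ho' hb' (x := z.re) (v := -z.im) (y := -y)
          (by rw [hmem, neg_neg]; exact hz) (neg_le_neg h) (neg_lt.1 hl)
        rwa [hmem, neg_neg] at this
  · exact (hc'.closure.continuousOn_upperGraph hb'.isCompact_closure
      ((hre ▸ hab).trans (hcl M' hb'))).neg
  · exact hc.closure.continuousOn_upperGraph hb.isCompact_closure (hab.trans (hcl M hb))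

/-- A pair of functions, thought of as the band between their graphs. -/
abbrev Band : Type := (ℝ → ℝ) × (ℝ → ℝ)

namespace Band

/-- The fiber of a band over `x`. -/
def fiber (p : Band) (x : ℝ) : Set ℝ := Ioo (p.1 x) (p.2 x)

/-- The functions bounding `p` are continuous on `I`, and `p` has nonempty fibers over `D`. -/
def IsProper (D I : Set ℝ) (p : Band) : Prop :=
  ContinuousOn p.1 I ∧ ContinuousOn p.2 I ∧ ∀ x ∈ D, p.1 x < p.2 x

/-- The band `p` lies below the band `q` over `D`. -/
def Below (D : Set ℝ) (p q : Band) : Prop := ∀ x ∈ D, p.2 x ≤ q.1 x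

/-- The bands `p` and `q` overlap over each point of `D`. -/
def Meets (D : Set ℝ) (p q : Band) : Prop := ∀ x ∈ D, p.1 x < q.2 x ∧ q.1 x < p.2 x

/-- The relative position of `p` and `q` does not change over `D`. -/
def Comparable (D : Set ℝ) (p q : Band) : Prop := Below D p q ∨ Below D q p ∨ Meets D p q

/-- The smallest band containing two given ones. -/
def merge (p q : Band) : Band := (fun x => min (p.1 x) (q.1 x), fun x => max (p.2 x) (q.2 x))

variable {D I : Set ℝ} {p q r : Band}

theorem Meets.symm (h : Meets D p q) : Meets D q p := fun x hx => (h x hx).symm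

theorem Comparable.symm (h : Comparable D p q) : Comparable D q p := by
  rcases h with h | h | h
  exacts [Or.inr (Or.inl h), Or.inl h, Or.inr (Or.inr h.symm)]

theorem IsProper.merge (hp : IsProper D I p) (hq : IsProper D I q) : IsProper D I (p.merge q) :=
  ⟨ContinuousOn.inf hp.1 hq.1, ContinuousOn.sup hp.2.1 hq.2.1, fun x hx =>
    (min_le_left _ _).trans_lt ((hp.2.2 x hx).trans_le (le_max_left _ _))⟩

theorem Below.merge_right (hp : Below D r p) (hq : Below D r q) : Below D r (p.merge q) :=
  fun x hx => le_min (hp x hx) (hq x hx)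

theorem Below.trans (hq : IsProper D I q) (h₁ : Below D p q) (h₂ : Below D q r) : Below D p r :=
  fun x hx => (h₁ x hx).trans ((hq.2.2 x hx).le.trans (h₂ x hx))

theorem Meets.fiber_merge (h : Meets D p q) {x : ℝ} (hx : x ∈ D) :
    (p.merge q).fiber x = p.fiber x ∪ q.fiber x := by
  rw [fiber, fiber, fiber, Ioo_union_Ioo']
  · rfl
  · exact (h x hx).2
  · exact (h x hx).1

theorem Comparable.merge (hD : D.Nonempty) (hr : IsProper D I r) (hp : Comparable D r p)
    (hq : Comparable D r q) (h : Meets D p q) : Comparable D r (p.merge q) := by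
  obtain ⟨x₀, hx₀⟩ := hD
  have h₀ := h x₀ hx₀
  have hr₀ := hr.2.2 x₀ hx₀
  rcases hp with hp | hp | hp
  · rcases hq with hq | hq | hq
    · exact Or.inl (hp.merge_right hq)
    · have := hp x₀ hx₀
      have := hq x₀ hx₀
      linarith
    · exact Or.inr (Or.inr fun x hx => ⟨(hq x hx).1.trans_le (le_max_right _ _),
        (min_le_right _ _).trans_lt (hq x hx).2⟩)
  · rcases hq with hq | hq | hq
    · have := hp x₀ hx₀
      have := hq x₀ hx₀
      linarith
    · exact Or.inr (Or.inl fun x hx => max_le (hp x hx) (hq x hx))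
    · exact Or.inr (Or.inr fun x hx => ⟨(hq x hx).1.trans_le (le_max_right _ _),
        (min_le_right _ _).trans_lt (hq x hx).2⟩)
  · exact Or.inr (Or.inr fun x hx => ⟨(hp x hx).1.trans_le (le_max_left _ _),
      (min_le_left _ _).trans_lt (hp x hx).2⟩)

/-- Inserting a band into a sorted list of disjoint bands, merging it with those it overlaps. -/
theorem exists_insert (hD : D.Nonempty) (l : List Band) (p : Band) (hl : l.Pairwise (Below D))
    (hlp : ∀ b ∈ l, IsProper D I b) (hp : IsProper D I p) (hc : ∀ b ∈ l, Comparable D p b) :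
    ∃ l' : List Band, l'.Pairwise (Below D) ∧ (∀ b ∈ l', IsProper D I b) ∧
      (∀ x ∈ D, ∀ y, (∃ b ∈ l', y ∈ b.fiber x) ↔ (∃ b ∈ l, y ∈ b.fiber x) ∨ y ∈ p.fiber x) ∧
      (∀ q, IsProper D I q → Comparable D q p → (∀ b ∈ l, Comparable D q b) →
        ∀ b ∈ l', Comparable D q b) ∧
      ∀ q, Below D q p → (∀ b ∈ l, Below D q b) → ∀ b ∈ l', Below D q b := by
  induction l generalizing p with
  | nil => exact ⟨[p], by simp, by simpa using hp, by simp, by simp, by simp⟩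
  | cons b l ih =>
    simp only [List.pairwise_cons, List.forall_mem_cons] at hl hlp hc
    rcases hc.1 with h | h | h
    · refine ⟨p :: b :: l, ?_, ?_, ?_, ?_, ?_⟩
      · simp only [List.pairwise_cons, List.forall_mem_cons]
        exact ⟨⟨h, fun c hcl => h.trans hlp.1 (hl.1 c hcl)⟩, hl⟩
      · simpa only [List.forall_mem_cons] using ⟨hp, hlp⟩
      · intro x _ y
        simp only [List.mem_cons, exists_eq_or_imp]
        grind
      · intro q _ h1 h2
        simpa only [List.forall_mem_cons] using ⟨h1, by simpa using h2⟩
      · intro q h1 h2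
        simpa only [List.forall_mem_cons] using ⟨h1, by simpa using h2⟩
    · obtain ⟨l', h1, h2, h3, h4, h5⟩ := ih p hl.2 hlp.2 hp hc.2
      refine ⟨b :: l', ?_, ?_, ?_, ?_, ?_⟩
      · exact List.pairwise_cons.2 ⟨h5 b h hl.1, h1⟩
      · exact List.forall_mem_cons.2 ⟨hlp.1, h2⟩
      · intro x hx y
        simp only [List.mem_cons, exists_eq_or_imp, h3 x hx y]
        grind
      · intro q hq hqp hql
        rw [List.forall_mem_cons] at hql
        exact List.forall_mem_cons.2 ⟨hql.1, h4 q hq hqp hql.2⟩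
      · intro q hqp hql
        rw [List.forall_mem_cons] at hql
        exact List.forall_mem_cons.2 ⟨hql.1, h5 q hqp hql.2⟩
    · obtain ⟨l', h1, h2, h3, h4, h5⟩ := ih (p.merge b) hl.2 hlp.2 (hp.merge hlp.1) fun c hcl =>
        (Comparable.merge hD (hlp.2 c hcl) (hc.2 c hcl).symm (Or.inr (Or.inl (hl.1 c hcl))) h).symm
      refine ⟨l', h1, h2, ?_, ?_, ?_⟩
      · intro x hx y
        simp only [List.mem_cons, exists_eq_or_imp, h3 x hx y, h.fiber_merge hx, mem_union]
        grind
      · intro q hq hqp hql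
        rw [List.forall_mem_cons] at hql
        exact h4 q hq (.merge hD hq hqp hql.1 h) hql.2
      · intro q hqp hql
        rw [List.forall_mem_cons] at hql
        exact h5 q (hqp.merge_right hql.1) hql.2

/-- A finite union of pairwise comparable bands is a union of a sorted list of disjoint bands. -/
theorem exists_sorted (hD : D.Nonempty) (l : List Band) (hl : ∀ b ∈ l, IsProper D I b)
    (hc : ∀ b ∈ l, ∀ c ∈ l, Comparable D b c) :
    ∃ l' : List Band, l'.Pairwise (Below D) ∧ (∀ b ∈ l', IsProper D I b) ∧
      (∀ x ∈ D, ∀ y, (∃ b ∈ l', y ∈ b.fiber x) ↔ ∃ b ∈ l, y ∈ b.fiber x) := by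
  suffices ∃ l' : List Band, l'.Pairwise (Below D) ∧ (∀ b ∈ l', IsProper D I b) ∧
      (∀ x ∈ D, ∀ y, (∃ b ∈ l', y ∈ b.fiber x) ↔ ∃ b ∈ l, y ∈ b.fiber x) ∧
      ∀ q, IsProper D I q → (∀ b ∈ l, Comparable D q b) → ∀ b ∈ l', Comparable D q b by
    obtain ⟨l', h1, h2, h3, -⟩ := this
    exact ⟨l', h1, h2, h3⟩
  induction l with
  | nil => exact ⟨[], by simp⟩
  | cons p l ih =>
    rw [List.forall_mem_cons] at hl
    obtain ⟨l', h1, h2, h3, h4⟩ := ih hl.2 fun b hb c hcl =>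
      hc b (List.mem_cons_of_mem _ hb) c (List.mem_cons_of_mem _ hcl)
    obtain ⟨m, g1, g2, g3, g4, -⟩ := exists_insert hD l' p h1 h2 hl.1
      (h4 p hl.1 fun b hb => hc p List.mem_cons_self b (List.mem_cons_of_mem _ hb))
    refine ⟨m, g1, g2, ?_, ?_⟩
    · intro x hx y
      simp only [List.mem_cons, exists_eq_or_imp, g3 x hx y, h3 x hx y]
      grind
    · intro q hq hql
      rw [List.forall_mem_cons] at hql
      exact g4 q hq hql.1 (h4 q hq hql.2)

/-- The union over `[a, b]` of the gaps between consecutive bands of a list. -/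
def gapCells (a b : ℝ) : List Band → Set ℂ
  | [] => ∅
  | [_] => ∅
  | p :: q :: l => graphCell a b p.2 q.1 ∪ gapCells a b (q :: l)

variable {a b : ℝ}

theorem le_im_of_mem_gapCells {l : List Band} (hl : (p :: l).Pairwise (Below D))
    (hlp : ∀ c ∈ p :: l, IsProper D I c) {z : ℂ} (hz : z ∈ gapCells a b (p :: l))
    (hzD : z.re ∈ D) : p.2 z.re ≤ z.im := by
  induction l generalizing p with
  | nil => exact hz.elim
  | cons q l ih =>
    rcases hz with hz | hz
    · exact hz.2.1
    · have h1 := ih (List.pairwise_cons.1 hl).2 (List.forall_mem_cons.1 hlp).2 hz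
      have h2 := (List.pairwise_cons.1 hl).1 q List.mem_cons_self _ hzD
      have h3 := (hlp q (by simp)).2.2 _ hzD
      linarith

theorem notMem_fiber_of_mem_gapCells {l : List Band} (hl : l.Pairwise (Below D))
    (hlp : ∀ c ∈ l, IsProper D I c) {z : ℂ} (hz : z ∈ gapCells a b l)
    (hzD : z.re ∈ D) : ∀ c ∈ l, z.im ∉ c.fiber z.re := by
  induction l with
  | nil => simp
  | cons p l ih =>
    rintro c hcl ⟨hc1, hc2⟩
    rcases List.mem_cons.1 hcl with rfl | hcl
    · exact absurd (le_im_of_mem_gapCells hl hlp hz hzD) (not_le.2 hc2)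
    · cases l with
      | nil => simp at hcl
      | cons q l =>
        rcases hz with hz | hz
        · have h1 := hz.2.2
          rcases List.mem_cons.1 hcl with rfl | hcl
          · linarith
          · have h2 := (List.pairwise_cons.1 (List.pairwise_cons.1 hl).2).1 c hcl _ hzD
            have h3 := (hlp q (by simp)).2.2 _ hzD
            linarith
        · exact ih (List.pairwise_cons.1 hl).2 (List.forall_mem_cons.1 hlp).2 hz c hcl ⟨hc1, hc2⟩

theorem mem_gapCells {l : List Band} {z : ℂ} (hz : z.re ∈ Icc a b)
    (hn : ∀ c ∈ l, z.im ∉ c.fiber z.re) (hl : l.Pairwise (Below D)) (hzD : z.re ∈ D)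
    (hbelow : ∃ c ∈ l, c.1 z.re < z.im) (habove : ∃ c ∈ l, z.im < c.2 z.re) :
    z ∈ gapCells a b l := by
  induction l with
  | nil => simp at hbelow
  | cons p l ih =>
    have hp := hn p List.mem_cons_self
    rw [List.forall_mem_cons] at hn
    rw [List.pairwise_cons] at hl
    have hpz : p.2 z.re ≤ z.im := by
      by_contra! h
      obtain ⟨c, hcl, hc⟩ := hbelow
      rcases List.mem_cons.1 hcl with rfl | hcl
      · exact hp ⟨hc, h⟩
      · exact absurd (hl.1 c hcl _ hzD) (not_le.2 (hc.trans h))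
    cases l with
    | nil => simp at habove; linarith
    | cons q l =>
      by_cases hq : z.im ≤ q.1 z.re
      · exact Or.inl ⟨hz, hpz, hq⟩
      · refine Or.inr (ih hn.2 hl.2 ⟨q, List.mem_cons_self, not_le.1 hq⟩ ?_)
        obtain ⟨c, hcl, hc⟩ := habove
        rcases List.mem_cons.1 hcl with rfl | hcl
        · linarith
        · exact ⟨c, hcl, hc⟩

theorem mem_Icc_of_mem_gapCells {l : List Band} {z : ℂ} (hz : z ∈ gapCells a b l) :
    z.re ∈ Icc a b := by
  induction l with
  | nil => exact hz.elim
  | cons p l ih =>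
    cases l with
    | nil => exact hz.elim
    | cons q l =>
      rcases hz with hz | hz
      exacts [hz.1, ih hz]

theorem Below.le_of_mem_Icc (hD : Icc a b ⊆ closure D) (hDI : D ⊆ Icc a b)
    (hp : IsProper D (Icc a b) p) (hq : IsProper D (Icc a b) q) (h : Below D p q) :
    ∀ x ∈ Icc a b, p.2 x ≤ q.1 x := fun x hx =>
  ContinuousWithinAt.closure_le (hD hx) ((hp.2.1 x hx).mono hDI) ((hq.1 x hx).mono hDI) h

/-- A cell lies in a closed set as soon as its part over a dense set does. -/
theorem graphCell_subset_of_dense {F : Set ℂ} (hF : IsClosed F) {f g : ℝ → ℝ}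
    (hf : ContinuousOn f (Icc a b)) (hg : ContinuousOn g (Icc a b))
    (hfg : ∀ x ∈ Icc a b, f x ≤ g x) (hD : Icc a b ⊆ closure D) (hDI : D ⊆ Icc a b)
    (hsub : ∀ z ∈ graphCell a b f g, z.re ∈ D → z ∈ F) : graphCell a b f g ⊆ F := by
  intro z hz
  obtain ⟨r, hr, hm, hid, hre⟩ :=
    exists_retraction_graphCell (hz.1.1.trans hz.1.2) hf hg hfg
  have hcont : Continuous fun x : ℝ => r ((x : ℂ) + z.im * Complex.I) := by fun_prop
  have hmaps : MapsTo (fun x : ℝ => r ((x : ℂ) + z.im * Complex.I)) D F := by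
    intro x hx
    refine hsub _ (hm _) ?_
    rw [hre _ (by simpa using hDI hx)]
    simpa using hx
  have := map_mem_closure hcont (hD hz.1) hmaps
  rw [hF.closure_eq] at this
  simpa [Complex.re_add_im, hid z hz] using this

theorem gapCells_subset_of_dense {F : Set ℂ} (hF : IsClosed F) {l : List Band}
    (hl : l.Pairwise (Below D)) (hlp : ∀ c ∈ l, IsProper D (Icc a b) c)
    (hD : Icc a b ⊆ closure D) (hDI : D ⊆ Icc a b)
    (hsub : ∀ z ∈ gapCells a b l, z.re ∈ D → z ∈ F) : gapCells a b l ⊆ F := by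
  induction l with
  | nil => exact empty_subset _
  | cons p l ih =>
    cases l with
    | nil => exact empty_subset _
    | cons q l =>
      have hp := hlp p (by simp)
      have hq := hlp q (by simp)
      rw [List.forall_mem_cons] at hlp
      rw [List.pairwise_cons] at hl
      refine union_subset (graphCell_subset_of_dense hF hp.2.1 hq.1
        ((hl.1 q (by simp)).le_of_mem_Icc hD hDI hp hq) hD hDI fun z hz => hsub z (Or.inl hz)) ?_
      exact ih hl.2 hlp.2 fun z hz => hsub z (Or.inr hz)

/-- The gaps in a single vertical line are a finite disjoint union of extensors. -/
theorem hasExtensorPieces_union_gapCells_line {X : Set ℂ} (hX : HasExtensorPieces X) {s : ℝ}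
    (hXs : ∀ z ∈ X, z.re ≠ s) (l : List Band) (hl : l.Pairwise (Below {s}))
    (hlp : ∀ c ∈ l, IsProper {s} (Icc s s) c) : HasExtensorPieces (X ∪ gapCells s s l) := by
  induction l with
  | nil => simpa [gapCells] using hX
  | cons p l ih =>
    cases l with
    | nil => simpa [gapCells] using hX
    | cons q l =>
      have hp := hlp p (by simp)
      have hq := hlp q (by simp)
      have hlp' := (List.forall_mem_cons.1 hlp).2
      rw [List.pairwise_cons] at hl
      have hle := (hl.1 q (by simp)).le_of_mem_Icc (by simp) (by simp) hp hq
      rw [gapCells, union_comm (graphCell _ _ _ _), ← union_assoc]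
      refine (ih hl.2 hlp').union_disjoint (isAbsExtensor_graphCell le_rfl hp.2.1 hq.1 hle)
        (isClosed_graphCell le_rfl hp.2.1 hq.1 hle) (disjoint_left.2 fun z hz => ?_)
      have hzs : z.re = s := by simpa using hz.1
      rintro (hzX | hzl)
      · exact hXs z hzX hzs
      · have h1 := le_im_of_mem_gapCells hl.2 hlp' hzl hzs
        have h2 := hq.2.2 _ hzs
        have h3 := hz.2.2
        linarith

/-- The gaps over a strip can be attached from top to bottom. -/
theorem hasExtensorPieces_union_gapCells_strip {F : Set ℂ} (hF : IsCompact F)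
    (hFc : IsPreconnected Fᶜ) {X : Set ℂ} (hX : HasExtensorPieces X) (hXF : X ⊆ F) (hab : a < b)
    (hXa : ∀ z ∈ F, z.re = a → z ∈ X) (hXb : ∀ z ∈ F, z.re = b → z ∈ X)
    (hXab : ∀ z ∈ X, z.re ∉ Ioo a b) (l : List Band) (hl : l.Pairwise (Below (Ioo a b)))
    (hlp : ∀ c ∈ l, IsProper (Ioo a b) (Icc a b) c)
    (hlF : ∀ c ∈ l, ∀ z : ℂ, z.re ∈ Ioo a b → z.im ∈ c.fiber z.re → z ∉ F)
    (hgap : gapCells a b l ⊆ F) : HasExtensorPieces (X ∪ gapCells a b l) := by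
  have hcl : Icc a b ⊆ closure (Ioo a b) := (closure_Ioo hab.ne).ge
  induction l with
  | nil => simpa [gapCells] using hX
  | cons p l ih =>
    cases l with
    | nil => simpa [gapCells] using hX
    | cons q l =>
      have hp := hlp p (by simp)
      have hq := hlp q (by simp)
      have hlp' := (List.forall_mem_cons.1 hlp).2
      have hlF' := (List.forall_mem_cons.1 hlF).2
      rw [List.pairwise_cons] at hl
      have hle := (hl.1 q (by simp)).le_of_mem_Icc hcl Ioo_subset_Icc_self hp hq
      rw [gapCells, union_subset_iff] at hgap
      have hX' := ih hl.2 hlp' hlF' hgap.2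
      rw [gapCells, union_comm (graphCell _ _ _ _), ← union_assoc]
      set X' := X ∪ gapCells a b (q :: l) with hX'def
      set Q := graphCell a b p.2 q.1 with hQdef
      have hQ : IsAbsExtensor Q := isAbsExtensor_graphCell hab.le hp.2.1 hq.1 hle
      have ha : a ∈ Icc a b := left_mem_Icc.2 hab.le
      have hb : b ∈ Icc a b := right_mem_Icc.2 hab.le
      have hE₁ := isAbsExtensor_graphCell_fiber ha hle
      have hE₂ := isAbsExtensor_graphCell_fiber hb hle
      have hbound : ∀ z ∈ X', z.re ∈ Ioo a b → q.2 z.re ≤ z.im := by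
        rintro z (hz | hz) hzab
        · exact (hXab z hz hzab).elim
        · exact le_im_of_mem_gapCells hl.2 hlp' hz hzab
      refine hX'.union_of_separated hQ (isClosed_graphCell hab.le hp.2.1 hq.1 hle) hE₁ hE₂ ?_ ?_
      · ext z
        constructor
        · rintro ⟨hzQ, hzX⟩
          rcases hzQ.1.1.eq_or_lt with h | h
          · exact Or.inl ⟨hzQ, h.symm⟩
          rcases hzQ.1.2.eq_or_lt with h' | h'
          · exact Or.inr ⟨hzQ, h'⟩
          have h1 := hbound z hzX ⟨h, h'⟩
          have h2 := hq.2.2 _ ⟨h, h'⟩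
          have h3 := hzQ.2.2
          linarith
        · rintro (⟨hzQ, hz⟩ | ⟨hzQ, hz⟩)
          · exact ⟨hzQ, Or.inl (hXa z (hgap.1 hzQ) hz)⟩
          · exact ⟨hzQ, Or.inl (hXb z (hgap.1 hzQ) hz)⟩
      · intro K hKX hK hK₁ hK₂
        obtain ⟨m, hm⟩ := exists_between hab
        obtain ⟨y, hy⟩ := exists_between (hq.2.2 m hm)
        obtain ⟨u, hu⟩ := hE₁.nonempty
        obtain ⟨v, hv⟩ := hE₂.nonempty
        have hu' : u.re = a := hu.2
        have hv' : v.re = b := hv.2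
        refine not_meet_both_sides hF hFc (p := ⟨m, y⟩) (hlF q (by simp) ⟨m, y⟩ hm hy) hK
          hQ.isPreconnected (hKX.trans (union_subset hXF hgap.2)) hgap.1 ?_ ?_
          ⟨hK₁ hu, hu.1⟩ ⟨hK₂ hv, hv.1⟩ (hu' ▸ hm.1) (hv' ▸ hm.2)
        · rintro z hz (rfl : z.re = m)
          exact hy.2.trans_le (hbound z (hKX hz) hm)
        · rintro z hz (rfl : z.re = m)
          exact hz.2.2.trans_lt hy.1

theorem exists_le_im_le_of_mem_gapCells {l : List Band} {z : ℂ} (hz : z ∈ gapCells a b l) :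
    ∃ p ∈ l, ∃ q ∈ l, p.2 z.re ≤ z.im ∧ z.im ≤ q.1 z.re := by
  induction l with
  | nil => exact hz.elim
  | cons p l ih =>
    cases l with
    | nil => exact hz.elim
    | cons q l =>
      rcases hz with hz | hz
      · exact ⟨p, by simp, q, by simp, hz.2⟩
      · obtain ⟨c, hc, d, hd, h⟩ := ih hz
        exact ⟨c, List.mem_cons_of_mem _ hc, d, List.mem_cons_of_mem _ hd, h⟩

/-- Two bands that are disjoint over a connected set are comparable. -/
theorem comparable_of_disjoint (hD : IsPreconnected D) (hDI : D ⊆ I)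
    (hp : IsProper D I p) (hq : IsProper D I q)
    (h : ∀ x ∈ D, Disjoint (p.fiber x) (q.fiber x)) : Comparable D p q := by
  have hcase : ∀ x ∈ D, p.2 x ≤ q.1 x ∨ q.2 x ≤ p.1 x := by
    intro x hx
    by_contra! hn
    obtain ⟨y, hy1, hy2⟩ := exists_between (show max (p.1 x) (q.1 x) < min (p.2 x) (q.2 x) from
      max_lt (lt_min (hp.2.2 x hx) hn.2) (lt_min hn.1 (hq.2.2 x hx)))
    rw [max_lt_iff] at hy1
    rw [lt_min_iff] at hy2
    exact disjoint_left.1 (h x hx) ⟨hy1.1, hy2.1⟩ ⟨hy1.2, hy2.2⟩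
  by_contra hn
  simp only [Comparable, Below, not_or] at hn
  obtain ⟨hn1, hn2, -⟩ := hn
  push Not at hn1 hn2
  obtain ⟨u, hu, hu'⟩ := hn1
  obtain ⟨v, hv, hv'⟩ := hn2
  have hcont : ContinuousOn (fun x => q.1 x - p.1 x) D := (hq.1.mono hDI).sub (hp.1.mono hDI)
  obtain ⟨w, hw, hw0⟩ := hD.intermediate_value hu hv hcont (show (0 : ℝ) ∈ Icc _ _ from by
    have h1 := (hcase u hu).resolve_left (not_le.2 hu')
    have h2 := (hcase v hv).resolve_right (not_le.2 hv')
    have h3 := hq.2.2 u hu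
    have h4 := hp.2.2 v hv
    constructor <;> linarith)
  have h1 := hp.2.2 w hw
  have h2 := hq.2.2 w hw
  simp only at hw0
  rcases hcase w hw with h | h <;> linarith

/-- Over a connected set where the overlap pattern of finitely many convex sets is constant, their
union is a sorted list of disjoint bands. -/
theorem exists_sorted_of_convex {ι : Type*} [Finite ι] {M : ι → Set ℂ}
    (hc : ∀ i, Convex ℝ (M i)) (ho : ∀ i, IsOpen (M i)) (hb : ∀ i, Bornology.IsBounded (M i))
    (hD : D.Nonempty) (hDc : IsPreconnected D) (hDI : D ⊆ Icc a b) (hcl : Icc a b ⊆ closure D)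
    (hM : ∀ i j, D ⊆ Complex.re '' (M i ∩ M j) ∨ Disjoint D (Complex.re '' (M i ∩ M j))) :
    ∃ l : List Band, l.Pairwise (Below D) ∧ (∀ c ∈ l, IsProper D (Icc a b) c) ∧
      ∀ z : ℂ, z.re ∈ D → ((∃ c ∈ l, z.im ∈ c.fiber z.re) ↔ ∃ i, z ∈ M i) := by
  classical
  cases nonempty_fintype ι
  choose lo up hfib hcont using fun i => (hc i).exists_graph_bounds (ho i) (hb i)
  set s : Finset ι := Finset.univ.filter fun i => D ⊆ Complex.re '' M i with hs
  have hmem : ∀ c : Band, c ∈ s.toList.map (fun i => ((lo i, up i) : Band)) ↔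
      ∃ i, D ⊆ Complex.re '' M i ∧ ((lo i, up i) : Band) = c := by
    intro c
    simp [hs]
  have hproper : ∀ i, D ⊆ Complex.re '' M i → IsProper D (Icc a b) (lo i, up i) := by
    intro i hi
    have h := hcont i a b (hcl.trans (closure_mono hi))
    refine ⟨h.1, h.2, fun x hx => ?_⟩
    obtain ⟨z, hz, rfl⟩ := hi hx
    have := (hfib i z.re ⟨z, hz, rfl⟩ z.im).1 hz
    exact this.1.trans this.2
  obtain ⟨l, h1, h2, h3⟩ := exists_sorted (I := Icc a b) hD
    (s.toList.map fun i => ((lo i, up i) : Band)) (fun c hcl => by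
      obtain ⟨i, hi, rfl⟩ := (hmem c).1 hcl
      exact hproper i hi) (fun c hcl d hdl => by
      obtain ⟨i, hi, rfl⟩ := (hmem c).1 hcl
      obtain ⟨j, hj, rfl⟩ := (hmem d).1 hdl
      rcases hM i j with h | h
      · refine Or.inr (Or.inr fun x hx => ?_)
        obtain ⟨z, hz, rfl⟩ := h hx
        have h1 := (hfib i _ (hi hx) z.im).1 hz.1
        have h2 := (hfib j _ (hj hx) z.im).1 hz.2
        exact ⟨h1.1.trans h2.2, h2.1.trans h1.2⟩
      · refine comparable_of_disjoint hDc hDI (hproper i hi) (hproper j hj) fun x hx =>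
          disjoint_left.2 fun y hyi hyj => disjoint_left.1 h hx ⟨⟨x, y⟩, ⟨?_, ?_⟩, rfl⟩
        · exact (hfib i x (hi hx) y).2 hyi
        · exact (hfib j x (hj hx) y).2 hyj)
  refine ⟨l, h1, h2, fun z hz => ?_⟩
  rw [h3 _ hz]
  constructor
  · rintro ⟨c, hcl, hzc⟩
    obtain ⟨i, hi, rfl⟩ := (hmem c).1 hcl
    exact ⟨i, (hfib i _ (hi hz) z.im).2 hzc⟩
  · rintro ⟨i, hi⟩
    have hDi : D ⊆ Complex.re '' M i := by
      rcases hM i i with h | h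
      · rwa [inter_self] at h
      · rw [inter_self] at h
        exact (disjoint_left.1 h hz ⟨z, hi, rfl⟩).elim
    exact ⟨_, (hmem _).2 ⟨i, hDi, rfl⟩, (hfib i _ (hDi hz) z.im).1 hi⟩

/-- If moreover the convex sets cover the complement of `F` in a square around `F`, then `F` is
the union of the gaps between these bands. -/
theorem exists_gapCells {ι : Type*} [Finite ι] {M : ι → Set ℂ} {F : Set ℂ} {R : ℝ}
    (hF : IsClosed F) (hFR : ∀ z ∈ F, |z.im| < R - 1)
    (hMF : ∀ z, (∃ i, z ∈ M i) ↔ z ∉ F ∧ |z.re| < R ∧ |z.im| < R)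
    (hc : ∀ i, Convex ℝ (M i)) (ho : ∀ i, IsOpen (M i)) (hb : ∀ i, Bornology.IsBounded (M i))
    (hD : D.Nonempty) (hDc : IsPreconnected D) (hDI : D ⊆ Icc a b) (hcl : Icc a b ⊆ closure D)
    (hDR : ∀ x ∈ D, |x| < R)
    (hM : ∀ i j, D ⊆ Complex.re '' (M i ∩ M j) ∨ Disjoint D (Complex.re '' (M i ∩ M j))) :
    ∃ l : List Band, l.Pairwise (Below D) ∧ (∀ c ∈ l, IsProper D (Icc a b) c) ∧
      (∀ c ∈ l, ∀ z : ℂ, z.re ∈ D → z.im ∈ c.fiber z.re → z ∉ F) ∧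
      gapCells a b l ⊆ F ∧ ∀ z ∈ F, z.re ∈ D → z ∈ gapCells a b l := by
  obtain ⟨l, h1, h2, h3⟩ := exists_sorted_of_convex hc ho hb hD hDc hDI hcl hM
  have hfib : ∀ z : ℂ, z.re ∈ D → ((∃ c ∈ l, z.im ∈ c.fiber z.re) ↔ z ∉ F ∧ |z.im| < R) := by
    intro z hz
    rw [h3 z hz, hMF]
    simp [hDR _ hz]
  have hin : ∀ c ∈ l, ∀ x ∈ D, ∃ y ∈ Ioo (c.1 x) (c.2 x), |y| < R := by
    intro c hcl x hx
    obtain ⟨y, hy⟩ := exists_between ((h2 c hcl).2.2 x hx)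
    exact ⟨y, hy, ((hfib ⟨x, y⟩ hx).1 ⟨c, hcl, hy⟩).2⟩
  refine ⟨l, h1, h2, fun c hcl z hz hzc => ((hfib z hz).1 ⟨c, hcl, hzc⟩).1, ?_, ?_⟩
  · refine gapCells_subset_of_dense hF h1 h2 hcl hDI fun z hz hzD => ?_
    by_contra hzF
    obtain ⟨p, hp, q, hq, hpz, hqz⟩ := exists_le_im_le_of_mem_gapCells hz
    obtain ⟨y, hy, hyR⟩ := hin p hp _ hzD
    obtain ⟨y', hy', hyR'⟩ := hin q hq _ hzD
    obtain ⟨c, hcl, hzc⟩ := (hfib z hzD).2 ⟨hzF, abs_lt.2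
      ⟨(abs_lt.1 hyR).1.trans (hy.2.trans_le hpz), (hqz.trans_lt hy'.1).trans (abs_lt.1 hyR').2⟩⟩
    exact notMem_fiber_of_mem_gapCells h1 h2 hz hzD c hcl hzc
  · intro z hzF hzD
    have hzR := abs_lt.1 (hFR z hzF)
    have hout : ∀ y, R - 1 ≤ |y| → |y| < R → ∃ c ∈ l, y ∈ c.fiber z.re := fun y hy hy' =>
      (hfib ⟨z.re, y⟩ hzD).2 ⟨fun h => absurd (hFR _ h) (not_lt.2 hy), hy'⟩
    have hpos : 0 < R - 1 := (abs_nonneg _).trans_lt (hFR z hzF)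
    refine mem_gapCells (hDI hzD) (fun c hcl hzc => ((hfib z hzD).1 ⟨c, hcl, hzc⟩).1 hzF) h1 hzD
      ?_ ?_
    · obtain ⟨c, hcl, hc⟩ := hout (-(R - 1)) (by rw [abs_neg]; exact le_abs_self _)
        (by rw [abs_neg, abs_of_pos hpos]; linarith)
      exact ⟨c, hcl, hc.1.trans hzR.1⟩
    · obtain ⟨c, hcl, hc⟩ := hout (R - 1) (le_abs_self _) (by rw [abs_of_pos hpos]; linarith)
      exact ⟨c, hcl, hzR.2.trans hc.2⟩

end Band

/-- An interval avoiding the endpoints of an order-connected set lies inside or outside of it. -/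
theorem Set.OrdConnected.Ioo_subset_or_disjoint {A : Set ℝ} (hA : A.OrdConnected) {s t : ℝ}
    (hinf : sInf A ∉ Ioo s t) (hsup : sSup A ∉ Ioo s t) : Ioo s t ⊆ A ∨ Disjoint (Ioo s t) A := by
  by_contra! hn
  obtain ⟨y, hy, hyA⟩ := not_subset.1 hn.1
  obtain ⟨x, hx, hxA⟩ := not_disjoint_iff.1 hn.2
  rcases lt_or_ge x y with hxy | hxy
  · have hub : ∀ w ∈ A, w ≤ y := fun w hw => by
      by_contra! h
      exact hyA (hA.out hxA hw ⟨hxy.le, h.le⟩)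
    exact hsup ⟨hx.1.trans_le (le_csSup ⟨y, hub⟩ hxA), (csSup_le ⟨x, hxA⟩ hub).trans_lt hy.2⟩
  · have hlb : ∀ w ∈ A, y ≤ w := fun w hw => by
      by_contra! h
      exact hyA (hA.out hw hxA ⟨h.le, hxy⟩)
    exact hinf ⟨hy.1.trans_le (le_csInf ⟨x, hxA⟩ hlb), (csInf_le ⟨y, hlb⟩ hxA).trans_lt hx.2⟩

/-- A compact plane set whose complement is connected and a finite union of open convex sets is a
finite disjoint union of absolute extensors. -/
theorem hasExtensorPieces_of_isPreconnected_compl {ι : Type*} [Finite ι] {N : ι → Set ℂ}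
    {F : Set ℂ} (hF : IsCompact F) (hFc : IsPreconnected Fᶜ) (hc : ∀ i, Convex ℝ (N i))
    (ho : ∀ i, IsOpen (N i)) (hN : Fᶜ = ⋃ i, N i) : HasExtensorPieces F := by
  classical
  cases nonempty_fintype ι
  obtain ⟨r, hr⟩ := hF.isBounded.exists_norm_le
  set R : ℝ := max r 0 + 2 with hRdef
  have hFr : ∀ z ∈ F, ‖z‖ < R - 1 := fun z hz => by
    have := (hr z hz).trans (le_max_left r 0)
    linarith
  have hR : 0 < R := by positivity
  have hFre : ∀ z ∈ F, |z.re| < R := fun z hz =>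
    (Complex.abs_re_le_norm z).trans_lt ((hFr z hz).trans (by linarith))
  have hFim : ∀ z ∈ F, |z.im| < R - 1 := fun z hz => (Complex.abs_im_le_norm z).trans_lt (hFr z hz)
  set M : ι → Set ℂ := fun i => N i ∩ (Ioo (-R) R ×ℂ Ioo (-R) R) with hMdef
  have hMc : ∀ i, Convex ℝ (M i) := fun i =>
    (hc i).inter (((convex_Ioo _ _).linear_preimage Complex.reLm).inter
      ((convex_Ioo _ _).linear_preimage Complex.imLm))
  have hMo : ∀ i, IsOpen (M i) := fun i => (ho i).inter (isOpen_Ioo.reProdIm isOpen_Ioo)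
  have hMb : ∀ i, Bornology.IsBounded (M i) := fun i =>
    ((isBounded_Ioo _ _).reProdIm (isBounded_Ioo _ _)).subset inter_subset_right
  have hMF : ∀ z, (∃ i, z ∈ M i) ↔ z ∉ F ∧ |z.re| < R ∧ |z.im| < R := by
    intro z
    rw [← mem_compl_iff, hN, mem_iUnion, abs_lt, abs_lt]
    simp only [hMdef, mem_inter_iff, Complex.mem_reProdIm, mem_Ioo, exists_and_right]
  have hline : ∀ T : Finset ℝ, HasExtensorPieces (F ∩ Complex.re ⁻¹' T) := by
    intro T
    induction T using Finset.induction_on with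
    | empty => simpa using HasExtensorPieces.empty
    | insert s T hsT ih =>
      by_cases hs : |s| < R
      · obtain ⟨l, h1, h2, -, h4, h5⟩ := Band.exists_gapCells (D := {s}) (a := s) (b := s)
          hF.isClosed hFim hMF hMc hMo hMb (singleton_nonempty s) isPreconnected_singleton
          (by simp) (by simp) (by simpa using hs) (fun i j => by
            rw [singleton_subset_iff, disjoint_singleton_left]
            exact em _)
        convert Band.hasExtensorPieces_union_gapCells_line ih (s := s)
          (fun z hz h => hsT (h ▸ hz.2)) l h1 h2 using 1
        ext z
        simp only [mem_inter_iff, mem_preimage, Finset.coe_insert, mem_insert_iff, mem_union]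
        constructor
        · rintro ⟨hz, h | h⟩
          exacts [Or.inr (h5 z hz h), Or.inl ⟨hz, h⟩]
        · rintro (h | h)
          · exact ⟨h.1, Or.inr h.2⟩
          · exact ⟨h4 h, Or.inl (by simpa using Band.mem_Icc_of_mem_gapCells h)⟩
      · convert ih using 1
        ext z
        simp only [mem_inter_iff, mem_preimage, Finset.coe_insert, mem_insert_iff,
          and_congr_right_iff, or_iff_right_iff_imp]
        rintro hz rfl
        exact (hs (hFre z hz)).elim
  set A : ι × ι → Set ℝ := fun p => Complex.re '' (M p.1 ∩ M p.2) with hA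
  have hAc : ∀ p, (A p).OrdConnected := fun p =>
    (((hMc p.1).inter (hMc p.2)).linear_image Complex.reLm).ordConnected
  set S : Finset ℝ := (insert (-R) (insert R (Finset.univ.image (fun p => sInf (A p)) ∪
    Finset.univ.image fun p => sSup (A p)))).filter (· ∈ Icc (-R) R) with hS
  have hSR : ∀ s ∈ S, s ∈ Icc (-R) R := fun s hs => (Finset.mem_filter.1 hs).2
  have hlS : -R ∈ S := by simp [hS, hR.le]
  have hrS : R ∈ S := by simp [hS, hR.le]
  have hinf : ∀ p, sInf (A p) ∈ Icc (-R) R → sInf (A p) ∈ S := by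
    intro p hp
    refine Finset.mem_filter.2 ⟨?_, hp⟩
    simp only [Finset.mem_insert, Finset.mem_union, Finset.mem_image, Finset.mem_univ, true_and]
    exact Or.inr (Or.inr (Or.inl ⟨p, rfl⟩))
  have hsup : ∀ p, sSup (A p) ∈ Icc (-R) R → sSup (A p) ∈ S := by
    intro p hp
    refine Finset.mem_filter.2 ⟨?_, hp⟩
    simp only [Finset.mem_insert, Finset.mem_union, Finset.mem_image, Finset.mem_univ, true_and]
    exact Or.inr (Or.inr (Or.inr ⟨p, rfl⟩))
  have hstrip : ∀ (n : ℕ) (t : ℝ), (S.filter (· < t)).card = n → t ∈ S →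
      HasExtensorPieces (F ∩ Complex.re ⁻¹' (S ∪ Iic t)) := by
    intro n
    induction n using Nat.strong_induction_on with
    | _ n ih =>
      intro t hn ht
      rcases (S.filter (· < t)).eq_empty_or_nonempty with he | hne
      · have htR : t ≤ -R := by
          by_contra! h
          exact Finset.notMem_empty _ (he ▸ Finset.mem_filter.2 ⟨hlS, h⟩)
        convert hline S using 1
        ext z
        simp only [mem_inter_iff, mem_preimage, mem_union, mem_Iic, and_congr_right_iff,
          or_iff_left_iff_imp]
        intro hz h
        have := (abs_lt.1 (hFre z hz)).1
        linarith
      · obtain ⟨s, hs, hmax⟩ := (S.filter (· < t)).exists_max_image id hne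
        obtain ⟨hsS, hst⟩ := Finset.mem_filter.1 hs
        have hgap : ∀ x ∈ S, x ∉ Ioo s t := fun x hx hxst =>
          absurd (hmax x (Finset.mem_filter.2 ⟨hx, hxst.2⟩)) (not_le.2 hxst.1)
        have hsub : Ioo s t ⊆ Ioo (-R) R := Ioo_subset_Ioo (hSR s hsS).1 (hSR t ht).2
        have hX := ih _ (by
          rw [← hn]
          refine Finset.card_lt_card (Finset.ssubset_iff_of_subset ?_ |>.2 ⟨s, hs, by simp⟩)
          exact Finset.monotone_filter_right S fun x _ (hx : x < s) => hx.trans hst) s rfl hsS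
        obtain ⟨l, h1, h2, h3, h4, h5⟩ := Band.exists_gapCells (D := Ioo s t) (a := s) (b := t)
          hF.isClosed hFim hMF hMc hMo hMb (nonempty_Ioo.2 hst) isPreconnected_Ioo
          Ioo_subset_Icc_self (closure_Ioo hst.ne).ge (fun x hx => abs_lt.2 (hsub hx))
          fun i j => (hAc (i, j)).Ioo_subset_or_disjoint
            (fun h => hgap _ (hinf (i, j) (Ioo_subset_Icc_self (hsub h))) h)
            (fun h => hgap _ (hsup (i, j) (Ioo_subset_Icc_self (hsub h))) h)
        convert Band.hasExtensorPieces_union_gapCells_strip hF hFc hX inter_subset_left hst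
          (fun z hz h => ⟨hz, Or.inr h.le⟩) (fun z hz h => ⟨hz, Or.inl (h ▸ ht)⟩)
          (fun z hz h => hz.2.elim (fun hzS => hgap _ hzS h) fun hzs => absurd h.1 (not_lt.2 hzs))
          l h1 h2 h3 h4 using 1
        ext z
        constructor
        · rintro ⟨hz, h | h⟩
          · exact Or.inl ⟨hz, Or.inl h⟩
          · rcases le_or_gt z.re s with hs | hs
            · exact Or.inl ⟨hz, Or.inr hs⟩
            · rcases (show z.re ≤ t from h).eq_or_lt with hzt | hzt
              · exact Or.inl ⟨hz, Or.inl (by simpa [hzt] using ht)⟩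
              · exact Or.inr (h5 z hz ⟨hs, hzt⟩)
        · rintro (⟨hz, h | h⟩ | h)
          · exact ⟨hz, Or.inl h⟩
          · exact ⟨hz, Or.inr (le_trans h hst.le)⟩
          · exact ⟨h4 h, Or.inr (Band.mem_Icc_of_mem_gapCells h).2⟩
  convert hstrip _ R rfl hrS using 1
  refine (inter_eq_left.2 fun z hz => Or.inr ?_).symm
  exact (abs_lt.1 (hFre z hz)).2.le

theorem one_lt_rank_plane : 1 < Module.rank ℝ Plane := by
  rw [← Module.finrank_eq_rank, finrank_euclideanSpace_fin]
  norm_num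

theorem isPreconnected_compl_closedBall {r : ℝ} (hr : 0 ≤ r) :
    IsPreconnected (closedBall (0 : Plane) r)ᶜ := by
  have h := ((isPreconnected_sphere one_lt_rank_plane 0 1).prod (isPreconnected_Ioi (a := r))).image
    (fun p : Plane × ℝ => p.2 • p.1) (by fun_prop)
  convert h using 1
  ext x
  simp only [mem_compl_iff, mem_closedBall_zero_iff, not_le, mem_image, mem_prod,
    mem_sphere_zero_iff_norm, mem_Ioi, Prod.exists]
  constructor
  · intro hx
    have hx0 : ‖x‖ ≠ 0 := (hr.trans_lt hx).ne'
    exact ⟨‖x‖⁻¹ • x, ‖x‖, ⟨by simp [norm_smul, hx0], hx⟩, by simp [smul_smul, hx0]⟩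
  · rintro ⟨u, s, ⟨hu, hs⟩, rfl⟩
    rw [norm_smul, hu, mul_one, Real.norm_of_nonneg (hr.trans hs.le)]
    exact hs

/-- The complement of a compact plane set has exactly one unbounded component. -/
theorem IsCompact.exists_unbounded_component {B : Set Plane} (hB : IsCompact B) :
    ∃ r : ℝ, ∃ p : Plane, (closedBall 0 r)ᶜ ⊆ connectedComponentIn Bᶜ p ∧
      {x | x ∉ B ∧ ¬Bornology.IsBounded (connectedComponentIn Bᶜ x)} =
        connectedComponentIn Bᶜ p := by
  obtain ⟨r₀, hr₀⟩ := hB.isBounded.exists_norm_le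
  set r := max r₀ 0
  have hr : ∀ x ∈ B, ‖x‖ ≤ r := fun x hx => (hr₀ x hx).trans (le_max_left _ _)
  obtain ⟨p, hp⟩ := NormedSpace.exists_lt_norm ℝ Plane r
  have hpO : p ∈ (closedBall (0 : Plane) r)ᶜ := by simpa using hp
  have hO : (closedBall (0 : Plane) r)ᶜ ⊆ connectedComponentIn Bᶜ p :=
    (isPreconnected_compl_closedBall (le_max_right _ _)).subset_connectedComponentIn hpO
      fun x hx hxB => hx (mem_closedBall_zero_iff.2 (hr x hxB))
  have hunb : ¬Bornology.IsBounded (connectedComponentIn Bᶜ p) := fun h =>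
    NormedSpace.unbounded_univ ℝ Plane <| by
      have := (isBounded_closedBall (x := (0 : Plane)) (r := r)).union (h.subset hO)
      rwa [union_compl_self] at this
  refine ⟨r, p, hO, Subset.antisymm ?_ ?_⟩
  · rintro x ⟨hxB, hx⟩
    obtain ⟨y, hy, hyr⟩ := not_subset.1 fun h => hx (isBounded_closedBall.subset h)
    rw [connectedComponentIn_eq (hO hyr), ← connectedComponentIn_eq hy]
    exact mem_connectedComponentIn hxB
  · intro x hx
    exact ⟨connectedComponentIn_subset _ _ hx, by rwa [← connectedComponentIn_eq hx]⟩

theorem IsPreconnected.thickening {E : Set Plane} (hE : IsPreconnected E) (δ : ℝ) :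
    IsPreconnected (thickening δ E) := by
  convert (hE.prod (isPreconnected_ball (x := (0 : Plane)) (r := δ))).image
    (fun p : Plane × Plane => p.1 + p.2) (by fun_prop) using 1
  ext x
  simp only [mem_thickening_iff, mem_image, mem_prod, mem_ball_zero_iff, Prod.exists]
  constructor
  · rintro ⟨z, hz, hxz⟩
    exact ⟨z, x - z, ⟨hz, by rwa [← dist_eq_norm]⟩, by simp⟩
  · rintro ⟨z, v, ⟨hz, hv⟩, rfl⟩
    exact ⟨z, hz, by simpa [dist_eq_norm] using hv⟩

theorem exists_ne_zero_apply_eq_zero (v : Plane) : ∃ f : Plane →ₗ[ℝ] ℝ, f ≠ 0 ∧ f v = 0 := by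
  obtain ⟨f, hf, h⟩ := Submodule.exists_le_ker_of_lt_top (ℝ ∙ v) (lt_top_iff_ne_top.2 fun h => by
    have h1 := finrank_span_le_card (R := ℝ) ({v} : Set Plane)
    rw [h, finrank_top, finrank_euclideanSpace_fin, toFinset_singleton,
      Finset.card_singleton] at h1
    norm_num at h1)
  exact ⟨f, hf, h (Submodule.mem_span_singleton_self v)⟩

theorem dense_compl_hyperplane {f : Plane →ₗ[ℝ] ℝ} (hf : f ≠ 0) (c : ℝ) :
    Dense {x | f x ≠ c} := by
  intro x
  by_cases hx : f x = c
  · obtain ⟨u, hu⟩ := DFunLike.ne_iff.1 hf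
    have hcont : Continuous fun t : ℝ => x + t • u := by fun_prop
    have := map_mem_closure hcont (dense_compl_singleton (0 : ℝ) 0) (t := {x | f x ≠ c})
      fun t ht => by simpa [hx] using ⟨ht, hu⟩
    simpa using this
  · exact subset_closure hx

/-- The neighborhood of a component of the complement of finitely many segments is a finite union
of open convex sets. -/
theorem exists_convex_cover_thickening {n : ℕ} {f : Fin n → Plane →ₗ[ℝ] ℝ} (hf : ∀ i, f i ≠ 0)
    {c : Fin n → ℝ} {B : Set Plane} (hB : IsClosed B) (hBf : ∀ x ∈ B, ∃ i, f i x = c i)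
    (p : Plane) (δ : ℝ) :
    ∃ (ι : Type) (_ : Finite ι) (N : ι → Set Plane), (∀ i, Convex ℝ (N i)) ∧
      (∀ i, IsOpen (N i)) ∧ thickening δ (connectedComponentIn Bᶜ p) = ⋃ i, N i := by
  classical
  set E := connectedComponentIn Bᶜ p
  set cell : (Fin n → Bool) → Set Plane := fun σ =>
    ⋂ i, f i ⁻¹' (if σ i then Ioi (c i) else Iio (c i)) with hcell
  have hconv : ∀ σ, Convex ℝ (cell σ) := fun σ => convex_iInter fun i => by
    apply Convex.linear_preimage
    split_ifs
    exacts [convex_Ioi _, convex_Iio _]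
  have hdisj : ∀ σ, cell σ ⊆ Bᶜ := by
    intro σ x hx hxB
    obtain ⟨i, hi⟩ := hBf x hxB
    have := mem_iInter.1 hx i
    split_ifs at this <;> simp [hi] at this
  have hfc : ∀ i, Continuous (f i) := fun i => (f i).continuous_of_finiteDimensional
  have hdense : Dense (⋂ i, {x | f i x ≠ c i}) := dense_iInter_of_isOpen
    (fun i => isOpen_ne_fun (hfc i) continuous_const) fun i => dense_compl_hyperplane (hf i) _
  have hEo : IsOpen E := hB.isOpen_compl.connectedComponentIn
  refine ⟨{σ // cell σ ⊆ E}, inferInstance, fun σ => thickening δ (cell σ),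
    fun σ => (hconv σ).thickening δ, fun σ => isOpen_thickening, ?_⟩
  rw [← thickening_iUnion]
  refine Subset.antisymm ?_ (thickening_subset_of_subset _ (iUnion_subset fun σ => σ.2))
  rw [← thickening_closure (s := ⋃ _, _)]
  refine thickening_subset_of_subset _ ((hdense.open_subset_closure_inter hEo).trans
    (closure_mono ?_))
  rintro x ⟨hxE, hx⟩
  have hxσ : x ∈ cell fun i => decide (c i < f i x) := mem_iInter.2 fun i => by
    by_cases h : c i < f i x
    · simp [h]
    · simpa [h] using lt_of_le_of_ne (not_lt.1 h) (mem_iInter.1 hx i)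
  refine mem_iUnion.2 ⟨⟨_, ?_⟩, hxσ⟩
  have := (hconv fun i => decide (c i < f i x)).isPreconnected.subset_connectedComponentIn hxσ
    (hdisj _)
  rwa [← connectedComponentIn_eq hxE] at this

namespace SimplePolygon

variable (P : SimplePolygon)

theorem isCompact_bdryCurve : IsCompact P.bdryCurve :=
  isCompact_Icc.image P.continuous

theorem compl_region : P.regionᶜ =
    {x | x ∉ P.bdryCurve ∧ ¬Bornology.IsBounded (connectedComponentIn P.bdryCurveᶜ x)} := by
  ext x
  simp only [region, mem_compl_iff, mem_union, mem_ofPred_eq]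
  tauto

theorem compl_freeSpace : P.freeSpaceᶜ = thickening 1 P.regionᶜ := by
  ext x
  simp only [freeSpace, mem_compl_iff, mem_ofPred_eq, not_subset, mem_thickening_iff, mem_ball']
  exact exists_congr fun y => and_comm

theorem exists_lines : ∃ (n : ℕ) (f : Fin n → Plane →ₗ[ℝ] ℝ) (c : Fin n → ℝ),
    (∀ i, f i ≠ 0) ∧ ∀ x ∈ P.bdryCurve, ∃ i, f i x = c i := by
  obtain ⟨n, t, ht0, ht1, ht, hP⟩ := P.polygonal
  choose f hf0 hf using fun i : Fin n =>
    exists_ne_zero_apply_eq_zero (P.toFun (t i.succ) - P.toFun (t i.castSucc))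
  refine ⟨n, f, fun i => f i (P.toFun (t i.castSucc)), hf0, ?_⟩
  rintro _ ⟨s, hs, rfl⟩
  have hcover : ∀ j : Fin (n + 1), s ≤ t j → s = t 0 ∨
      ∃ i : Fin n, s ∈ Icc (t i.castSucc) (t i.succ) := by
    intro j
    induction j using Fin.induction with
    | zero => exact fun h => Or.inl (le_antisymm h (ht0 ▸ hs.1))
    | succ i ih =>
      intro h
      rcases le_total s (t i.castSucc) with h' | h'
      exacts [ih h', Or.inr ⟨i, h', h⟩]
  have hmem : ∃ i : Fin n, s ∈ Icc (t i.castSucc) (t i.succ) := by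
    rcases hcover (Fin.last n) (ht1 ▸ hs.2) with rfl | h
    · cases n with
      | zero => simp [ht0] at ht1
      | succ n => exact ⟨0, le_rfl, (ht (Fin.castSucc_lt_succ (i := 0))).le⟩
    · exact h
  obtain ⟨i, hi⟩ := hmem
  exact ⟨i, by rw [hP i s hi, map_add, map_smul, hf, smul_zero, add_zero]⟩

theorem isCompact_freeSpace : IsCompact P.freeSpace := by
  obtain ⟨r, p, hr, hp⟩ := P.isCompact_bdryCurve.exists_unbounded_component
  refine isCompact_of_isClosed_isBounded ?_ ?_
  · rw [← isOpen_compl_iff, compl_freeSpace]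
    exact isOpen_thickening
  · refine (isBounded_closedBall (x := (0 : Plane)) (r := r)).subset ?_
    rw [← compl_subset_compl, compl_freeSpace, compl_region, hp]
    exact hr.trans (self_subset_thickening one_pos _)

theorem isPreconnected_compl_freeSpace : IsPreconnected P.freeSpaceᶜ := by
  obtain ⟨r, p, -, hp⟩ := P.isCompact_bdryCurve.exists_unbounded_component
  rw [compl_freeSpace, compl_region, hp]
  exact isPreconnected_connectedComponentIn.thickening 1

theorem exists_convex_cover_compl_freeSpace : ∃ (ι : Type) (_ : Finite ι) (N : ι → Set Plane),
    (∀ i, Convex ℝ (N i)) ∧ (∀ i, IsOpen (N i)) ∧ P.freeSpaceᶜ = ⋃ i, N i := by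
  obtain ⟨r, p, -, hp⟩ := P.isCompact_bdryCurve.exists_unbounded_component
  obtain ⟨n, f, c, hf, hc⟩ := P.exists_lines
  rw [compl_freeSpace, compl_region, hp]
  exact exists_convex_cover_thickening hf P.isCompact_bdryCurve.isClosed hc p 1

end SimplePolygon

/-- Every connected component of the free space of a simple polygon is simply connected. -/
theorem freeSpace_components_simplyConnected (P : SimplePolygon) (C : Set Plane)
    (hC : ∃ x ∈ P.freeSpace, C = connectedComponentIn P.freeSpace x) :
    SimplyConnectedSpace C := by
  obtain ⟨x, hx, rfl⟩ := hC
  obtain ⟨ι, _, N, hNc, hNo, hN⟩ := P.exists_convex_cover_compl_freeSpace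
  set e := Complex.orthonormalBasisOneI.repr
  have hpieces : HasExtensorPieces (e ⁻¹' P.freeSpace) := by
    refine hasExtensorPieces_of_isPreconnected_compl (N := fun i => e ⁻¹' N i)
      (e.toHomeomorph.isCompact_preimage.2 P.isCompact_freeSpace)
      (e.toHomeomorph.isPreconnected_preimage.2 P.isPreconnected_compl_freeSpace)
      (fun i => (hNc i).linear_preimage e.toLinearEquiv.toLinearMap)
      (fun i => (hNo i).preimage e.continuous) ?_
    rw [← preimage_compl, hN, preimage_iUnion]
  have hz : e.symm x ∈ e ⁻¹' P.freeSpace := by simpa using hx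
  have := (hpieces.isAbsExtensor_connectedComponentIn hz).contractibleSpace
  have himage : e.toHomeomorph '' connectedComponentIn (e ⁻¹' P.freeSpace) (e.symm x) =
      connectedComponentIn P.freeSpace x := by
    rw [e.toHomeomorph.image_connectedComponentIn hz]
    congr 1
    · exact image_preimage_eq _ e.surjective
    · exact e.apply_symm_apply x
  rw [← himage]
  have := (e.toHomeomorph.image
    (connectedComponentIn (e ⁻¹' P.freeSpace) (e.symm x))).symm.contractibleSpace
  infer_instance
end
end

section
/- Let W ⊆ ℝ² be a simple polygon with free space F, let x ∈ F, and let C be the connected component of F containing x. Then the set D₂(x) ∩ C is connected. -/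
open Metric Set

noncomputable section

theorem isPreconnected_compl_closedBall_s1 {E : Type*} [NormedAddCommGroup E] [NormedSpace ℝ E]
    (h : 1 < Module.rank ℝ E) {R : ℝ} (hR : 0 ≤ R) : IsPreconnected (closedBall (0 : E) R)ᶜ := by
  have hS : IsPreconnected (sphere (0 : E) 1) := isPreconnected_sphere h 0 1
  have himg : (closedBall (0 : E) R)ᶜ = (fun p : ℝ × E => p.1 • p.2) '' (Ioi R ×ˢ sphere 0 1) := by
    ext z
    simp only [mem_compl_iff, mem_closedBall, dist_zero_right, not_le, mem_image, mem_prod, mem_Ioi,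
      mem_sphere, Prod.exists]
    constructor
    · intro hz
      have hz0 : ‖z‖ ≠ 0 := (hR.trans_lt hz).ne'
      exact ⟨‖z‖, ‖z‖⁻¹ • z, ⟨hz, by simp [norm_smul, hz0]⟩, smul_inv_smul₀ hz0 z⟩
    · rintro ⟨r, s, ⟨hr, hs⟩, rfl⟩
      rw [norm_smul, hs, mul_one, Real.norm_of_nonneg (hR.trans hr.le)]
      exact hr
  rw [himg]
  exact (isPreconnected_Ioi.prod hS).image _ (by fun_prop)

/-- The imaginary parts of two continuous logarithms of the same function on a preconnected set
differ by a constant. -/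
theorem IsPreconnected.im_sub_eq_of_exp_eq {X : Type*} [TopologicalSpace X] {S : Set X}
    (hS : IsPreconnected S) {f g : X → ℂ} (hf : ContinuousOn f S) (hg : ContinuousOn g S)
    (hfg : ∀ z ∈ S, Complex.exp (f z) = Complex.exp (g z)) {a b : X} (ha : a ∈ S) (hb : b ∈ S) :
    (f a).im - (g a).im = (f b).im - (g b).im := by
  have hdisc : IsDiscrete (range ((↑) : ℤ → ℝ)) :=
    Int.isClosedEmbedding_coe_real.isInducing.isDiscrete_range
  have hcont : ContinuousOn (fun z => ((f z).im - (g z).im) / (2 * Real.pi)) S :=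
    ((Complex.continuous_im.comp_continuousOn hf).sub
      (Complex.continuous_im.comp_continuousOn hg)).div_const _
  obtain ⟨y, -, hy⟩ := hS.eqOn_const_of_mapsTo hdisc hcont (fun z hz => by
    obtain ⟨n, hn⟩ := Complex.exp_eq_exp_iff_exists_int.1 (hfg z hz)
    refine ⟨n, ?_⟩
    have := Real.pi_ne_zero
    simp [hn]) (range_nonempty _)
  have := (hy ha).trans (hy hb).symm
  have hpi := Real.pi_ne_zero
  field_simp at this
  exact this

/-- If `U` is connected and stays away from `K`, then for `u, v ∈ U` the function
`(z - u) / (z - v)` has a continuous logarithm on `K`. -/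
theorem exists_continuousOn_log_div {K U : Set ℂ} {δ : ℝ} (hδ : 0 < δ)
    (hKU : ∀ z ∈ K, ∀ u ∈ U, δ ≤ dist z u) (hU : IsPreconnected U) {u v : ℂ}
    (hu : u ∈ U) (hv : v ∈ U) :
    ∃ θ : ℂ → ℂ, ContinuousOn θ K ∧ ∀ z ∈ K, Complex.exp (θ z) = (z - u) / (z - v) := by
  have hne : ∀ z ∈ K, ∀ u ∈ U, z - u ≠ 0 := fun z hz u hu => by
    rw [← norm_ne_zero_iff, ← dist_eq_norm]
    exact (hδ.trans_le (hKU z hz u hu)).ne'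
  refine hU.induction₂ (fun u v => ∃ θ : ℂ → ℂ, ContinuousOn θ K ∧
    ∀ z ∈ K, Complex.exp (θ z) = (z - u) / (z - v)) ?_ ?_ ?_ hu hv
  · intro a ha
    filter_upwards [mem_nhdsWithin_of_mem_nhds (ball_mem_nhds a hδ), self_mem_nhdsWithin]
      with b hb hbU
    have hslit : ∀ z ∈ K, (z - a) / (z - b) ∈ Complex.slitPlane := fun z hz => by
      have h0 := hne z hz b hbU
      have : (z - a) / (z - b) = 1 + (b - a) / (z - b) := by field_simp; ring
      rw [this]
      apply Complex.mem_slitPlane_of_norm_lt_one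
      rw [norm_div, div_lt_one (norm_pos_iff.2 h0), ← dist_eq_norm, ← dist_eq_norm]
      exact (mem_ball.1 hb).trans_le (hKU z hz b hbU)
    refine ⟨fun z => Complex.log ((z - a) / (z - b)), ?_, fun z hz =>
      Complex.exp_log (Complex.slitPlane_ne_zero (hslit z hz))⟩
    exact ContinuousOn.clog (ContinuousOn.div (by fun_prop) (by fun_prop)
      fun z hz => hne z hz b hbU) hslit
  · rintro a b c ha hb hc ⟨θ, hθ, hθe⟩ ⟨η, hη, hηe⟩
    refine ⟨fun z => θ z + η z, hθ.add hη, fun z hz => ?_⟩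
    have h0 := hne z hz b hb
    have h1 := hne z hz c hc
    rw [Complex.exp_add, hθe z hz, hηe z hz]
    field_simp
  · rintro a b ha hb ⟨θ, hθ, hθe⟩
    refine ⟨fun z => -θ z, hθ.neg, fun z hz => ?_⟩
    rw [Complex.exp_neg, hθe z hz, inv_div]

theorem div_mem_slitPlane_of_dist {z u v : ℂ} (hu : 1 ≤ dist z u) (hv : 1 ≤ dist z v)
    (huv : dist u v < 2) : (z - u) / (z - v) ∈ Complex.slitPlane := by
  by_contra hw
  rw [Complex.mem_slitPlane_iff, not_or, not_lt, not_ne_iff] at hw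
  obtain ⟨c, hc0, hc⟩ : ∃ c : ℝ, 0 ≤ c ∧ (z - u) / (z - v) = -(c : ℂ) :=
    ⟨-((z - u) / (z - v)).re, by linarith, by apply Complex.ext <;> simp [hw.2]⟩
  have h0 : z - v ≠ 0 := by
    rw [← norm_ne_zero_iff, ← dist_eq_norm]; linarith
  rw [div_eq_iff h0] at hc
  have h1 : dist z u = c * dist z v := by
    rw [dist_eq_norm, hc, norm_mul, norm_neg, Complex.norm_real, Real.norm_of_nonneg hc0,
      dist_eq_norm]
  have h2 : dist u v = (1 + c) * dist z v := by
    have : u - v = ((1 + c : ℝ) : ℂ) * (z - v) := by push_cast; linear_combination -hc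
    rw [dist_eq_norm, this, norm_mul, Complex.norm_real, Real.norm_of_nonneg (by linarith),
      dist_eq_norm]
  linarith

/-- Let `0` and `d` lie in a connected set at distance at least `1` from the connected set `U`.
Then a segment of length less than `2` with endpoints in `U` cannot cross the segment from
`0` to `d`. The hypotheses `h0`, `hd` say that the crossing with the real axis lies in `(0, d)`. -/
theorem not_crossing {U S : Set ℂ} (hU : IsPreconnected U) (hS : IsPreconnected S) {d : ℝ}
    (hd0 : 0 < d) (hd2 : d < 2) (h0S : (0 : ℂ) ∈ S) (hdS : (d : ℂ) ∈ S)
    (hSU : ∀ s ∈ S, ∀ u ∈ U, 1 ≤ dist s u) {u v : ℂ} (hu : u ∈ U) (hv : v ∈ U)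
    (huv : dist u v < 2) (huim : 0 < u.im) (hvim : v.im < 0)
    (h0 : 0 < u.im * v.re - u.re * v.im)
    (hd : u.im * v.re - u.re * v.im < d * (u.im - v.im)) : False := by
  set I : Set ℂ := Complex.ofReal '' Icc 0 d
  have hIc : IsPreconnected I := isPreconnected_Icc.image _ Complex.continuous_ofReal.continuousOn
  have hIU : ∀ z ∈ I, ∀ a ∈ U, 1 - d / 2 ≤ dist z a := by
    rintro _ ⟨r, ⟨hr0, hrd⟩, rfl⟩ a ha
    have e0 := hSU _ h0S a ha
    have e1 := hSU _ hdS a ha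
    have f0 : dist (0 : ℂ) r = r := by simp [abs_of_nonneg hr0]
    have f1 : dist (d : ℂ) r = d - r := by
      rw [Complex.dist_of_im_eq (by simp)]
      simp [Real.dist_eq, abs_of_nonneg (sub_nonneg.2 hrd)]
    have t0 := dist_triangle (0 : ℂ) r a
    have t1 := dist_triangle (d : ℂ) r a
    linarith
  obtain ⟨θ, hθ, hθe⟩ := exists_continuousOn_log_div (K := S ∪ I) (δ := 1 - d / 2) (by linarith)
    (by
      rintro z (hz | hz) a ha
      · linarith [hSU z hz a ha]
      · exact hIU z hz a ha) hU hu hv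
  set w : ℂ → ℂ := fun z => (z - u) / (z - v) with hw
  have hne : ∀ z ∈ S ∪ I, z - v ≠ 0 := by
    intro z hz
    rw [← norm_ne_zero_iff, ← dist_eq_norm]
    rcases hz with hz | hz
    · linarith [hSU z hz v hv]
    · linarith [hIU z hz v hv]
  have hwc : ContinuousOn w (S ∪ I) := ContinuousOn.div (by fun_prop) (by fun_prop) hne
  have hwS : ∀ z ∈ S, w z ∈ Complex.slitPlane := fun z hz =>
    div_mem_slitPlane_of_dist (hSU z hz u hu) (hSU z hz v hv) huv
  have hdI : (d : ℂ) ∈ I := ⟨d, ⟨hd0.le, le_rfl⟩, rfl⟩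
  have h0I : (0 : ℂ) ∈ I := ⟨0, ⟨le_rfl, hd0.le⟩, by simp⟩
  have hpos : ∀ r : ℝ, (r : ℂ) ∈ I → 0 < Complex.normSq (r - v) := fun r hr =>
    Complex.normSq_pos.2 (hne _ (Or.inr hr))
  have him : ∀ r : ℝ, (w r).im =
      (u.im * v.re - u.re * v.im - r * (u.im - v.im)) / Complex.normSq (r - v) := by
    intro r
    simp only [hw, Complex.div_im, Complex.sub_re, Complex.sub_im, Complex.ofReal_re,
      Complex.ofReal_im]
    ring
  have hre : ∀ r : ℝ, (w r).re =
      ((r - u.re) * (r - v.re) + u.im * v.im) / Complex.normSq (r - v) := by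
    intro r
    simp only [hw, Complex.div_re, Complex.sub_re, Complex.sub_im, Complex.ofReal_re,
      Complex.ofReal_im]
    ring
  have hwI : ∀ z ∈ I, -w z ∈ Complex.slitPlane := by
    rintro _ ⟨r, hr, rfl⟩
    have hp := hpos r ⟨r, hr, rfl⟩
    rw [Complex.mem_slitPlane_iff, Complex.neg_re, Complex.neg_im]
    by_cases hz : u.im * v.re - u.re * v.im - r * (u.im - v.im) = 0
    · left
      rw [hre, neg_pos]
      refine div_neg_of_neg_of_pos ?_ hp
      have hm : 0 < u.im - v.im := by linarith
      have hcomb : (u.im - v.im) ^ 2 * ((r - u.re) * (r - v.re)) =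
          u.im * v.im * (u.re - v.re) ^ 2 := by
        have e1 : (u.im - v.im) * (r - u.re) = u.im * (v.re - u.re) := by linear_combination -hz
        have e2 : (u.im - v.im) * (r - v.re) = v.im * (v.re - u.re) := by linear_combination -hz
        linear_combination (u.im - v.im) * (r - v.re) * e1 + u.im * (v.re - u.re) * e2
      have hprod : u.im * v.im < 0 := mul_neg_of_pos_of_neg huim hvim
      have h3 : (r - u.re) * (r - v.re) ≤ 0 := by
        by_contra hc
        have := mul_pos (pow_pos hm 2) (not_le.1 hc)
        nlinarith [sq_nonneg (u.re - v.re)]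
      linarith
    · right
      rw [him, neg_ne_zero]
      exact div_ne_zero hz hp.ne'
  have key1 := hS.im_sub_eq_of_exp_eq (hθ.mono subset_union_left)
    ((hwc.mono subset_union_left).clog hwS) (fun z hz => by
      rw [hθe z (Or.inl hz), Complex.exp_log (Complex.slitPlane_ne_zero (hwS z hz))]) h0S hdS
  have key2 := hIc.im_sub_eq_of_exp_eq (f := fun z => θ z - Real.pi * Complex.I)
    ((hθ.mono subset_union_right).sub continuousOn_const)
    ((hwc.mono subset_union_right).neg.clog hwI) (fun z hz => by
      rw [Complex.exp_sub, hθe z (Or.inr hz), Complex.exp_pi_mul_I, Pi.neg_apply,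
        Complex.exp_log (Complex.slitPlane_ne_zero (hwI z hz)), div_neg, div_one]) h0I hdI
  have im0 : 0 < (w 0).im := by
    have := him 0
    rw [Complex.ofReal_zero] at this
    rw [this]
    have hp := hpos 0 (by simpa using h0I)
    rw [Complex.ofReal_zero] at hp
    exact div_pos (by linarith) hp
  have imd : (w d).im < 0 := by
    rw [him]
    exact div_neg_of_neg_of_pos (by linarith) (hpos d hdI)
  simp only [Complex.log_im, Complex.sub_im, Pi.neg_apply,
    Complex.arg_neg_eq_arg_sub_pi_of_im_pos im0,
    Complex.arg_neg_eq_arg_add_pi_of_im_neg imd] at key1 key2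
  linarith [Real.pi_pos]

theorem uniformContinuous_sqrt_one_sub_sq : UniformContinuous fun a : ℝ => √(1 - a ^ 2) := by
  refine HasCompactSupport.uniformContinuous_of_continuous ?_ (by fun_prop)
  refine HasCompactSupport.intro (isCompact_Icc (a := (-1 : ℝ)) (b := 1)) fun a ha => ?_
  refine Real.sqrt_eq_zero_of_nonpos ?_
  by_contra hlt
  exact ha (abs_le.1 ((sq_lt_one_iff_abs_lt_one a).1 (by linarith)).le)

/-- How far the unit discs centred at the points of `A` protrude beyond the real axis,
above or below the point `t` of the axis, on the side opposite to their centres. -/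
def protrusion (A : Set ℂ) (t : ℝ) : ℝ :=
  ⨆ u : A, max 0 (√(1 - (t - (u : ℂ).re) ^ 2) - |(u : ℂ).im|)

theorem bddAbove_protrusion (A : Set ℂ) (t : ℝ) :
    BddAbove (range fun u : A => max 0 (√(1 - (t - (u : ℂ).re) ^ 2) - |(u : ℂ).im|)) := by
  refine ⟨1, ?_⟩
  rintro _ ⟨u, rfl⟩
  refine max_le zero_le_one ?_
  have : √(1 - (t - (u : ℂ).re) ^ 2) ≤ 1 :=
    Real.sqrt_le_one.2 (by linarith [sq_nonneg (t - (u : ℂ).re)])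
  linarith [abs_nonneg (u : ℂ).im]

theorem protrusion_nonneg (A : Set ℂ) (t : ℝ) : 0 ≤ protrusion A t :=
  Real.iSup_nonneg fun _ => le_max_left _ _

theorem le_protrusion {A : Set ℂ} {u : ℂ} (hu : u ∈ A) (t : ℝ) :
    √(1 - (t - u.re) ^ 2) - |u.im| ≤ protrusion A t :=
  (le_max_right _ _).trans (le_ciSup (bddAbove_protrusion A t) ⟨u, hu⟩)

theorem exists_lt_of_lt_protrusion {A : Set ℂ} {t a : ℝ} (ha : 0 ≤ a) (h : a < protrusion A t) :
    ∃ u ∈ A, a < √(1 - (t - u.re) ^ 2) - |u.im| := by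
  by_contra! hc
  exact h.not_ge (Real.iSup_le (fun u => max_le ha (hc u u.2)) ha)

theorem continuous_protrusion (A : Set ℂ) : Continuous (protrusion A) := by
  rw [Metric.continuous_iff]
  intro t ε hε
  obtain ⟨δ, hδ, H⟩ := Metric.uniformContinuous_iff.1 uniformContinuous_sqrt_one_sub_sq (ε / 2)
    (half_pos hε)
  have key : ∀ s t : ℝ, dist s t < δ → protrusion A s ≤ protrusion A t + ε / 2 := by
    intro s t hst
    have hnn := protrusion_nonneg A t
    refine Real.iSup_le (fun u => max_le (by linarith) ?_) (by linarith)
    have h1 := H (a := s - (u : ℂ).re) (b := t - (u : ℂ).re) (by rwa [dist_sub_right])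
    have h2 := le_protrusion u.2 t
    rw [Real.dist_eq] at h1
    linarith [(abs_lt.1 h1).2]
  refine ⟨δ, hδ, fun s hs => ?_⟩
  have h1 := key s t hs
  have h2 := key t s (by rwa [dist_comm])
  rw [Real.dist_eq, abs_lt]
  constructor <;> linarith

theorem one_le_dist_iff_sq {z u : ℂ} :
    1 ≤ dist z u ↔ 1 ≤ (z.re - u.re) ^ 2 + (z.im - u.im) ^ 2 := by
  rw [Complex.dist_eq_re_im, Real.one_le_sqrt]

/-- If the points `0` and `d` are not covered by the unit discs centred in `A`, then these discs
do not protrude beyond the disc with diameter `[0, d]`. -/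
theorem protrusion_sq_le {A : Set ℂ} {d t : ℝ} (ht0 : 0 ≤ t) (htd : t ≤ d)
    (h0 : ∀ u ∈ A, 1 ≤ dist (0 : ℂ) u) (hd : ∀ u ∈ A, 1 ≤ dist (d : ℂ) u) :
    protrusion A t ^ 2 ≤ t * (d - t) := by
  have hnn : 0 ≤ t * (d - t) := mul_nonneg ht0 (sub_nonneg.2 htd)
  rw [← Real.le_sqrt (protrusion_nonneg A t) hnn]
  by_contra hlt
  obtain ⟨u, hu, hlt⟩ := exists_lt_of_lt_protrusion (Real.sqrt_nonneg _) (not_le.1 hlt)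
  have e0 := one_le_dist_iff_sq.1 (h0 u hu)
  have e1 := one_le_dist_iff_sq.1 (hd u hu)
  simp only [Complex.zero_re, Complex.zero_im, Complex.ofReal_re, Complex.ofReal_im] at e0 e1
  set p := √(1 - (t - u.re) ^ 2) with hp
  have hpp : 0 < p := by linarith [Real.sqrt_nonneg (t * (d - t)), abs_nonneg u.im]
  have hpsq : p ^ 2 = 1 - (t - u.re) ^ 2 := Real.sq_sqrt (Real.sqrt_pos.1 hpp).le
  have hlt2 : t * (d - t) < (p - |u.im|) ^ 2 :=
    (Real.sqrt_lt' ((Real.sqrt_nonneg _).trans_lt hlt)).1 hlt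
  have habs := sq_abs u.im
  have hmul : 0 ≤ |u.im| * (p - |u.im|) :=
    mul_nonneg (abs_nonneg _) ((Real.sqrt_nonneg _).trans hlt.le)
  rcases (ht0.trans htd).eq_or_lt with hd0 | hd0
  · have : t = 0 := by linarith
    subst this
    nlinarith
  · have c0 := mul_le_mul_of_nonneg_left e0 (sub_nonneg.2 htd)
    have c1 := mul_le_mul_of_nonneg_left e1 ht0
    have : d * 1 ≤ d * ((t - u.re) ^ 2 + u.im ^ 2 + t * (d - t)) := by nlinarith
    have := le_of_mul_le_mul_left this hd0
    nlinarith

/-- A unit disc centred in the upper half plane and one centred in the lower half plane do not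
meet over a point of the segment from `0` to `d`. -/
theorem sqrt_sub_add_sqrt_sub_nonpos {U S : Set ℂ} (hU : IsPreconnected U) (hS : IsPreconnected S)
    {d t : ℝ} (hd0 : 0 < d) (hd2 : d < 2) (h0S : (0 : ℂ) ∈ S) (hdS : (d : ℂ) ∈ S)
    (hSU : ∀ s ∈ S, ∀ u ∈ U, 1 ≤ dist s u) (ht0 : 0 ≤ t) (htd : t ≤ d) {u v : ℂ}
    (hu : u ∈ U) (hv : v ∈ U) (huim : 0 < u.im) (hvim : v.im < 0)
    (hut : 0 < √(1 - (t - u.re) ^ 2)) (hvt : 0 < √(1 - (t - v.re) ^ 2)) :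
    (√(1 - (t - u.re) ^ 2) - |u.im|) + (√(1 - (t - v.re) ^ 2) - |v.im|) ≤ 0 := by
  by_contra! hlt
  rw [abs_of_pos huim, abs_of_neg hvim] at hlt
  set p := √(1 - (t - u.re) ^ 2) with hp
  set q := √(1 - (t - v.re) ^ 2) with hq
  have hpsq : p ^ 2 = 1 - (t - u.re) ^ 2 := Real.sq_sqrt (Real.sqrt_pos.1 hut).le
  have hqsq : q ^ 2 = 1 - (t - v.re) ^ 2 := Real.sq_sqrt (Real.sqrt_pos.1 hvt).le
  obtain ⟨s, hs1, hs2⟩ : ∃ s : ℝ, (s - u.im) ^ 2 < p ^ 2 ∧ (s - v.im) ^ 2 < q ^ 2 := by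
    have hk : (u.im - v.im) / (p + q) < 1 := by rw [div_lt_one (by positivity)]; linarith
    have hk0 : 0 < (u.im - v.im) / (p + q) := div_pos (by linarith) (by positivity)
    have hkmul : (u.im - v.im) / (p + q) * (p + q) = u.im - v.im :=
      div_mul_cancel₀ _ (by positivity)
    set k := (u.im - v.im) / (p + q) with hkdef
    refine ⟨u.im - k * p, ?_, ?_⟩
    · apply sq_lt_sq'
      · nlinarith
      · nlinarith
    · have : u.im - k * p - v.im = k * q := by linarith
      rw [this]
      apply sq_lt_sq'
      · nlinarith
      · nlinarith
  have hzu : dist (⟨t, s⟩ : ℂ) u < 1 := by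
    rw [← not_le, one_le_dist_iff_sq]; simp only; linarith
  have hzv : dist (⟨t, s⟩ : ℂ) v < 1 := by
    rw [← not_le, one_le_dist_iff_sq]; simp only; linarith
  have e0 := one_le_dist_iff_sq.1 (hSU _ h0S u hu)
  have e1 := one_le_dist_iff_sq.1 (hSU _ hdS u hu)
  have f0 := one_le_dist_iff_sq.1 (hSU _ h0S v hv)
  have f1 := one_le_dist_iff_sq.1 (hSU _ hdS v hv)
  simp only [Complex.zero_re, Complex.zero_im, Complex.ofReal_re, Complex.ofReal_im]
    at e0 e1 f0 f1
  refine not_crossing hU hS hd0 hd2 h0S hdS hSU hu hv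
    (by linarith [dist_triangle_left u v ⟨t, s⟩]) huim hvim ?_ ?_
  · have a1 : t ^ 2 + s ^ 2 < 2 * (t * u.re + s * u.im) := by linarith
    have a2 : t ^ 2 + s ^ 2 < 2 * (t * v.re + s * v.im) := by linarith
    have b1 := mul_lt_mul_of_pos_left a1 (neg_pos.2 hvim)
    have b2 := mul_lt_mul_of_pos_left a2 huim
    have h : 0 < t * (u.im * v.re - u.re * v.im) := by
      nlinarith [mul_nonneg (by linarith : 0 ≤ u.im - v.im) (by positivity : 0 ≤ t ^ 2 + s ^ 2)]
    exact pos_of_mul_pos_right h ht0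
  · have a1 : (t - d) ^ 2 + s ^ 2 < 2 * ((t - d) * (u.re - d) + s * u.im) := by linarith
    have a2 : (t - d) ^ 2 + s ^ 2 < 2 * ((t - d) * (v.re - d) + s * v.im) := by linarith
    have b1 := mul_lt_mul_of_pos_left a1 (neg_pos.2 hvim)
    have b2 := mul_lt_mul_of_pos_left a2 huim
    have h : 0 < (d - t) * (d * (u.im - v.im) - (u.im * v.re - u.re * v.im)) := by
      nlinarith [mul_nonneg (by linarith : 0 ≤ u.im - v.im)
        (by positivity : 0 ≤ (t - d) ^ 2 + s ^ 2)]
    exact sub_pos.1 (pos_of_mul_pos_right h (sub_nonneg.2 htd))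

/-- If `0` and `d` lie in a connected set at distance at least `1` from the connected set `U`,
then they lie in such a set contained in the disc of radius `2` about `0`. -/
theorem exists_isPreconnected_subset_ball {U S : Set ℂ} (hU : IsPreconnected U)
    (hS : IsPreconnected S) {d : ℝ} (hd0 : 0 < d) (hd2 : d < 2) (h0S : (0 : ℂ) ∈ S)
    (hdS : (d : ℂ) ∈ S) (hSU : ∀ s ∈ S, ∀ u ∈ U, 1 ≤ dist s u) :
    ∃ T : Set ℂ, IsPreconnected T ∧ (0 : ℂ) ∈ T ∧ (d : ℂ) ∈ T ∧ T ⊆ ball 0 2 ∧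
      ∀ s ∈ T, ∀ u ∈ U, 1 ≤ dist s u := by
  set A : Set ℂ := {u ∈ U | 0 < u.im}
  set B : Set ℂ := {u ∈ U | u.im < 0}
  set g : ℝ → ℝ := fun t => protrusion B t - protrusion A t with hg
  have hAle : ∀ t ∈ Icc 0 d, protrusion A t ^ 2 ≤ t * (d - t) := fun t ht =>
    protrusion_sq_le ht.1 ht.2 (fun u hu => hSU _ h0S u hu.1) fun u hu => hSU _ hdS u hu.1
  have hBle : ∀ t ∈ Icc 0 d, protrusion B t ^ 2 ≤ t * (d - t) := fun t ht =>
    protrusion_sq_le ht.1 ht.2 (fun u hu => hSU _ h0S u hu.1) fun u hu => hSU _ hdS u hu.1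
  have hgle : ∀ t ∈ Icc 0 d, g t ^ 2 ≤ t * (d - t) := by
    intro t ht
    have h1 := hAle t ht
    have h2 := hBle t ht
    rcases le_total (protrusion A t) (protrusion B t) with h | h
    · refine le_trans (pow_le_pow_left₀ (sub_nonneg.2 h) ?_ 2) h2
      linarith [protrusion_nonneg A t]
    · refine le_trans ?_ h1
      rw [hg, ← neg_sq]
      refine pow_le_pow_left₀ (by linarith) ?_ 2
      linarith [protrusion_nonneg B t]
  have hg0 : g 0 = 0 := by simpa using hgle 0 ⟨le_rfl, hd0.le⟩
  have hgd : g d = 0 := by simpa using hgle d ⟨hd0.le, le_rfl⟩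
  have hgc : Continuous g := (continuous_protrusion B).sub (continuous_protrusion A)
  have hpath : Continuous fun t : ℝ => (t : ℂ) + g t * Complex.I := by fun_prop
  refine ⟨(fun t : ℝ => (t : ℂ) + g t * Complex.I) '' Icc 0 d,
    isPreconnected_Icc.image _ hpath.continuousOn, ⟨0, ⟨le_rfl, hd0.le⟩, by simp [hg0]⟩,
    ⟨d, ⟨hd0.le, le_rfl⟩, by simp [hgd]⟩, ?_, ?_⟩
  · rintro _ ⟨t, ht, rfl⟩
    rw [mem_ball, Complex.dist_eq_re_im, Real.sqrt_lt' two_pos]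
    have := hgle t ht
    simp only [Complex.add_re, Complex.ofReal_re, Complex.mul_re, Complex.I_re, mul_zero,
      Complex.ofReal_im, Complex.I_im, mul_one, sub_self, add_zero, Complex.add_im,
      Complex.mul_im, zero_add, Complex.zero_re, Complex.zero_im, sub_zero]
    nlinarith [ht.1, ht.2]
  · rintro _ ⟨t, ht, rfl⟩ w hw
    rw [one_le_dist_iff_sq]
    by_contra! hlt
    simp only [Complex.add_re, Complex.ofReal_re, Complex.mul_re, Complex.I_re, mul_zero,
      Complex.ofReal_im, Complex.I_im, mul_one, sub_self, add_zero, Complex.add_im,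
      Complex.mul_im, zero_add] at hlt
    have hwpos : 0 < √(1 - (t - w.re) ^ 2) :=
      Real.sqrt_pos.2 (by linarith [sq_nonneg (g t - w.im)])
    have hclose : |g t - w.im| < √(1 - (t - w.re) ^ 2) :=
      Real.lt_sqrt_of_sq_lt (by rw [sq_abs]; linarith)
    have hmeet : ∀ {a b : ℂ}, a ∈ A → b ∈ B → 0 < √(1 - (t - a.re) ^ 2) →
        0 < √(1 - (t - b.re) ^ 2) →
        (√(1 - (t - a.re) ^ 2) - |a.im|) + (√(1 - (t - b.re) ^ 2) - |b.im|) ≤ 0 :=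
      fun ha hb => sqrt_sub_add_sqrt_sub_nonpos hU hS hd0 hd2 h0S hdS hSU ht.1 ht.2 ha.1 hb.1
        ha.2 hb.2
    obtain ⟨hl, hr⟩ := abs_lt.1 hclose
    rcases lt_trichotomy w.im 0 with him | him | him
    · have hwB : w ∈ B := ⟨hw, him⟩
      have h1 := le_protrusion hwB t
      have h2 := protrusion_nonneg B t
      rw [abs_of_neg him] at h1
      obtain ⟨u, hu, hlu⟩ := exists_lt_of_lt_protrusion (A := A) (t := t)
        (a := max 0 (-(√(1 - (t - w.re) ^ 2) - |w.im|))) (le_max_left _ _)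
        (by rw [abs_of_neg him]; exact max_lt (by linarith) (by linarith))
      obtain ⟨h3, h4⟩ := max_lt_iff.1 hlu
      linarith [hmeet hu hwB (by linarith [abs_nonneg u.im]) hwpos]
    · have e0 := one_le_dist_iff_sq.1 (hSU _ h0S w hw)
      have e1 := one_le_dist_iff_sq.1 (hSU _ hdS w hw)
      simp only [Complex.zero_re, Complex.zero_im, Complex.ofReal_re, Complex.ofReal_im, him,
        sub_self, zero_sub, neg_sq, zero_pow two_ne_zero, add_zero, one_le_sq_iff_one_le_abs]
        at e0 e1
      have h1 : (t - w.re) ^ 2 < 1 := by linarith [Real.sqrt_pos.1 hwpos]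
      have h2 := abs_lt.1 ((sq_lt_one_iff_abs_lt_one _).1 h1)
      rcases le_abs.1 e0 with e0 | e0 <;> rcases le_abs.1 e1 with e1 | e1 <;>
        linarith [ht.1, ht.2]
    · have hwA : w ∈ A := ⟨hw, him⟩
      have h1 := le_protrusion hwA t
      have h2 := protrusion_nonneg A t
      rw [abs_of_pos him] at h1
      obtain ⟨v, hv, hlv⟩ := exists_lt_of_lt_protrusion (A := B) (t := t)
        (a := max 0 (-(√(1 - (t - w.re) ^ 2) - |w.im|))) (le_max_left _ _)
        (by rw [abs_of_pos him]; exact max_lt (by linarith) (by linarith))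
      obtain ⟨h3, h4⟩ := max_lt_iff.1 hlv
      linarith [hmeet hwA hv hwpos (by linarith [abs_nonneg v.im])]

theorem exists_linearIsometryEquiv_apply_eq_norm (w : Plane) :
    ∃ e : Plane ≃ₗᵢ[ℝ] ℂ, e w = (‖w‖ : ℂ) := by
  set e₁ : Plane ≃ₗᵢ[ℝ] ℂ := Complex.orthonormalBasisOneI.repr.symm
  rcases eq_or_ne w 0 with rfl | hw
  · exact ⟨e₁, by simp⟩
  · have hn : e₁ w ≠ 0 := by simpa using hw
    obtain ⟨c, hc⟩ : ∃ c : Circle, (c : ℂ) = ‖w‖ / e₁ w :=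
      ⟨⟨_, mem_sphere_zero_iff_norm.2 (by simp [hw])⟩, rfl⟩
    refine ⟨e₁.trans (rotation c), ?_⟩
    rw [LinearIsometryEquiv.trans_apply, rotation_apply, hc, div_mul_cancel₀ _ hn]

theorem SimplePolygon.isPreconnected_compl_region (P : SimplePolygon) :
    IsPreconnected P.regionᶜ := by
  have hbdd : Bornology.IsBounded P.bdryCurve :=
    (isCompact_Icc.image P.continuous).isBounded
  obtain ⟨R, hR0, hR⟩ := hbdd.subset_closedBall_lt 0 0
  have hrank : 1 < Module.rank ℝ Plane := by
    rw [← Module.finrank_eq_rank]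
    simp
  have hext : IsPreconnected (closedBall (0 : Plane) R)ᶜ :=
    isPreconnected_compl_closedBall_s1 hrank hR0.le
  have hextsub : (closedBall (0 : Plane) R)ᶜ ⊆ P.bdryCurveᶜ := compl_subset_compl.2 hR
  have hmem : ∀ z, z ∈ P.regionᶜ ↔ z ∈ P.bdryCurveᶜ ∧
      ¬ Bornology.IsBounded (connectedComponentIn P.bdryCurveᶜ z) := by
    intro z
    simp only [SimplePolygon.region, mem_compl_iff, mem_union, mem_ofPred_eq]
    tauto
  have hcomp : ∀ z ∈ P.regionᶜ, connectedComponentIn P.bdryCurveᶜ z ⊆ P.regionᶜ := by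
    intro z hz a ha
    have hz' := (hmem z).1 hz
    rw [hmem, ← connectedComponentIn_eq ha]
    exact ⟨connectedComponentIn_subset _ _ ha, hz'.2⟩
  have hmeets : ∀ z ∈ P.regionᶜ, ∃ a ∈ connectedComponentIn P.bdryCurveᶜ z,
      a ∈ (closedBall (0 : Plane) R)ᶜ := by
    intro z hz
    by_contra! hc
    exact ((hmem z).1 hz).2 (isBounded_closedBall.subset fun a ha => not_not.1 (hc a ha))
  have hfar : ∀ z ∈ P.regionᶜ,
      (closedBall (0 : Plane) R)ᶜ ⊆ connectedComponentIn P.bdryCurveᶜ z := by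
    intro z hz
    obtain ⟨a, ha, haR⟩ := hmeets z hz
    rw [connectedComponentIn_eq ha]
    exact hext.subset_connectedComponentIn haR hextsub
  refine isPreconnected_of_forall_pair fun a ha b hb => ?_
  obtain ⟨c, -, hc⟩ := hmeets a ha
  have hab : connectedComponentIn P.bdryCurveᶜ a = connectedComponentIn P.bdryCurveᶜ b :=
    (connectedComponentIn_eq (hfar a ha hc)).trans (connectedComponentIn_eq (hfar b hb hc)).symm
  exact ⟨_, hcomp a ha, mem_connectedComponentIn ((hmem a).1 ha).1,
    hab ▸ mem_connectedComponentIn ((hmem b).1 hb).1, isPreconnected_connectedComponentIn⟩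

theorem SimplePolygon.mem_freeSpace_iff (P : SimplePolygon) {z : Plane} :
    z ∈ P.freeSpace ↔ ∀ u ∈ P.regionᶜ, 1 ≤ dist z u := by
  simp only [SimplePolygon.freeSpace, mem_ofPred_eq, subset_def, mem_ball, mem_compl_iff]
  refine forall_congr' fun u => ?_
  rw [dist_comm, ← not_lt, not_imp_not]

/-- For any point `x` of the free space `F` of a simple polygon, with `C` the connected
component of `F` containing `x`, the set `D₂(x) ∩ C` is connected. -/
theorem ball_inter_component_connected (P : SimplePolygon) (x : Plane)
    (hx : x ∈ P.freeSpace) :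
    IsConnected (Metric.ball x 2 ∩ connectedComponentIn P.freeSpace x) := by
  have hxC := mem_connectedComponentIn hx
  refine ⟨⟨x, mem_ball_self two_pos, hxC⟩, isPreconnected_of_forall x ?_⟩
  rintro y ⟨hy2, hyC⟩
  rcases eq_or_ne y x with rfl | hne
  · exact ⟨{y}, singleton_subset_iff.2 ⟨hy2, hyC⟩, rfl, rfl, isPreconnected_singleton⟩
  obtain ⟨e, he⟩ := exists_linearIsometryEquiv_apply_eq_norm (y - x)
  have hcont : Continuous fun z : Plane => e (z - x) := by fun_prop
  have hdist : ∀ z u : Plane, dist (e (z - x)) (e (u - x)) = dist z u := fun z u => by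
    rw [e.dist_map, dist_sub_right]
  obtain ⟨T, hT, h0T, hdT, hTball, hTU⟩ := exists_isPreconnected_subset_ball
    (P.isPreconnected_compl_region.image _ hcont.continuousOn)
    (isPreconnected_connectedComponentIn.image _ hcont.continuousOn)
    (norm_pos_iff.2 (sub_ne_zero.2 hne)) (by rwa [← dist_eq_norm])
    (⟨x, hxC, by simp⟩ : (0 : ℂ) ∈ _ '' connectedComponentIn P.freeSpace x) ⟨y, hyC, he⟩ (by
      rintro _ ⟨s, hs, rfl⟩ _ ⟨u, hu, rfl⟩
      rw [hdist]
      exact P.mem_freeSpace_iff.1 (connectedComponentIn_subset _ _ hs) u hu)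
  have hpre : IsPreconnected ((fun w : ℂ => e.symm w + x) '' T) :=
    hT.image _ (by fun_prop)
  have hxT : x ∈ (fun w : ℂ => e.symm w + x) '' T := ⟨0, h0T, by simp⟩
  refine ⟨_, subset_inter ?_ (hpre.subset_connectedComponentIn hxT ?_), hxT,
    ⟨_, hdT, by simp [← he]⟩, hpre⟩
  · rintro _ ⟨w, hw, rfl⟩
    simpa [dist_eq_norm] using hTball hw
  · rintro _ ⟨w, hw, rfl⟩
    rw [P.mem_freeSpace_iff]
    intro u hu
    have := hTU w hw _ ⟨u, hu, rfl⟩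
    rwa [← hdist, add_sub_cancel_right, e.apply_symm_apply]
end
end

section
/- For every ε > 0 there exist a simple polygon W ⊆ ℝ² whose free space F is connected, and distinct points s₁, s₂ ∈ F and distinct points t₁, t₂ ∈ F with dist(s₁, s₂) ≥ 4 − ε and dist(t₁, t₂) ≥ 4 − ε, such that no valid motion plan exists for S = {s₁, s₂} and T = {t₁, t₂}. In other words, monochromatic separation strictly less than 4 does not always guarantee a solution, even when the free space is a single connected component containing two start and two target positions. -/
open Metric Set

noncomputable section

/-- A valid (unlabeled) motion plan for `m` unit-disc robots inside the free space `F`,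
from the set `S` of start positions to the set `T` of target positions: a family of
continuous paths in `F` starting at a bijective enumeration of `S`, whose endpoints cover
exactly `T`, such that at every moment any two robots are at distance at least `2`. -/
def IsValidMotionPlan (F : Set Plane) {m : ℕ} (S T : Set Plane)
    (π : Fin m → unitInterval → Plane) : Prop :=
  (∀ i, Continuous (π i)) ∧
  (∀ i τ, π i τ ∈ F) ∧
  Set.BijOn (fun i => π i 0) Set.univ S ∧
  (Set.range fun i => π i 1) = T ∧
  ∀ (τ : unitInterval) (i j : Fin m), i ≠ j → 2 ≤ dist (π i τ) (π j τ)

/-! ### Piecewise affine functions of one variable -/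

/-- A real function is piecewise affine if it is affine on every interval whose interior avoids
some fixed finite set of breakpoints. -/
def IsPiecewiseAffine (h : ℝ → ℝ) : Prop :=
  ∃ B : Finset ℝ, ∀ u v, u < v → (∀ z ∈ B, z ∉ Ioo u v) →
    ∃ m k : ℝ, ∀ x ∈ Icc u v, h x = m * x + k

namespace IsPiecewiseAffine

lemma affine (m k : ℝ) : IsPiecewiseAffine fun x => m * x + k :=
  ⟨∅, fun _ _ _ _ => ⟨m, k, fun _ _ => rfl⟩⟩

lemma comp_affine {h : ℝ → ℝ} (hh : IsPiecewiseAffine h) {α : ℝ} (hα : α ≠ 0) (β : ℝ) :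
    IsPiecewiseAffine fun x => h (α * x + β) := by
  obtain ⟨B, hB⟩ := hh
  refine ⟨B.image fun z => (z - β) / α, fun u v huv hz => ?_⟩
  have key : ∀ z ∈ B, ¬ (u < (z - β) / α ∧ (z - β) / α < v) := fun z hzB hmem =>
    hz _ (Finset.mem_image_of_mem _ hzB) hmem
  rcases lt_or_gt_of_ne hα with hneg | hpos
  · obtain ⟨m, k, hmk⟩ := hB (α * v + β) (α * u + β) (by nlinarith) (fun z hzB hmem => by
      refine key z hzB ⟨?_, ?_⟩
      · rw [lt_div_iff_of_neg hneg]; linarith [hmem.2]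
      · rw [div_lt_iff_of_neg hneg]; linarith [hmem.1])
    refine ⟨m * α, m * β + k, fun x hx => ?_⟩
    beta_reduce
    rw [hmk (α * x + β) ⟨by nlinarith [hx.2], by nlinarith [hx.1]⟩]
    ring
  · obtain ⟨m, k, hmk⟩ := hB (α * u + β) (α * v + β) (by nlinarith) (fun z hzB hmem => by
      refine key z hzB ⟨?_, ?_⟩
      · rw [lt_div_iff₀ hpos]; linarith [hmem.1]
      · rw [div_lt_iff₀ hpos]; linarith [hmem.2])
    refine ⟨m * α, m * β + k, fun x hx => ?_⟩
    beta_reduce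
    rw [hmk (α * x + β) ⟨by nlinarith [hx.1], by nlinarith [hx.2]⟩]
    ring

lemma ite {h₁ h₂ : ℝ → ℝ} (hh₁ : IsPiecewiseAffine h₁) (hh₂ : IsPiecewiseAffine h₂) {c : ℝ}
    (hc : h₁ c = h₂ c) : IsPiecewiseAffine fun x => if x ≤ c then h₁ x else h₂ x := by
  obtain ⟨B₁, hB₁⟩ := hh₁
  obtain ⟨B₂, hB₂⟩ := hh₂
  refine ⟨insert c (B₁ ∪ B₂), fun u v huv hz => ?_⟩
  rcases le_or_gt v c with hvc | hvc
  · obtain ⟨m, k, hmk⟩ := hB₁ u v huv fun z hzB => hz z (by simp [hzB])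
    refine ⟨m, k, fun x hx => ?_⟩
    beta_reduce
    rw [if_pos (hx.2.trans hvc), hmk x hx]
  · have hcu : c ≤ u := by
      by_contra! hcu
      exact hz c (by simp) ⟨hcu, hvc⟩
    obtain ⟨m, k, hmk⟩ := hB₂ u v huv fun z hzB => hz z (by simp [hzB])
    refine ⟨m, k, fun x hx => ?_⟩
    rw [← hmk x hx]
    beta_reduce
    split_ifs with hxc
    · rw [le_antisymm hxc (hcu.trans hx.1), hc]
    · rfl

lemma comp_abs {h : ℝ → ℝ} (hh : IsPiecewiseAffine h) : IsPiecewiseAffine fun x => h |x| := by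
  have key := ite (hh.comp_affine (α := -1) (by norm_num) 0)
    (hh.comp_affine (α := 1) (by norm_num) 0) (c := 0) (by simp)
  convert key using 2 with x
  split_ifs with hx
  · rw [abs_of_nonpos hx]; ring_nf
  · rw [abs_of_pos (not_le.1 hx)]; ring_nf

lemma sup' {ι : Type*} (I : Finset ι) (hI : I.Nonempty) (m k : ι → ℝ) :
    IsPiecewiseAffine fun x => I.sup' hI fun i => m i * x + k i := by
  refine ⟨(I ×ˢ I).image fun p => (k p.2 - k p.1) / (m p.1 - m p.2), fun u v huv hz => ?_⟩
  obtain ⟨i, hi, hmax⟩ := Finset.exists_max_image I (fun i => m i * ((u + v) / 2) + k i) hI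
  refine ⟨m i, k i, fun x hx => le_antisymm (Finset.sup'_le hI _ fun j hj => ?_)
    (Finset.le_sup' (fun i => m i * x + k i) hi)⟩
  by_contra! hlt
  have hw := hmax j hj
  have hne : m i - m j ≠ 0 := fun h0 => by
    rw [sub_eq_zero.1 h0] at hlt hw
    linarith
  refine hz _ (Finset.mem_image_of_mem _ (Finset.mk_mem_product hi hj)) ?_
  obtain ⟨hux, hxv⟩ := hx
  rcases lt_or_gt_of_ne hne with hneg | hpos
  · constructor
    · rw [lt_div_iff_of_neg hneg]; nlinarith
    · rw [div_lt_iff_of_neg hneg]; nlinarith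
  · constructor
    · rw [lt_div_iff₀ hpos]; nlinarith
    · rw [div_lt_iff₀ hpos]; nlinarith

end IsPiecewiseAffine

/-- A finite set of reals cuts `[0,1]` into finitely many intervals with interiors avoiding it. -/
lemma exists_partition_avoiding (B : Finset ℝ) :
    ∃ (n : ℕ) (t : Fin (n + 1) → ℝ), t 0 = 0 ∧ t (Fin.last n) = 1 ∧ StrictMono t ∧
      ∀ i : Fin n, ∀ z ∈ B, z ∉ Ioo (t i.castSucc) (t i.succ) := by
  classical
  set C : Finset ℝ := insert 0 (insert 1 (B.filter fun z => z ∈ Icc (0 : ℝ) 1)) with hC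
  have hmem : ∀ z ∈ C, 0 ≤ z ∧ z ≤ 1 := by
    intro z hz
    simp only [hC, Finset.mem_insert, Finset.mem_filter, mem_Icc] at hz
    rcases hz with rfl | rfl | hz
    · norm_num
    · norm_num
    · exact hz.2
  have h0 : (0 : ℝ) ∈ C := by simp [hC]
  have h1 : (1 : ℝ) ∈ C := by simp [hC]
  obtain ⟨n, hn⟩ : ∃ n, C.card = n + 1 :=
    Nat.exists_eq_succ_of_ne_zero (Finset.card_ne_zero_of_mem h0)
  have hsurj : ∀ z ∈ C, ∃ i, C.orderEmbOfFin hn i = z := fun z hz => by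
    have : z ∈ Set.range (C.orderEmbOfFin hn) := by
      rw [Finset.range_orderEmbOfFin]; exact hz
    exact this
  have hin := C.orderEmbOfFin_mem hn
  refine ⟨n, C.orderEmbOfFin hn, ?_, ?_, (C.orderEmbOfFin hn).strictMono, ?_⟩
  · obtain ⟨i, hi⟩ := hsurj 0 h0
    refine le_antisymm ?_ (hmem _ (hin 0)).1
    rw [← hi]
    exact (C.orderEmbOfFin hn).monotone (Fin.zero_le i)
  · obtain ⟨i, hi⟩ := hsurj 1 h1
    refine le_antisymm (hmem _ (hin _)).2 ?_
    rw [← hi]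
    exact (C.orderEmbOfFin hn).monotone (Fin.le_last i)
  · rintro i z hz ⟨hlo, hhi⟩
    have hzC : z ∈ C := by
      simp only [hC, Finset.mem_insert, Finset.mem_filter, mem_Icc]
      exact Or.inr (Or.inr ⟨hz, (hmem _ (hin _)).1.trans hlo.le, hhi.le.trans (hmem _ (hin _)).2⟩)
    obtain ⟨j, rfl⟩ := hsurj z hzC
    rw [OrderEmbedding.lt_iff_lt] at hlo hhi
    exact absurd hhi (not_lt.2 (Fin.castSucc_lt_iff_succ_le.1 hlo))

/-! ### Polygons bounded by two graphs -/

lemma Plane.mem_ball_iff (p q : Plane) (r : ℝ) (hr : 0 < r) :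
    q ∈ ball p r ↔ (q 0 - p 0) ^ 2 + (q 1 - p 1) ^ 2 < r ^ 2 := by
  rw [mem_ball, EuclideanSpace.dist_eq, Fin.sum_univ_two, Real.sqrt_lt' hr]
  simp [Real.dist_eq, sq_abs]

lemma Plane.continuous_mk {X : Type*} [TopologicalSpace X] {u v : X → ℝ} (hu : Continuous u)
    (hv : Continuous v) : Continuous fun x => (!₂[u x, v x] : Plane) := by
  refine (PiLp.continuous_toLp 2 _).comp (continuous_pi fun i => ?_)
  fin_cases i <;> simpa

/-- The closed region between two piecewise affine graphs that enclose `[-a,a]` is the region of a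
simple polygon. -/
theorem exists_simplePolygon_region_eq {f g : ℝ → ℝ} {a : ℝ} (ha : 0 < a)
    (hfc : Continuous f) (hgc : Continuous g)
    (hf : IsPiecewiseAffine f) (hg : IsPiecewiseAffine g)
    (hend : ∀ x, |x| = a → f x = g x) (hin : ∀ x, |x| < a → f x < g x)
    (hout : ∀ x, a < |x| → g x < f x) :
    ∃ P : SimplePolygon, P.region = {p | f (p 0) ≤ p 1 ∧ p 1 ≤ g (p 0)} := by
  have habs : |a| = a := abs_of_pos ha
  set X : ℝ → ℝ := fun s => if s ≤ 1 / 2 then 4 * a * s + -a else -4 * a * s + 3 * a with hX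
  set Y : ℝ → ℝ := fun s =>
    if s ≤ 1 / 2 then f (4 * a * s + -a) else g (-4 * a * s + 3 * a) with hY
  have hhalf : f (4 * a * (1 / 2) + -a) = g (-4 * a * (1 / 2) + 3 * a) := by
    rw [show 4 * a * (1 / 2) + -a = a by ring, show -4 * a * (1 / 2) + 3 * a = a by ring]
    exact hend a habs
  have hXc : Continuous X := by
    refine Continuous.if_le (by fun_prop) (by fun_prop) continuous_id continuous_const ?_
    rintro s hs
    rw [show s = 1 / 2 from hs]; ring
  have hYc : Continuous Y := by
    refine Continuous.if_le (by fun_prop) (by fun_prop) continuous_id continuous_const ?_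
    rintro s hs
    rw [show s = 1 / 2 from hs]; exact hhalf
  have hXp : IsPiecewiseAffine X :=
    (IsPiecewiseAffine.affine _ _).ite (IsPiecewiseAffine.affine _ _) (by ring)
  have hYp : IsPiecewiseAffine Y :=
    (hf.comp_affine (by positivity) _).ite (hg.comp_affine (by linarith) _) hhalf
  have hXY : ∀ s ∈ Icc (0 : ℝ) 1, (s ≤ 1 / 2 ∧ X s = 4 * a * s + -a ∧ Y s = f (X s)) ∨
      (1 / 2 < s ∧ X s = -4 * a * s + 3 * a ∧ Y s = g (X s)) := by
    intro s _
    rcases le_or_gt s (1 / 2) with hs | hs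
    · left; simp only [hX, hY, if_pos hs, hs, true_and]
    · right; simp only [hX, hY, if_neg (not_le.2 hs), hs, true_and]
  let P : SimplePolygon :=
    { toFun := fun s => !₂[X s, Y s]
      continuous := Plane.continuous_mk hXc hYc
      closed := by
        have hc : f (-a) = g (-a) := hend _ (by rw [abs_neg, habs])
        have h0 : X 0 = X 1 := by simp only [hX]; norm_num; ring
        have h1 : Y 0 = Y 1 := by
          simp only [hY]; norm_num
          rw [show -(4 * a) + 3 * a = -a by ring, hc]
        rw [h0, h1]
      injOn := by
        intro s hs r hr hsr
        have h0 : X s = X r := by simpa using congrArg (fun p : Plane => p 0) hsr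
        have h1 : Y s = Y r := by simpa using congrArg (fun p : Plane => p 1) hsr
        have mixed : ∀ s r : ℝ, s ∈ Ico (0 : ℝ) 1 → r ∈ Ico (0 : ℝ) 1 → s ≤ 1 / 2 → 1 / 2 < r →
            X s = 4 * a * s + -a → X r = -4 * a * r + 3 * a → f (X s) = g (X r) → X s = X r →
            False := by
          intro s r hs hr hs' hr' hXs hXr hfg hE
          have hlt : |X r| < a := by
            rw [abs_lt, hXr]
            constructor <;> nlinarith [hr.2]
          have := hin _ hlt
          rw [hE] at hfg
          linarith
        rcases hXY s ⟨hs.1, hs.2.le⟩ with ⟨ha1, ha2, ha3⟩ | ⟨ha1, ha2, ha3⟩ <;>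
          rcases hXY r ⟨hr.1, hr.2.le⟩ with ⟨hb1, hb2, hb3⟩ | ⟨hb1, hb2, hb3⟩
        · rw [ha2, hb2] at h0
          exact mul_left_cancel₀ (by positivity : 4 * a ≠ 0) (by linarith)
        · exact (mixed s r hs hr ha1 hb1 ha2 hb2 (by rw [← ha3, ← hb3, h1]) h0).elim
        · exact (mixed r s hr hs hb1 ha1 hb2 ha2 (by rw [← ha3, ← hb3, h1]) h0.symm).elim
        · rw [ha2, hb2] at h0
          exact mul_left_cancel₀ (by positivity : 4 * a ≠ 0) (by linarith)
      polygonal := by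
        obtain ⟨B, hB⟩ := hXp
        obtain ⟨C, hC⟩ := hYp
        obtain ⟨n, t, ht0, ht1, htm, ht⟩ := exists_partition_avoiding (B ∪ C)
        refine ⟨n, t, ht0, ht1, htm, fun i s hs => ?_⟩
        have hlt : t i.castSucc < t i.succ := htm i.castSucc_lt_succ
        obtain ⟨m, k, hmk⟩ := hB _ _ hlt fun z hz => ht i z (Finset.mem_union_left _ hz)
        obtain ⟨m', k', hmk'⟩ := hC _ _ hlt fun z hz => ht i z (Finset.mem_union_right _ hz)
        have hl := left_mem_Icc.2 hlt.le
        have hr := right_mem_Icc.2 hlt.le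
        have hne : t i.succ - t i.castSucc ≠ 0 := by linarith
        ext j
        fin_cases j
        · simp [hmk s hs, hmk _ hl, hmk _ hr]
          field_simp
          ring
        · simp [hmk' s hs, hmk' _ hl, hmk' _ hr]
          field_simp
          ring }
  refine ⟨P, ?_⟩
  have hcurve : P.bdryCurve = {p | |p 0| ≤ a ∧ (p 1 = f (p 0) ∨ p 1 = g (p 0))} := by
    ext p
    constructor
    · rintro ⟨s, hs, rfl⟩
      change |X s| ≤ a ∧ (Y s = f (X s) ∨ Y s = g (X s))
      rcases hXY s hs with ⟨h1, h2, h3⟩ | ⟨h1, h2, h3⟩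
      · refine ⟨?_, Or.inl h3⟩
        rw [h2, abs_le]
        constructor <;> nlinarith [hs.1]
      · refine ⟨?_, Or.inr h3⟩
        rw [h2, abs_le]
        constructor <;> nlinarith [hs.2]
    · rintro ⟨hx, hy⟩
      obtain ⟨hx1, hx2⟩ := abs_le.1 hx
      have hext : ∀ s, X s = p 0 → Y s = p 1 → P.toFun s = p := fun s h0 h1 => by
        ext j
        fin_cases j
        · exact h0
        · exact h1
      rcases hy with hy | hy
      · have hs0 : 0 ≤ (p 0 + a) / (4 * a) := div_nonneg (by linarith) (by linarith)
        have hs1 : (p 0 + a) / (4 * a) ≤ 1 / 2 := by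
          rw [div_le_iff₀ (by positivity)]; linarith
        have hx0 : 4 * a * ((p 0 + a) / (4 * a)) + -a = p 0 := by field_simp; ring
        refine ⟨(p 0 + a) / (4 * a), ⟨hs0, by linarith⟩, hext _ ?_ ?_⟩
        · simp only [hX, if_pos hs1, hx0]
        · simp only [hY, if_pos hs1, hx0, hy]
      · have hs0 : 1 / 2 ≤ (3 * a - p 0) / (4 * a) := by
          rw [le_div_iff₀ (by positivity)]; linarith
        have hs1 : (3 * a - p 0) / (4 * a) ≤ 1 := by
          rw [div_le_iff₀ (by positivity)]; linarith
        have hx0 : -4 * a * ((3 * a - p 0) / (4 * a)) + 3 * a = p 0 := by field_simp; ring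
        refine ⟨(3 * a - p 0) / (4 * a), ⟨by linarith, hs1⟩, ?_⟩
        rcases hs0.lt_or_eq with hs | hs
        · refine hext _ ?_ ?_
          · simp only [hX, if_neg (not_le.2 hs), hx0]
          · simp only [hY, if_neg (not_le.2 hs), hx0, hy]
        · have hpa : p 0 = a := by
            rw [eq_div_iff (by positivity)] at hs; linarith
          rw [← hs]
          have ha2 : 4 * a * (1 / 2) + -a = a := by ring
          refine hext _ ?_ ?_
          · simp only [hX, le_refl, if_true, ha2, hpa]
          · simp only [hY, le_refl, if_true, ha2, hy, hpa, hend a habs]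
  have hle : ∀ x, f x ≤ g x → |x| ≤ a := fun x hx => by
    by_contra! h
    linarith [hout x h]
  have h0c : Continuous fun p : Plane => p 0 := by fun_prop
  have h1c : Continuous fun p : Plane => p 1 := by fun_prop
  set U : Set Plane := {p | f (p 0) < p 1} ∩ {p | p 1 < g (p 0)} with hU
  set V : Set Plane := {p | p 1 < f (p 0)} ∪ {p | g (p 0) < p 1} with hV
  have hUo : IsOpen U := (isOpen_lt (hfc.comp h0c) h1c).inter (isOpen_lt h1c (hgc.comp h0c))
  have hVo : IsOpen V := (isOpen_lt h1c (hfc.comp h0c)).union (isOpen_lt (hgc.comp h0c) h1c)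
  have hUV : Disjoint U V := by
    rw [Set.disjoint_left]
    rintro p ⟨h1, h2⟩ (h3 | h3)
    · exact lt_asymm (show f (p 0) < p 1 from h1) h3
    · exact lt_asymm (show p 1 < g (p 0) from h2) h3
  have hcover : P.bdryCurveᶜ ⊆ U ∪ V := by
    intro p hp
    by_contra hcon
    simp only [hU, hV, mem_union, mem_inter_iff, mem_ofPred_eq, not_or, not_and, not_lt] at hcon
    obtain ⟨h1, h2, h3⟩ := hcon
    apply hp
    rw [hcurve]
    refine ⟨hle _ (h2.trans h3), ?_⟩
    rcases h2.lt_or_eq with h | h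
    · exact Or.inr (le_antisymm h3 (h1 h))
    · exact Or.inl h.symm
  have hUbdd : Bornology.IsBounded U := by
    obtain ⟨l, hl⟩ := (isCompact_Icc (a := -a) (b := a)).bddBelow_image hfc.continuousOn
    obtain ⟨r, hr⟩ := (isCompact_Icc (a := -a) (b := a)).bddAbove_image hgc.continuousOn
    refine (Metric.isBounded_iff_subset_closedBall 0).2 ⟨a + (|l| + |r|), fun p hp => ?_⟩
    have hx := hle _ (hp.1.trans hp.2).le
    have h1 : l ≤ f (p 0) := hl (mem_image_of_mem _ (abs_le.1 hx))
    have h2 : g (p 0) ≤ r := hr (mem_image_of_mem _ (abs_le.1 hx))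
    have hy : |p 1| ≤ |l| + |r| := by
      rw [abs_le]
      have h3 : f (p 0) < p 1 := hp.1
      have h4 : p 1 < g (p 0) := hp.2
      constructor <;> linarith [neg_abs_le l, le_abs_self r, abs_nonneg l, abs_nonneg r]
    rw [mem_closedBall_zero_iff, EuclideanSpace.norm_eq, Fin.sum_univ_two]
    apply Real.sqrt_le_iff.2
    simp only [Real.norm_eq_abs]
    constructor
    · positivity
    · nlinarith [abs_nonneg (p 0), abs_nonneg (p 1)]
  have hVcurve : ∀ p ∈ V, p ∉ P.bdryCurve := by
    rintro p hp hc
    rw [hcurve] at hc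
    obtain ⟨h1, h2⟩ := hc
    have h3 : f (p 0) ≤ g (p 0) := by
      rcases h1.lt_or_eq with h | h
      · exact (hin _ h).le
      · exact (hend _ h).le
    rcases hp with hp | hp <;> simp only [mem_ofPred_eq] at hp <;> rcases h2 with h2 | h2 <;> linarith
  have hVunb : ∀ p ∈ V, ¬ Bornology.IsBounded (connectedComponentIn P.bdryCurveᶜ p) := by
    intro p hp hbdd
    obtain ⟨σ, hσ⟩ : ∃ σ : ℝ, (σ = 1 ∨ σ = -1) ∧
        ∀ r : ℝ, 0 ≤ r → (!₂[p 0, p 1 + σ * r] : Plane) ∈ V := by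
      rcases hp with hp | hp
      · refine ⟨-1, Or.inr rfl, fun r hr => Or.inl ?_⟩
        simp only [mem_ofPred_eq] at hp ⊢
        simp
        linarith
      · refine ⟨1, Or.inl rfl, fun r hr => Or.inr ?_⟩
        simp only [mem_ofPred_eq] at hp ⊢
        simp
        linarith
    have hray : (fun r : ℝ => (!₂[p 0, p 1 + σ * r] : Plane)) '' Ici 0 ⊆
        connectedComponentIn P.bdryCurveᶜ p := by
      refine IsPreconnected.subset_connectedComponentIn ?_ ?_ ?_
      · exact isPreconnected_Ici.image _
          (Plane.continuous_mk continuous_const (by fun_prop)).continuousOn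
      · refine ⟨0, self_mem_Ici, ?_⟩
        ext j
        fin_cases j <;> simp
      · rintro _ ⟨r, hr, rfl⟩
        exact hVcurve _ (hσ.2 r hr)
    obtain ⟨C, hC⟩ := (Metric.isBounded_iff_subset_closedBall 0).1 (hbdd.subset hray)
    have hfar := hC (mem_image_of_mem _ (show |C| + |p 1| + 1 ∈ Ici (0 : ℝ) from by
      simp only [mem_Ici]; positivity))
    rw [mem_closedBall_zero_iff] at hfar
    have hcoord := (PiLp.norm_apply_le (!₂[p 0, p 1 + σ * (|C| + |p 1| + 1)] : Plane) 1).trans hfar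
    simp only [Real.norm_eq_abs] at hcoord
    have hcoord' : |p 1 + σ * (|C| + |p 1| + 1)| ≤ C := by simpa using hcoord
    obtain ⟨h1, h2⟩ := abs_le.1 hcoord'
    rcases hσ.1 with rfl | rfl <;>
      linarith [neg_abs_le (p 1), le_abs_self (p 1), le_abs_self C]
  ext p
  simp only [SimplePolygon.region, mem_union, mem_ofPred_eq]
  constructor
  · rintro (hp | ⟨hp, hb⟩)
    · by_contra hcon
      refine hVcurve p ?_ hp
      rw [not_and_or, not_le, not_le] at hcon
      exact hcon
    · rcases hcover hp with h | h
      · exact ⟨h.1.le, h.2.le⟩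
      · exact (hVunb p h hb).elim
  · rintro ⟨h1, h2⟩
    by_cases hp : p ∈ P.bdryCurve
    · exact Or.inl hp
    · refine Or.inr ⟨hp, ?_⟩
      have hpU : p ∈ U := by
        rcases hcover hp with h | h | h
        · exact h
        · exact absurd h1 (not_le.2 h)
        · exact absurd h2 (not_le.2 h)
      refine hUbdd.subset (IsPreconnected.subset_left_of_subset_union hUo hVo hUV
        ((connectedComponentIn_subset _ _).trans hcover) ?_ isPreconnected_connectedComponentIn)
      exact ⟨p, mem_connectedComponentIn hp, hpU⟩

/-! ### A polygonal floor close to a circular arc -/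

/-- Finitely many tangent lines of the circle of radius `R` cut off every point of the lower half
plane at distance at least `ρ > R` from the origin. -/
lemma exists_tangent_slopes {R ρ : ℝ} (hR : 0 < R) (hρ : R < ρ) :
    ∃ N : Finset ℝ, (∀ m ∈ N, 0 ≤ m) ∧ ∀ x y : ℝ, 0 ≤ x → y ≤ 0 → ρ ^ 2 ≤ x ^ 2 + y ^ 2 →
      ∃ m ∈ N, y < m * x - R * √(1 + m ^ 2) := by
  have hρ0 : 0 < ρ := hR.trans hρ
  have hopen : ∀ m : Ici (0 : ℝ),
      IsOpen {y : ℝ | y < m * √(ρ ^ 2 - y ^ 2) - R * √(1 + (m : ℝ) ^ 2)} := fun m =>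
    isOpen_lt continuous_id (by fun_prop)
  have hcov : Icc (-ρ) 0 ⊆
      ⋃ m : Ici (0 : ℝ), {y : ℝ | y < m * √(ρ ^ 2 - y ^ 2) - R * √(1 + (m : ℝ) ^ 2)} := by
    intro y hy
    simp only [mem_iUnion, mem_ofPred_eq]
    rcases hy.2.lt_or_eq with hneg | rfl
    · have hsq : 0 ≤ ρ ^ 2 - y ^ 2 := by nlinarith [hy.1]
      have hy0 : y ≠ 0 := hneg.ne
      refine ⟨⟨√(ρ ^ 2 - y ^ 2) / (-y), div_nonneg (Real.sqrt_nonneg _) (by linarith)⟩, ?_⟩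
      have h1 : √(1 + (√(ρ ^ 2 - y ^ 2) / (-y)) ^ 2) = ρ / (-y) := by
        rw [div_pow, Real.sq_sqrt hsq,
          show 1 + (ρ ^ 2 - y ^ 2) / (-y) ^ 2 = (ρ / (-y)) ^ 2 by field_simp; ring]
        exact Real.sqrt_sq (div_nonneg hρ0.le (by linarith))
      have h2 : √(ρ ^ 2 - y ^ 2) / (-y) * √(ρ ^ 2 - y ^ 2) = (ρ ^ 2 - y ^ 2) / (-y) := by
        rw [div_mul_eq_mul_div, Real.mul_self_sqrt hsq]
      simp only [h1, h2]
      rw [mul_div_assoc', ← sub_div, lt_div_iff₀ (by linarith)]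
      nlinarith
    · have hm : 0 ≤ R / (ρ - R) := div_nonneg hR.le (by linarith)
      refine ⟨⟨R / (ρ - R), hm⟩, ?_⟩
      have h1 : √(1 + (R / (ρ - R)) ^ 2) < R / (ρ - R) * ρ / R := by
        have hd : 0 < ρ - R := by linarith
        rw [Real.sqrt_lt' (by positivity), show R / (ρ - R) * ρ / R = ρ / (ρ - R) by field_simp,
          div_pow, div_pow, ← sub_pos,
          show ρ ^ 2 / (ρ - R) ^ 2 - (1 + R ^ 2 / (ρ - R) ^ 2) = 2 * R / (ρ - R) by
            field_simp; ring]
        positivity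
      rw [lt_div_iff₀ hR] at h1
      simp only [ne_eq, OfNat.ofNat_ne_zero, not_false_eq_true, zero_pow, sub_zero,
        Real.sqrt_sq hρ0.le]
      linarith
  obtain ⟨N, hN⟩ := isCompact_Icc.elim_finite_subcover _ hopen hcov
  refine ⟨N.map (Function.Embedding.subtype _), ?_, fun x y hx hy hxy => ?_⟩
  · intro m hm
    obtain ⟨m', -, rfl⟩ := Finset.mem_map.1 hm
    exact m'.2
  · set r := √(x ^ 2 + y ^ 2) with hr
    have hr2 : r ^ 2 = x ^ 2 + y ^ 2 := Real.sq_sqrt (by positivity)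
    have hρr : ρ ≤ r := Real.le_sqrt_of_sq_le hxy
    have hr0 : 0 < r := hρ0.trans_le hρr
    have hyr : -r ≤ y := by nlinarith
    have hmem : ρ / r * y ∈ Icc (-ρ) 0 := by
      constructor
      · rw [div_mul_eq_mul_div, le_div_iff₀ hr0]; nlinarith
      · exact mul_nonpos_of_nonneg_of_nonpos (by positivity) hy
    obtain ⟨m, hm⟩ := mem_iUnion.1 (hN hmem)
    obtain ⟨hmN, hlt⟩ := mem_iUnion.1 hm
    refine ⟨m, Finset.mem_map.2 ⟨m, hmN, rfl⟩, ?_⟩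
    have hroot : √(ρ ^ 2 - (ρ / r * y) ^ 2) = ρ / r * x := by
      rw [show ρ ^ 2 - (ρ / r * y) ^ 2 = (ρ / r * x) ^ 2 by
        field_simp; rw [hr2]; ring]
      exact Real.sqrt_sq (by positivity)
    rw [mem_ofPred_eq, hroot] at hlt
    have hk : 0 < R * √(1 + (m : ℝ) ^ 2) := by positivity
    have hq : ρ / r ≤ 1 := (div_le_one hr0).2 hρr
    have hq0 : 0 < ρ / r := by positivity
    have : R * √(1 + (m : ℝ) ^ 2) < ρ / r * (m * x - y) := by linarith
    have hpos : 0 < m * x - y := by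
      by_contra! h
      nlinarith
    nlinarith

/-- A convex piecewise affine function whose graph runs between two concentric lower half circles,
and which eventually grows faster than a given slope `K`. -/
lemma exists_circular_floor {R ρ : ℝ} (hR : 0 < R) (hρ : R < ρ) (K : ℝ) :
    ∃ φ : ℝ → ℝ, Continuous φ ∧ IsPiecewiseAffine φ ∧ ConvexOn ℝ univ φ ∧ Monotone φ ∧
      (∀ t, 0 ≤ t → t < R → φ t < 0) ∧
      (∀ x y, 0 ≤ x → x ^ 2 + y ^ 2 < R ^ 2 → φ x ≤ y) ∧
      (∀ x y, 0 ≤ x → φ x ≤ y → y ≤ 0 → x ^ 2 + y ^ 2 < ρ ^ 2) ∧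
      ∃ C, ∀ t, 0 ≤ t → K * t - C ≤ φ t := by
  obtain ⟨N, hN0, hN⟩ := exists_tangent_slopes hR hρ
  set I : Finset ℝ := insert |K| N with hI
  have hIne : I.Nonempty := Finset.insert_nonempty _ _
  have hI0 : ∀ m ∈ I, 0 ≤ m := by
    intro m hm
    rcases Finset.mem_insert.1 hm with rfl | hm
    · exact abs_nonneg K
    · exact hN0 m hm
  set φ : ℝ → ℝ := fun x => I.sup' hIne fun m => m * x + -(R * √(1 + m ^ 2)) with hφ
  have hle : ∀ x, ∀ m ∈ I, m * x + -(R * √(1 + m ^ 2)) ≤ φ x := fun x m hm =>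
    Finset.le_sup' (fun m => m * x + -(R * √(1 + m ^ 2))) hm
  have hsq : ∀ m : ℝ, √(1 + m ^ 2) ^ 2 = 1 + m ^ 2 := fun m => Real.sq_sqrt (by positivity)
  have hmlt : ∀ m : ℝ, m < √(1 + m ^ 2) := fun m => Real.lt_sqrt_of_sq_lt (by linarith)
  refine ⟨φ, ?_, IsPiecewiseAffine.sup' I hIne _ _, ⟨convex_univ, ?_⟩, ?_, ?_, ?_, ?_, ?_⟩
  · exact Continuous.finset_sup'_apply hIne fun m _ => by fun_prop
  · intro x _ y _ α β hα hβ hαβ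
    refine Finset.sup'_le hIne _ fun m hm => ?_
    simp only [smul_eq_mul]
    have h1 := mul_le_mul_of_nonneg_left (hle x m hm) hα
    have h2 := mul_le_mul_of_nonneg_left (hle y m hm) hβ
    have h3 : R * √(1 + m ^ 2) = α * (R * √(1 + m ^ 2)) + β * (R * √(1 + m ^ 2)) := by
      rw [← add_mul, hαβ, one_mul]
    linarith
  · intro x y hxy
    refine Finset.sup'_le hIne _ fun m hm => le_trans ?_ (hle y m hm)
    linarith [mul_le_mul_of_nonneg_left hxy (hI0 m hm)]
  · intro t ht htR
    refine (Finset.sup'_lt_iff hIne).2 fun m hm => ?_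
    nlinarith [hmlt m, hI0 m hm]
  · intro x y hx hxy
    refine Finset.sup'_le hIne _ fun m hm => ?_
    have hcs : (m * x - y) ^ 2 ≤ (R * √(1 + m ^ 2)) ^ 2 := by
      rw [mul_pow, hsq]
      nlinarith [sq_nonneg (x + m * y), sq_nonneg m]
    linarith [abs_le_of_sq_le_sq' hcs (by positivity)]
  · intro x y hx hxy hy
    by_contra! hcon
    obtain ⟨m, hm, hlt⟩ := hN x y hx hy hcon
    linarith [hle x m (Finset.mem_insert_of_mem hm)]
  · refine ⟨R * √(1 + |K| ^ 2), fun t ht => ?_⟩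
    have h1 := hle t |K| (Finset.mem_insert_self _ _)
    nlinarith [le_abs_self K]

/-- A convex function that is negative at `b` and grows faster than the line of slope `K` through
`(b, 0)` crosses this line exactly once to the right of `b`. -/
lemma exists_unique_crossing {φ : ℝ → ℝ} (hc : Continuous φ) (hconv : ConvexOn ℝ univ φ) {b K C : ℝ}
    (hb : 0 ≤ b) (hφb : φ b < 0) (hgrow : ∀ t, 0 ≤ t → (K + 1) * t - C ≤ φ t) :
    ∃ a, b < a ∧ φ a = K * (a - b) ∧ (∀ t, b ≤ t → t < a → φ t < K * (t - b)) ∧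
      ∀ t, a < t → K * (t - b) < φ t := by
  have hfar : K * (max b (C - K * b) - b) ≤ φ (max b (C - K * b)) := by
    have h1 := hgrow _ (hb.trans (le_max_left b (C - K * b)))
    linarith [le_max_right b (C - K * b)]
  obtain ⟨a, ha, ha0⟩ := intermediate_value_Icc (le_max_left b (C - K * b))
    (f := fun t => φ t - K * (t - b)) (by fun_prop)
    (show (0 : ℝ) ∈ _ from ⟨by simpa using hφb.le, by linarith⟩)
  simp only at ha0
  have hba : b < a := by
    refine lt_of_le_of_ne ha.1 ?_
    rintro rfl
    simp at ha0
    linarith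
  have hbelow : ∀ t r, b ≤ t → t < r → φ r ≤ K * (r - b) → φ t < K * (t - b) := by
    intro t r hbt htr hr
    have hd : 0 < r - b := by linarith
    have h := hconv.2 (mem_univ b) (mem_univ r)
      (show 0 ≤ (r - t) / (r - b) from div_nonneg (by linarith) hd.le)
      (show 0 ≤ (t - b) / (r - b) from div_nonneg (by linarith) hd.le) (by field_simp; ring)
    simp only [smul_eq_mul] at h
    rw [show (r - t) / (r - b) * b + (t - b) / (r - b) * r = t by field_simp; ring] at h
    have h1 : (r - t) / (r - b) * φ b < 0 :=
      mul_neg_of_pos_of_neg (div_pos (by linarith) hd) hφb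
    have h2 : (t - b) / (r - b) * φ r ≤ (t - b) / (r - b) * (K * (r - b)) :=
      mul_le_mul_of_nonneg_left hr (div_nonneg (by linarith) hd.le)
    have h3 : (t - b) / (r - b) * (K * (r - b)) = K * (t - b) := by field_simp
    linarith
  refine ⟨a, hba, by linarith, fun t hbt hta => hbelow t a hbt hta (by linarith), fun t hat => ?_⟩
  by_contra! hcon
  linarith [hbelow a t hba.le hat hcon]

/-! ### The notched chamber -/

/-- The open unit disc around `(x, y)` lies between the graphs of `f` and `g`. -/
def DiscFits (f g : ℝ → ℝ) (x y : ℝ) : Prop :=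
  ∀ u v, u ^ 2 + v ^ 2 < 1 → f (x + u) ≤ y + v ∧ y + v ≤ g (x + u)

lemma SimplePolygon.mem_freeSpace_iff_s2 {P : SimplePolygon} {f g : ℝ → ℝ}
    (hP : P.region = {p | f (p 0) ≤ p 1 ∧ p 1 ≤ g (p 0)}) (p : Plane) :
    p ∈ P.freeSpace ↔ DiscFits f g (p 0) (p 1) := by
  change ball p 1 ⊆ P.region ↔ _
  rw [hP]
  constructor
  · intro h u v huv
    have := h ((Plane.mem_ball_iff p !₂[p 0 + u, p 1 + v] 1 one_pos).2 (by simpa using huv))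
    simpa using this
  · intro h q hq
    have := h (q 0 - p 0) (q 1 - p 1) (by simpa using (Plane.mem_ball_iff p q 1 one_pos).1 hq)
    simpa using this

/-- Data for a chamber with a nearly circular floor around the origin, two side pockets, and an
upward exit between two tips at `(±(1 + η), 0)`. The angle with cosine `c` and sine `s` is the slope
of the outer sides of the tips against the vertical. -/
structure NotchedChamber where
  (c s η R ρ : ℝ)
  c_pos : 0 < c
  s_pos : 0 < s
  sq_add_sq : c ^ 2 + s ^ 2 = 1
  η_pos : 0 < η
  η_lt : η < 1
  one_le_R : 1 ≤ R
  radius_le : (1 + η) ^ 2 + 1 + 2 * (1 + η) * c ≤ (R - 1) ^ 2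
  ρ_ge : 2 - η ≤ ρ
  ρ_lt : ρ < 3 - η
  /-- the floor of the chamber -/
  floor : ℝ → ℝ
  convexOn_floor : ConvexOn ℝ univ floor
  floor_le : ∀ x y, x ^ 2 + y ^ 2 < R ^ 2 → floor x ≤ y
  lt_of_floor_le : ∀ x y, floor x ≤ y → y ≤ 0 → x ^ 2 + y ^ 2 < ρ ^ 2

namespace NotchedChamber

variable (N : NotchedChamber)

/-- The ceiling of the chamber, as a function of the distance from the axis. -/
def ceilingProfile (c s η t : ℝ) : ℝ :=
  if t ≤ 1 + η then 4 / η * (1 + η - t) else c / s * (t - (1 + η))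

/-- The ceiling of the chamber. -/
def ceiling (x : ℝ) : ℝ := ceilingProfile N.c N.s N.η |x|

/-- A unit disc centered at `(x, y)` fits into the chamber. -/
def Fits (x y : ℝ) : Prop := DiscFits N.floor N.ceiling x y

lemma ceiling_nonneg (x : ℝ) : 0 ≤ N.ceiling x := by
  have := N.η_pos
  have := N.s_pos
  have := N.c_pos
  unfold ceiling ceilingProfile
  split_ifs with h
  · exact mul_nonneg (by positivity) (by linarith)
  · exact mul_nonneg (by positivity) (by linarith)

lemma floor_le_of_disc {x y u v : ℝ} (hxy : x ^ 2 + y ^ 2 ≤ (N.R - 1) ^ 2)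
    (huv : u ^ 2 + v ^ 2 < 1) : N.floor (x + u) ≤ y + v := by
  apply N.floor_le
  have hR := N.one_le_R
  have hcs : (x * u + y * v) ^ 2 ≤ (N.R - 1) ^ 2 := by
    nlinarith [sq_nonneg (x * v - y * u), sq_nonneg x, sq_nonneg y]
  have := abs_le_of_sq_le_sq' hcs (by linarith)
  nlinarith

/-- A disc below a line through a tip that is at least as flat as the outer side of the tip lies
below the ceiling. -/
lemma le_ceiling_of_halfPlane {σ k w x y u v : ℝ} (hσ : σ = 1 ∨ σ = -1) (hk : 0 ≤ k) (hkc : k ≤ N.c)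
    (hw : N.s ≤ w) (hkw : k ^ 2 + w ^ 2 = 1) (h : 1 ≤ k * (σ * x - (1 + N.η)) - w * y)
    (huv : u ^ 2 + v ^ 2 < 1) : y + v ≤ N.ceiling (x + u) := by
  have hs := N.s_pos
  have hσx : σ * (x + u) ≤ |x + u| := by
    rcases hσ with rfl | rfl
    · rw [one_mul]; exact le_abs_self _
    · rw [neg_one_mul]; exact neg_le_abs _
  have hσ2 : σ ^ 2 = 1 := by rcases hσ with rfl | rfl <;> norm_num
  have hcs : (k * (σ * u) - w * v) ^ 2 < 1 ^ 2 := by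
    have : (k * (σ * u) - w * v) ^ 2 + (k * v + w * (σ * u)) ^ 2 =
        (k ^ 2 + w ^ 2) * (σ ^ 2 * u ^ 2 + v ^ 2) := by ring
    rw [hkw, hσ2] at this
    nlinarith [sq_nonneg (k * v + w * (σ * u))]
  have hlt := (abs_lt_of_sq_lt_sq' hcs zero_le_one).1
  have hpos : w * (y + v) < k * (|x + u| - (1 + N.η)) := by nlinarith
  rcases le_or_gt (y + v) 0 with hneg | hypos
  · exact hneg.trans (N.ceiling_nonneg _)
  · have habs : 0 < |x + u| - (1 + N.η) := by
      by_contra! hcon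
      nlinarith
    unfold ceiling ceilingProfile
    rw [if_neg (by linarith), div_mul_eq_mul_div, le_div_iff₀ hs]
    nlinarith

/-- A fitting disc in the outer part of a pocket lies below the outer side of the tip. -/
lemma Fits.halfPlane {N : NotchedChamber} {σ x y : ℝ} (hσ : σ = 1 ∨ σ = -1) (h : N.Fits x y)
    (hx : 1 + N.η + N.c ≤ σ * x) : 1 ≤ N.c * (σ * x - (1 + N.η)) - N.s * y := by
  have hs := N.s_pos
  have hc := N.c_pos
  have hη := N.η_pos
  have hcs := N.sq_add_sq
  have hσ2 : σ ^ 2 = 1 := by rcases hσ with rfl | rfl <;> norm_num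
  by_contra! hlt
  obtain ⟨d, hd, hd1⟩ := exists_between (max_lt hlt zero_lt_one)
  obtain ⟨hd, hd0⟩ := max_lt_iff.1 hd
  have hfit := (h (-(d * N.c) * σ) (d * N.s) (by
    rw [show (-(d * N.c) * σ) ^ 2 + (d * N.s) ^ 2 = d ^ 2 * (N.c ^ 2 * σ ^ 2 + N.s ^ 2) by ring,
      hσ2, mul_one, hcs]
    nlinarith)).2
  have hσx : σ * (x + -(d * N.c) * σ) = σ * x - d * N.c := by
    linear_combination -(d * N.c) * hσ2
  have hgt : 1 + N.η < σ * x - d * N.c := by nlinarith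
  have habs : |x + -(d * N.c) * σ| = σ * x - d * N.c := by
    rw [← hσx, ← abs_of_pos (show 0 < σ * (x + -(d * N.c) * σ) by rw [hσx]; linarith), abs_mul]
    rcases hσ with rfl | rfl <;> simp
  unfold ceiling ceilingProfile at hfit
  rw [habs, if_neg (by linarith), div_mul_eq_mul_div, le_div_iff₀ hs] at hfit
  nlinarith

/-- The height of a curve that joins the two pockets below the tips. -/
def core (x : ℝ) : ℝ := -√(1 - max (|x| - (1 + N.η)) 0 ^ 2)

lemma continuous_core : Continuous N.core := by
  unfold core
  fun_prop

lemma fits_core {x : ℝ} (hx : |x| ≤ 1 + N.η + N.c) : N.Fits x (N.core x) := by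
  have hs := N.s_pos
  have hc := N.c_pos
  have hη := N.η_pos
  have hcs := N.sq_add_sq
  set k := max (|x| - (1 + N.η)) 0 with hk
  have hk0 : 0 ≤ k := le_max_right _ _
  have hkc : k ≤ N.c := max_le (by linarith) hc.le
  have hkx : |x| ≤ 1 + N.η + k := by linarith [le_max_left (|x| - (1 + N.η)) 0]
  have hsq : N.s ^ 2 ≤ 1 - k ^ 2 := by nlinarith
  set w := √(1 - k ^ 2) with hw
  have hw2 : w ^ 2 = 1 - k ^ 2 := Real.sq_sqrt (by nlinarith)
  have hws : N.s ≤ w := Real.le_sqrt_of_sq_le hsq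
  have hcore : N.core x = -w := rfl
  rw [hcore]
  intro u v huv
  constructor
  · refine N.floor_le_of_disc ?_ huv
    refine le_trans ?_ N.radius_le
    have : x ^ 2 ≤ (1 + N.η + k) ^ 2 := by
      rw [← sq_abs]; exact pow_le_pow_left₀ (abs_nonneg x) hkx 2
    nlinarith
  · obtain ⟨σ, hσ, hσx⟩ : ∃ σ : ℝ, (σ = 1 ∨ σ = -1) ∧ σ * x = |x| := by
      rcases abs_cases x with h | h
      · exact ⟨1, Or.inl rfl, by rw [h.1, one_mul]⟩
      · exact ⟨-1, Or.inr rfl, by rw [h.1, neg_one_mul]⟩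
    refine N.le_ceiling_of_halfPlane hσ hk0 hkc hws (by linarith) ?_ huv
    rw [hσx]
    have : k ^ 2 ≤ k * (|x| - (1 + N.η)) := by
      rcases le_total (|x| - (1 + N.η)) 0 with h | h
      · rw [hk, max_eq_right h]; simp
      · rw [hk, max_eq_left h]; exact (sq _).le
    nlinarith

lemma floor_le_combination {x₁ y₁ x₂ y₂ α β u v : ℝ} (h₁ : N.Fits x₁ y₁) (h₂ : N.Fits x₂ y₂)
    (hα : 0 ≤ α) (hβ : 0 ≤ β) (hαβ : α + β = 1) (huv : u ^ 2 + v ^ 2 < 1) :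
    N.floor (α * x₁ + β * x₂ + u) ≤ α * y₁ + β * y₂ + v := by
  have h := N.convexOn_floor.2 (mem_univ (x₁ + u)) (mem_univ (x₂ + u)) hα hβ hαβ
  simp only [smul_eq_mul] at h
  have hu : α * (x₁ + u) + β * (x₂ + u) = α * x₁ + β * x₂ + u := by linear_combination u * hαβ
  have hv : α * (y₁ + v) + β * (y₂ + v) = α * y₁ + β * y₂ + v := by linear_combination v * hαβ
  rw [hu] at h
  rw [← hv]
  exact h.trans (add_le_add (mul_le_mul_of_nonneg_left (h₁ u v huv).1 hα)
    (mul_le_mul_of_nonneg_left (h₂ u v huv).1 hβ))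

lemma isConnected_fits : IsConnected {p : Plane | N.Fits (p 0) (p 1)} := by
  have hη := N.η_pos
  have hc := N.c_pos
  set r := 1 + N.η + N.c with hr
  set Γ : Set Plane := (fun x : ℝ => (!₂[x, N.core x] : Plane)) '' Icc (-r) r with hΓ
  have hΓF : Γ ⊆ {p : Plane | N.Fits (p 0) (p 1)} := by
    rintro _ ⟨x, hx, rfl⟩
    exact N.fits_core (abs_le.2 hx)
  have hΓc : IsPreconnected Γ := isPreconnected_Icc.image _
    (Plane.continuous_mk continuous_id N.continuous_core).continuousOn
  have h0 : (!₂[0, N.core 0] : Plane) ∈ Γ := ⟨0, ⟨by linarith, by linarith⟩, rfl⟩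
  refine ⟨⟨_, hΓF h0⟩, isPreconnected_of_forall (!₂[0, N.core 0] : Plane) fun p hp => ?_⟩
  have hp' : N.Fits (p 0) (p 1) := hp
  suffices ∃ q ∈ Γ, segment ℝ p q ⊆ {p : Plane | N.Fits (p 0) (p 1)} by
    obtain ⟨q, hq, hseg⟩ := this
    refine ⟨Γ ∪ segment ℝ p q, union_subset hΓF hseg, Or.inl h0, Or.inr (left_mem_segment ℝ p q), ?_⟩
    exact hΓc.union q hq (right_mem_segment ℝ p q) (convex_segment p q).isPreconnected
  rcases le_or_gt |p 0| r with hx | hx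
  · refine ⟨!₂[p 0, N.core (p 0)], ⟨p 0, abs_le.1 hx, rfl⟩, ?_⟩
    rintro _ ⟨α, β, hα, hβ, hαβ, rfl⟩ u v huv
    have hq := N.fits_core hx
    refine ⟨by simpa using N.floor_le_combination hp' hq hα hβ hαβ huv, ?_⟩
    have hu : α * p 0 + β * p 0 + u = p 0 + u := by linear_combination p 0 * hαβ
    have hv : α * p 1 + β * N.core (p 0) + v = α * (p 1 + v) + β * (N.core (p 0) + v) := by
      linear_combination -v * hαβ
    have h1 := mul_le_mul_of_nonneg_left (hp' u v huv).2 hα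
    have h2 := mul_le_mul_of_nonneg_left (hq u v huv).2 hβ
    have h3 : α * N.ceiling (p 0 + u) + β * N.ceiling (p 0 + u) = N.ceiling (p 0 + u) := by
      rw [← add_mul, hαβ, one_mul]
    simp only [PiLp.add_apply, PiLp.smul_apply, smul_eq_mul]
    simp
    rw [hu, hv]
    linarith
  · obtain ⟨σ, hσ, hσx⟩ : ∃ σ : ℝ, (σ = 1 ∨ σ = -1) ∧ σ * p 0 = |p 0| := by
      rcases abs_cases (p 0) with h | h
      · exact ⟨1, Or.inl rfl, by rw [h.1, one_mul]⟩
      · exact ⟨-1, Or.inr rfl, by rw [h.1, neg_one_mul]⟩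
    have hσr : |σ * r| = r := by
      rw [abs_mul, abs_of_pos (show 0 < r by linarith)]
      rcases hσ with rfl | rfl <;> simp
    have hσσ : σ * (σ * r) = r := by rcases hσ with rfl | rfl <;> ring
    refine ⟨!₂[σ * r, N.core (σ * r)], ⟨σ * r, abs_le.1 hσr.le, rfl⟩, ?_⟩
    rintro _ ⟨α, β, hα, hβ, hαβ, rfl⟩ u v huv
    have hq := N.fits_core hσr.le
    refine ⟨by simpa using N.floor_le_combination hp' hq hα hβ hαβ huv, ?_⟩
    have h1 := mul_le_mul_of_nonneg_left (hp'.halfPlane hσ (by rw [hσx]; exact hx.le)) hα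
    have h2 := mul_le_mul_of_nonneg_left (hq.halfPlane hσ (by rw [hσσ])) hβ
    simp only [PiLp.add_apply, PiLp.smul_apply, smul_eq_mul]
    simp
    refine N.le_ceiling_of_halfPlane hσ hc.le le_rfl le_rfl N.sq_add_sq ?_ huv
    have h3 : N.c * (σ * (α * p 0 + β * (σ * r)) - (1 + N.η)) - N.s * (α * p 1 + β * N.core (σ * r))
        = α * (N.c * (σ * p 0 - (1 + N.η)) - N.s * p 1) +
          β * (N.c * (σ * (σ * r) - (1 + N.η)) - N.s * N.core (σ * r)) := by
      linear_combination (N.c * (1 + N.η)) * hαβ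
    rw [h3]
    linarith

lemma fits_pocket {σ : ℝ} (hσ : σ = 1 ∨ σ = -1) : N.Fits (σ * (1 + N.η + N.c)) (-N.s) := by
  have hη := N.η_pos
  have hc := N.c_pos
  have hr : |σ * (1 + N.η + N.c)| = 1 + N.η + N.c := by
    rw [abs_mul, abs_of_pos (show 0 < 1 + N.η + N.c by linarith)]
    rcases hσ with rfl | rfl <;> simp
  have hcore : N.core (σ * (1 + N.η + N.c)) = -N.s := by
    unfold core
    rw [hr, add_sub_cancel_left, max_eq_left hc.le,
      show 1 - N.c ^ 2 = N.s ^ 2 by linarith [N.sq_add_sq], Real.sqrt_sq N.s_pos.le]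
  rw [← hcore]
  exact N.fits_core hr.le

lemma fits_bottom : N.Fits 0 (-1) := by
  have hη := N.η_pos
  have hc := N.c_pos
  have hcore : N.core 0 = -1 := by
    unfold core
    rw [abs_zero, max_eq_right (by linarith)]
    simp
  rw [← hcore]
  exact N.fits_core (by rw [abs_zero]; linarith)

lemma fits_exit : N.Fits 0 3 := by
  have hη := N.η_pos
  intro u v huv
  have hu : |u| < 1 := abs_lt_of_sq_lt_sq (by nlinarith [sq_nonneg v]) zero_le_one
  have hv := abs_lt.1 (abs_lt_of_sq_lt_sq (show v ^ 2 < 1 ^ 2 by nlinarith [sq_nonneg u]) zero_le_one)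
  rw [zero_add]
  constructor
  · have h := N.floor_le_of_disc (x := 0) (y := 0) (u := u) (v := 0)
      (by nlinarith [sq_nonneg (N.R - 1)]) (by nlinarith [sq_nonneg v])
    rw [zero_add, zero_add] at h
    linarith [hv.1]
  · unfold ceiling ceilingProfile
    rw [if_pos (by linarith), div_mul_eq_mul_div, le_div_iff₀ hη]
    nlinarith [hv.2]

/-- Fitting discs in the lower half plane are centered close to the origin. -/
lemma Fits.sq_add_sq_lt {N : NotchedChamber} {x y : ℝ} (h : N.Fits x y) (hy : y ≤ 0) :
    x ^ 2 + y ^ 2 < (2 - N.η) ^ 2 := by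
  by_contra! hcon
  have hρ := N.ρ_ge
  have hρ' := N.ρ_lt
  have hη := N.η_pos
  have hη' := N.η_lt
  set r := √(x ^ 2 + y ^ 2) with hr
  have hr2 : r ^ 2 = x ^ 2 + y ^ 2 := Real.sq_sqrt (by positivity)
  have hrge : 2 - N.η ≤ r := Real.le_sqrt_of_sq_le hcon
  have hr0 : 0 < r := by linarith
  set l := N.ρ - (2 - N.η) with hl
  have hfit := (h (l / r * x) (l / r * y) (by
    rw [mul_pow, mul_pow, ← mul_add, ← hr2, ← mul_pow, div_mul_cancel₀ _ hr0.ne']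
    nlinarith)).1
  have hl0 : 0 ≤ l / r := div_nonneg (by linarith) hr0.le
  have hlt := N.lt_of_floor_le _ _ hfit (by nlinarith)
  have : (x + l / r * x) ^ 2 + (y + l / r * y) ^ 2 = (r + l) ^ 2 := by
    rw [show (x + l / r * x) ^ 2 + (y + l / r * y) ^ 2 = (1 + l / r) ^ 2 * (x ^ 2 + y ^ 2) by ring,
      ← hr2, ← mul_pow]
    congr 1
    field_simp
  nlinarith

/-- Fitting discs centered on the horizontal axis are centered in the exit. -/
lemma Fits.abs_le {N : NotchedChamber} {x : ℝ} (h : N.Fits x 0) : |x| ≤ N.η := by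
  have hη := N.η_pos
  by_contra! hx
  have hx2 : |x| < 2 - N.η := by
    refine abs_lt_of_sq_lt_sq ?_ (by linarith [N.η_lt])
    linarith [h.sq_add_sq_lt le_rfl]
  obtain ⟨σ, hσ, hσx⟩ : ∃ σ : ℝ, |σ| = 1 ∧ x = σ * |x| := by
    rcases abs_cases x with hx' | hx'
    · exact ⟨1, by simp, by rw [hx'.1, one_mul]⟩
    · exact ⟨-1, by simp, by rw [hx'.1]; ring⟩
  have hσ2 : σ ^ 2 = 1 := by rw [← sq_abs, hσ, one_pow]
  have hw : (1 + N.η - |x|) ^ 2 < 1 := by nlinarith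
  have hv : 0 < √((1 - (1 + N.η - |x|) ^ 2) / 2) := Real.sqrt_pos.2 (by linarith)
  have hfit := (h (σ * (1 + N.η - |x|)) (√((1 - (1 + N.η - |x|) ^ 2) / 2)) (by
    rw [mul_pow, hσ2, Real.sq_sqrt (by linarith)]
    linarith)).2
  have htip : |x + σ * (1 + N.η - |x|)| = 1 + N.η := by
    rw [show x + σ * (1 + N.η - |x|) = σ * (1 + N.η) by linear_combination hσx, abs_mul, hσ,
      one_mul, abs_of_pos (by linarith)]
  unfold ceiling ceilingProfile at hfit
  rw [htip, if_pos le_rfl, sub_self, mul_zero] at hfit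
  linarith

end NotchedChamber

lemma ConvexOn.comp_abs {φ : ℝ → ℝ} (hφ : ConvexOn ℝ univ φ) (hmono : Monotone φ) :
    ConvexOn ℝ univ fun x => φ |x| := by
  refine ⟨convex_univ, fun x _ y _ α β hα hβ hαβ => ?_⟩
  refine (hmono ?_).trans (hφ.2 (mem_univ |x|) (mem_univ |y|) hα hβ hαβ)
  simp only [smul_eq_mul]
  refine (abs_add_le _ _).trans ?_
  rw [abs_mul, abs_mul, abs_of_nonneg hα, abs_of_nonneg hβ]

namespace NotchedChamber

lemma continuous_ceilingProfile (c s η : ℝ) : Continuous (ceilingProfile c s η) := by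
  refine Continuous.if_le (by fun_prop) (by fun_prop) continuous_id continuous_const ?_
  rintro t ht
  rw [show t = 1 + η from ht]
  simp

lemma isPiecewiseAffine_ceilingProfile (c s η : ℝ) : IsPiecewiseAffine (ceilingProfile c s η) := by
  have h := (IsPiecewiseAffine.affine (-(4 / η)) (4 / η * (1 + η))).ite
    (IsPiecewiseAffine.affine (c / s) (-(c / s * (1 + η)))) (c := 1 + η) (by ring)
  convert h using 2 with t
  unfold ceilingProfile
  congr 1 <;> ring

/-- There are chambers with prescribed angle that are realized by a simple polygon. -/
lemma exists_simplePolygon {c : ℝ} (hc : 0 < c) (hc1 : c < 1) :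
    ∃ (N : NotchedChamber) (P : SimplePolygon), N.c = c ∧
      P.region = {p | N.floor (p 0) ≤ p 1 ∧ p 1 ≤ N.ceiling (p 0)} := by
  set η := (1 - c) / 8 with hη
  set s := √(1 - c ^ 2) with hs
  set d := √((1 + η) ^ 2 + 1 + 2 * (1 + η) * c) with hd
  have hη0 : 0 < η := by linarith
  have hs0 : 0 < s := Real.sqrt_pos.2 (by nlinarith)
  have hs2 : s ^ 2 = 1 - c ^ 2 := Real.sq_sqrt (by nlinarith)
  have hd2 : d ^ 2 = (1 + η) ^ 2 + 1 + 2 * (1 + η) * c := Real.sq_sqrt (by positivity)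
  have hd0 : 0 ≤ d := Real.sqrt_nonneg _
  have hdlt : d < 2 - η := by
    refine lt_of_pow_lt_pow_left₀ 2 (by linarith) ?_
    rw [hd2, show c = 1 - 8 * η by linarith]
    nlinarith
  have hbd : 1 + η ≤ d := Real.le_sqrt_of_sq_le (by nlinarith)
  obtain ⟨φ, hφc, hφp, hφconv, hφmono, hφneg, hφle, hφlt, C, hφC⟩ :=
    exists_circular_floor (R := 1 + d) (ρ := (1 + d + (3 - η)) / 2) (by linarith) (by linarith)
      (c / s + 1)
  obtain ⟨a, hba, hφa, hbelow, habove⟩ := exists_unique_crossing hφc hφconv (b := 1 + η)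
    (by linarith) (hφneg _ (by linarith) (by linarith)) hφC
  let N : NotchedChamber :=
    { c := c, s := s, η := η, R := 1 + d, ρ := (1 + d + (3 - η)) / 2
      c_pos := hc
      s_pos := hs0
      sq_add_sq := by linarith
      η_pos := hη0
      η_lt := by linarith
      one_le_R := by linarith
      radius_le := by rw [add_sub_cancel_left, hd2]
      ρ_ge := by linarith
      ρ_lt := by linarith
      floor := fun x => φ |x|
      convexOn_floor := hφconv.comp_abs hφmono
      floor_le := fun x y h => hφle _ _ (abs_nonneg x) (by rwa [sq_abs])
      lt_of_floor_le := fun x y h hy => by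
        simpa only [sq_abs] using hφlt _ _ (abs_nonneg x) h hy }
  have hceil : ∀ x, 1 + η < |x| → N.ceiling x = c / s * (|x| - (1 + η)) := fun x hx =>
    if_neg (not_le.2 hx)
  obtain ⟨P, hP⟩ := exists_simplePolygon_region_eq (f := N.floor) (g := N.ceiling) (a := a)
    (by linarith) (hφc.comp continuous_abs)
    ((continuous_ceilingProfile c s η).comp continuous_abs)
    hφp.comp_abs (isPiecewiseAffine_ceilingProfile c s η).comp_abs
    (fun x hx => by
      rw [hceil x (hx ▸ hba), hx]
      exact hx ▸ hφa)
    (fun x hx => by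
      rcases le_or_gt |x| (1 + η) with h | h
      · exact (hφneg _ (abs_nonneg x) (by linarith)).trans_le (N.ceiling_nonneg x)
      · rw [hceil x h]
        exact hbelow _ h.le hx)
    (fun x hx => by
      rw [hceil x (hba.trans hx)]
      exact habove _ hx)
  exact ⟨N, P, rfl, hP⟩

/-- When the first of two discs in the chamber leaves the lower half plane, they collide. -/
lemma dist_lt_two {N : NotchedChamber} {p q : Plane} (hp : N.Fits (p 0) (p 1))
    (hq : N.Fits (q 0) (q 1)) (hp0 : p 1 = 0) (hq0 : q 1 ≤ 0) : dist p q < 2 := by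
  rw [hp0] at hp
  have hx := hp.abs_le
  have hq2 := hq.sq_add_sq_lt hq0
  have hη := N.η_lt
  have hp1 : ‖p‖ ≤ N.η := by
    rw [EuclideanSpace.norm_eq, Fin.sum_univ_two, hp0]
    simpa [Real.sqrt_sq_eq_abs] using hx
  have hq1 : ‖q‖ < 2 - N.η := by
    rw [EuclideanSpace.norm_eq, Fin.sum_univ_two, Real.sqrt_lt' (by linarith)]
    simpa only [Real.norm_eq_abs, sq_abs] using hq2
  linarith [dist_le_norm_add_norm p q]

end NotchedChamber

/-- Monochromatic separation strictly less than 4 does not always guarantee a solution,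
even when the free space is a single connected component containing two start and two
target positions. -/
theorem monochromatic_lower_bound :
    ∀ ε : ℝ, 0 < ε →
      ∃ (P : SimplePolygon) (s₁ s₂ t₁ t₂ : Plane),
        IsConnected P.freeSpace ∧
        s₁ ∈ P.freeSpace ∧ s₂ ∈ P.freeSpace ∧ t₁ ∈ P.freeSpace ∧ t₂ ∈ P.freeSpace ∧
        s₁ ≠ s₂ ∧ t₁ ≠ t₂ ∧
        4 - ε ≤ dist s₁ s₂ ∧ 4 - ε ≤ dist t₁ t₂ ∧
        ¬ ∃ π : Fin 2 → unitInterval → Plane,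
            IsValidMotionPlan P.freeSpace ({s₁, s₂} : Set Plane) ({t₁, t₂} : Set Plane) π := by
  intro ε hε
  have hmin : 0 < min ε (1 / 2) := lt_min hε (by norm_num)
  have hminε : min ε (1 / 2) ≤ ε := min_le_left _ _
  have hmin2 : min ε (1 / 2) ≤ 1 / 2 := min_le_right _ _
  obtain ⟨N, P, hNc, hP⟩ := NotchedChamber.exists_simplePolygon (c := 1 - min ε (1 / 2) / 2)
    (by linarith) (by linarith)
  have hη := N.η_pos
  have hs := N.s_pos
  have hF : P.freeSpace = {p | N.Fits (p 0) (p 1)} :=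
    Set.ext fun p => SimplePolygon.mem_freeSpace_iff_s2 hP p
  have hleft : N.Fits (-(1 + N.η + N.c)) (-N.s) := by simpa using N.fits_pocket (Or.inr rfl)
  have hright : N.Fits (1 + N.η + N.c) (-N.s) := by simpa using N.fits_pocket (Or.inl rfl)
  have hst : 4 - ε ≤ dist (!₂[-(1 + N.η + N.c), -N.s] : Plane) !₂[1 + N.η + N.c, -N.s] := by
    rw [EuclideanSpace.dist_eq, Fin.sum_univ_two]
    refine Real.le_sqrt_of_sq_le ?_ |>.trans' (show 4 - ε ≤ 2 * (1 + N.η + N.c) by linarith)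
    simp only [Real.dist_eq, sq_abs]
    simp
    nlinarith
  have htt : dist (!₂[0, 3] : Plane) !₂[0, -1] = 4 := by
    rw [EuclideanSpace.dist_eq, Fin.sum_univ_two]
    simp only [Real.dist_eq, sq_abs]
    simp
    norm_num
  refine ⟨P, !₂[-(1 + N.η + N.c), -N.s], !₂[1 + N.η + N.c, -N.s], !₂[0, 3], !₂[0, -1], ?_⟩
  rw [hF]
  refine ⟨N.isConnected_fits, hleft, hright, N.fits_exit, N.fits_bottom, ?_, ?_, hst, ?_, ?_⟩
  · intro h
    have := congrArg (fun p : Plane => p 0) h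
    simp at this
    linarith [N.c_pos]
  · rw [← dist_ne_zero, htt]
    norm_num
  · linarith
  · rintro ⟨π, hcont, hfree, hstart, hgoal, hsep⟩
    have hy : ∀ i, Continuous fun τ => π i τ 1 := fun i => by
      have := hcont i
      fun_prop
    have hy0 : ∀ i, π i 0 1 = -N.s := fun i => by
      rcases hstart.mapsTo (mem_univ i) with h | h <;> simp only at h <;> rw [h] <;> simp
    have hy1 : ∃ i, π i 1 1 = 3 := by
      obtain ⟨i, hi⟩ : (!₂[0, 3] : Plane) ∈ range fun i => π i 1 := by rw [hgoal]; simp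
      simp only at hi
      exact ⟨i, by rw [hi]; simp⟩
    have hend : 0 ≤ max (π 0 1 1) (π 1 1 1) := by
      obtain ⟨i, hi⟩ := hy1
      fin_cases i
      · exact le_max_of_le_left (hi ▸ by norm_num)
      · exact le_max_of_le_right (hi ▸ by norm_num)
    obtain ⟨τ, hτ⟩ := intermediate_value_univ 0 1 ((hy 0).max (hy 1))
      (show (0 : ℝ) ∈ Icc _ _ from ⟨by simp [hy0, hs.le], hend⟩)
    simp only at hτ
    rcases max_choice (π 0 τ 1) (π 1 τ 1) with h | h
    · exact (hsep τ 0 1 (by decide)).not_gt (NotchedChamber.dist_lt_two (hfree 0 τ) (hfree 1 τ)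
        (h.symm.trans hτ) (hτ ▸ le_max_right _ _))
    · exact (hsep τ 1 0 (by decide)).not_gt (NotchedChamber.dist_lt_two (hfree 1 τ) (hfree 0 τ)
        (h.symm.trans hτ) (hτ ▸ le_max_left _ _))
end
end
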